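/- arXiv:1210.2359 — 7 statements merged into one kernel-verified Lean document; each statement's English description precedes it below -/
import Mathlib

section
/- The function φ has the following mapping properties (boundary values f_±(x) := lim_{ε→0⁺} f(x ± iε)): (i) for x ∈ (−∞,0): Re φ_±(x) < Re φ_±(0) and Im φ_±(x) = ∓π; (ii) for x ∈ [0,a): Re φ_±(x) < 0 and Im φ_±(x) = ∓(1 − x/c)π; (iii) φ_±(a) = ∓(1 − a/c)πi and φ_±(b) = ∓(1−b)πi/c; (iv) for x ∈ (a,b): Re φ_±(x) = 0 and arg φ_±(x) = ∓π/2; (v) for x ∈ (b,1): Re φ_±(x) < 0 and Im φ_±(x) = ∓(1−x)π/c; (vi) for x ∈ (1,+∞): φ(x) is real and φ(x) < φ(1) < 0. -/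
/-!
The equilibrium density is a superposition of arcsine laws. For `t ∈ (0,1)` let `ω_t` be the arcsine
law of the interval `1/2 ± √(1-t²)/2`, with density `π⁻¹ (s - s² - t²/4)^(-1/2)`. Integrating this
density over `t ∈ (0,c)` gives an arcsine, and in fact
`c μ(s) = ∫₀ᶜ ω_t(s) dt` for every `s ∈ (0,1)`: on the saturated intervals `[0,a]`, `[b,1]` the
kernel vanishes from `t = 2√(s - s²) ≤ c` on, which is why the density is constant there. By Fubini
every integral against `μ` is an average of arcsine integrals (`integral_mul_eqDensity`).

* With test function `1`, the total mass is `1`.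
* With test function `log |x - s|`, one needs the logarithmic potential of an arcsine law of
  half-width `r`. The Joukowski map turns it into two circle averages `⨍ log ‖e^{iθ} - w‖`, which
  are known in closed form; the potential equals `log (r/2)` on the interval and is strictly larger
  off it. The intervals shrink as `t` grows, so `[a,b]` lies in all of those with `t < c`. Hence
  the potential of `μ` is constant on `[a,b]` and strictly larger outside (`logPotential_inside`,
  `logPotential_lt_of_outside`).

By dominated convergence the boundary values of `g` at `x` are `U(x) ± iπ M(x)`, where `U` is the
logarithmic potential and `M(x)` the mass to the right of `x` (`tendsto_complexPotential`; the lower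
value is the conjugate of the upper one). Since `l/2 = U(a)`, the boundary values of `φ` are
`U(a) - U(x) ∓ iπ M(x)`, and the claims follow from the comparison of potentials, from the explicit
value of `M` on the saturated intervals, and, for `x < 0` and `x > 1`, from monotonicity of `log`.
-/

open Complex Real Filter Topology Set MeasureTheory

/-! ### Superposition of arcsine laws -/

/-- `π` times the density at `s` of the arcsine law on `1/2 ± √(1-t²)/2`. As `√` vanishes on negative
reals and `0⁻¹ = 0`, the formula is automatically `0` off the interval. -/
noncomputable def arcsineKernel (t s : ℝ) : ℝ := (√(s - s ^ 2 - t ^ 2 / 4))⁻¹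

/-- The equilibrium density on `(0,1)`. As `Real.arcsin` takes the value `π/2` on `[1,∞)`, a single
formula also covers the saturated region, where the value is `1/c`. -/
noncomputable def eqDensity (c s : ℝ) : ℝ := 2 / (π * c) * Real.arcsin (c / (2 * √(s - s ^ 2)))

lemma arcsineKernel_nonneg (t s : ℝ) : 0 ≤ arcsineKernel t s := by
  unfold arcsineKernel; positivity

lemma measurable_arcsineKernel : Measurable (Function.uncurry arcsineKernel) := by
  unfold Function.uncurry arcsineKernel; fun_prop

lemma measurable_eqDensity (c : ℝ) : Measurable (eqDensity c) := by
  unfold eqDensity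
  exact (Real.measurable_arcsin.comp (by fun_prop)).const_mul _

lemma eqDensity_pos {c s : ℝ} (hc : 0 < c) (hs : s ∈ Ioo (0:ℝ) 1) : 0 < eqDensity c s := by
  have h : 0 < s - s ^ 2 := by nlinarith [hs.1, hs.2]
  unfold eqDensity
  have := Real.sqrt_pos.2 h
  have : 0 < Real.arcsin (c / (2 * √(s - s ^ 2))) := Real.arcsin_pos.2 (by positivity)
  positivity

lemma eqDensity_le {c : ℝ} (hc : 0 < c) (s : ℝ) : eqDensity c s ≤ 1 / c := by
  unfold eqDensity
  calc _ ≤ 2 / (π * c) * (π / 2) := by gcongr; exact Real.arcsin_le_pi_div_two _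
    _ = 1 / c := by field_simp

lemma eqDensity_nonneg {c : ℝ} (hc : 0 < c) (s : ℝ) : 0 ≤ eqDensity c s := by
  unfold eqDensity
  have : 0 ≤ Real.arcsin (c / (2 * √(s - s ^ 2))) := Real.arcsin_nonneg.2 (by positivity)
  positivity

/-- For fixed `s`, the kernel is the derivative of `t ↦ 2 arcsin (t / (2q))` with `q = √(s - s²)`, except
at `t = 2q`. Beyond that point the kernel vanishes and `arcsin` is constant, by their conventions. -/
lemma integral_arcsineKernel_param {c s : ℝ} (hc : 0 < c) (hs : s ∈ Ioo (0:ℝ) 1) :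
    IntervalIntegrable (fun t => arcsineKernel t s) volume 0 c ∧
      ∫ t in (0:ℝ)..c, arcsineKernel t s = π * c * eqDensity c s := by
  have h : 0 < s - s ^ 2 := by nlinarith [hs.1, hs.2]
  set q := √(s - s ^ 2) with hq
  have hq0 : 0 < q := Real.sqrt_pos.2 h
  have hq2 : s - s ^ 2 = q ^ 2 := (Real.sq_sqrt h.le).symm
  have hd : ∀ t : ℝ, 0 ≤ t → t ≠ 2 * q →
      HasDerivAt (fun t => 2 * Real.arcsin (t / (2 * q))) (arcsineKernel t s) t := by
    intro t ht hne
    have h1 : t / (2 * q) ≠ -1 := by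
      have : 0 ≤ t / (2 * q) := by positivity
      linarith
    have h2 : t / (2 * q) ≠ 1 := by
      rw [Ne, div_eq_one_iff_eq (by positivity)]; exact hne
    convert! ((Real.hasDerivAt_arcsin h1 h2).comp t ((hasDerivAt_id t).div_const (2 * q))).const_mul 2 using 1
    have h3 : s - s ^ 2 - t ^ 2 / 4 = q ^ 2 * (1 - (t / (2 * q)) ^ 2) := by
      rw [hq2]; field_simp; ring
    simp only [arcsineKernel, h3, Real.sqrt_mul (sq_nonneg q), Real.sqrt_sq hq0.le]
    rw [mul_inv]; field_simp
  have hi : IntervalIntegrable (fun t => arcsineKernel t s) volume 0 c := by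
    -- `arcsin` is monotone, so its derivative is integrable despite the singularity at `t = 2q`.
    have hm : Monotone (fun t => 2 * Real.arcsin (t / (2 * q))) := by
      intro x y hxy
      have := Real.monotone_arcsin (show x / (2 * q) ≤ y / (2 * q) by gcongr)
      simpa using this
    refine ((hm.monotoneOn _).intervalIntegrable_deriv (a := 0) (b := c)).congr_ae ?_
    have : ∀ᵐ t : ℝ, t ≠ 2 * q := by simp [ae_iff]
    filter_upwards [ae_restrict_of_ae this, ae_restrict_mem measurableSet_uIoc] with t ht ht2
    rw [uIoc_of_le hc.le] at ht2
    exact (hd t ht2.1.le ht).deriv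
  refine ⟨hi, ?_⟩
  rw [integral_eq_of_hasDerivAt_off_countable (fun t => 2 * Real.arcsin (t / (2 * q))) _
    (countable_singleton (2 * q)) ?_ ?_ hi]
  · simp only [eqDensity, zero_div, Real.arcsin_zero, ← hq]
    field_simp; simp
  · exact ((Real.continuous_arcsin.comp (by fun_prop)).const_mul 2).continuousOn
  · rintro t ⟨ht, hne⟩
    rw [min_eq_left hc.le, max_eq_right hc.le] at ht
    exact hd t ht.1.le hne

/-- The substitution `s = 1/2 + r cos θ` turns the arcsine law into `dθ / π`. -/
lemma integral_mul_arcsineKernel {t : ℝ} (ht : t ∈ Ioo (0:ℝ) 1) (f : ℝ → ℝ) :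
    ∫ s in Ioo (0:ℝ) 1, f s * arcsineKernel t s =
      ∫ θ in Ioo 0 π, f (1 / 2 + √(1 - t ^ 2) / 2 * Real.cos θ) := by
  set r := √(1 - t ^ 2) / 2 with hr
  have h1 : 0 < 1 - t ^ 2 := by nlinarith [ht.1, ht.2]
  have hr0 : 0 < r := by have := Real.sqrt_pos.2 h1; positivity
  have hr2 : 4 * r ^ 2 = 1 - t ^ 2 := by
    rw [hr, div_pow, Real.sq_sqrt h1.le]; ring
  have hrhalf : r < 1 / 2 := by nlinarith [ht.1]
  have himg : (fun θ => 1 / 2 + r * Real.cos θ) '' Ioo 0 π = Ioo (1 / 2 - r) (1 / 2 + r) := by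
    ext s
    constructor
    · rintro ⟨θ, hθ, rfl⟩
      have h2 : Real.cos θ < 1 := by
        have := Real.cos_lt_cos_of_nonneg_of_le_pi le_rfl hθ.2.le hθ.1; simpa using this
      have h3 : -1 < Real.cos θ := by
        have := Real.cos_lt_cos_of_nonneg_of_le_pi hθ.1.le le_rfl hθ.2; simpa using this
      constructor <;> simp only <;> nlinarith
    · rintro ⟨h2, h3⟩
      have h4 : -1 < (s - 1 / 2) / r := by rw [lt_div_iff₀ hr0]; linarith
      have h5 : (s - 1 / 2) / r < 1 := by rw [div_lt_iff₀ hr0]; linarith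
      refine ⟨Real.arccos ((s - 1 / 2) / r), ⟨Real.arccos_pos.2 h5, ?_⟩, ?_⟩
      · exact lt_of_le_of_ne (Real.arccos_le_pi _)
          (fun h => absurd (Real.arccos_eq_pi.1 h) (not_le.2 h4))
      · simp only [Real.cos_arccos h4.le h5.le]; field_simp; ring
  have hsub : Ioo (1 / 2 - r) (1 / 2 + r) ⊆ Ioo (0:ℝ) 1 := by
    rintro s ⟨h2, h3⟩; constructor <;> linarith
  rw [setIntegral_eq_of_subset_of_forall_sdiff_eq_zero measurableSet_Ioo hsub, ← himg,
    integral_image_eq_integral_abs_deriv_smul (f' := fun θ => r * (-Real.sin θ)) measurableSet_Ioo]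
  · refine setIntegral_congr_fun measurableSet_Ioo fun θ hθ => ?_
    have hsin := Real.sin_pos_of_mem_Ioo hθ
    have h2 : 1 / 2 + r * Real.cos θ - (1 / 2 + r * Real.cos θ) ^ 2 - t ^ 2 / 4
        = (r * Real.sin θ) ^ 2 := by
      have := Real.sin_sq_add_cos_sq θ
      nlinarith
    have h3 : 0 < r * Real.sin θ := by positivity
    simp only [arcsineKernel, h2, Real.sqrt_sq h3.le, smul_eq_mul, mul_neg, abs_neg, abs_of_pos h3]
    field_simp
  · intro θ _
    exact (((Real.hasDerivAt_cos θ).const_mul r).const_add _).hasDerivWithinAt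
  · intro x hx y hy hxy
    have : Real.cos x = Real.cos y := by
      have : r * Real.cos x = r * Real.cos y := by simpa using hxy
      exact mul_left_cancel₀ hr0.ne' this
    exact Real.injOn_cos (Ioo_subset_Icc_self hx) (Ioo_subset_Icc_self hy) this
  · rintro s ⟨hs, hns⟩
    have h2 : s - s ^ 2 - t ^ 2 / 4 ≤ 0 := by
      by_contra! h
      apply hns
      have : (s - 1 / 2) ^ 2 < r ^ 2 := by nlinarith
      have := abs_lt_of_sq_lt_sq' this hr0.le
      constructor <;> linarith
    simp [arcsineKernel, Real.sqrt_eq_zero_of_nonpos h2]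

/-- The integral of `f` against the arcsine law on the interval `1/2 ± √(1-t²)/2`, written in the angular
variable. -/
noncomputable def arcsineAvg (f : ℝ → ℝ) (t : ℝ) : ℝ :=
  π⁻¹ * ∫ θ in Ioo 0 π, f (1 / 2 + √(1 - t ^ 2) / 2 * Real.cos θ)

/-- `c μ = ∫₀ᶜ ω_t dt` tested against `f`. Absolute integrability in the product comes from the bound
`μ ≤ 1/c`, so integrability of `f` suffices. -/
lemma integral_mul_eqDensity {c : ℝ} (hc : c ∈ Ioo (0:ℝ) 1) {f : ℝ → ℝ} (hf : Measurable f)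
    (hfi : IntegrableOn f (Ioo 0 1)) :
    IntegrableOn (arcsineAvg f) (Ioo 0 c) ∧
      c * ∫ s in Ioo (0:ℝ) 1, f s * eqDensity c s = ∫ t in Ioo 0 c, arcsineAvg f t := by
  have hc0 := hc.1
  have hprod : Integrable (Function.uncurry fun t s => f s * arcsineKernel t s)
      ((volume.restrict (Ioo 0 c)).prod (volume.restrict (Ioo 0 1))) := by
    have hmeas : Measurable (Function.uncurry fun t s => f s * arcsineKernel t s) :=
      (hf.comp measurable_snd).mul measurable_arcsineKernel
    refine (integrable_prod_iff' hmeas.aestronglyMeasurable).2 ⟨?_, ?_⟩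
    · filter_upwards [ae_restrict_mem measurableSet_Ioo] with s hs
      have := (integral_arcsineKernel_param hc0 hs).1
      rw [intervalIntegrable_iff_integrableOn_Ioo_of_le hc0.le] at this
      exact Integrable.const_mul this (f s)
    · have : Integrable (fun s => ‖f s‖ * (π * c * eqDensity c s))
          (volume.restrict (Ioo 0 1)) := by
        refine hfi.norm.mul_bdd (c := π * c * (1 / c))
          ((measurable_eqDensity c).const_mul _).aestronglyMeasurable (ae_of_all _ fun s => ?_)
        have h0 := eqDensity_nonneg hc0 s
        rw [Real.norm_of_nonneg (by positivity)]
        gcongr; exact eqDensity_le hc0 s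
      refine this.congr ?_
      filter_upwards [ae_restrict_mem measurableSet_Ioo] with s hs
      have := (integral_arcsineKernel_param hc0 hs).2
      rw [intervalIntegral.integral_of_le hc0.le, integral_Ioc_eq_integral_Ioo] at this
      simp only [Function.uncurry, norm_mul, Real.norm_of_nonneg (arcsineKernel_nonneg _ _)]
      rw [integral_const_mul, this]
  have hcongr : ∀ t ∈ Ioo 0 c, ∫ s in Ioo (0:ℝ) 1, f s * arcsineKernel t s
      = π * arcsineAvg f t := by
    intro t ht
    rw [integral_mul_arcsineKernel ⟨ht.1, ht.2.trans hc.2⟩, arcsineAvg,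
      mul_inv_cancel_left₀ Real.pi_ne_zero]
  constructor
  · have := hprod.integral_prod_left.const_mul π⁻¹
    refine this.congr ?_
    filter_upwards [ae_restrict_mem measurableSet_Ioo] with t ht
    simp only [Function.uncurry]
    rw [hcongr t ht, inv_mul_cancel_left₀ Real.pi_ne_zero]
  · have h1 := integral_integral_swap hprod
    rw [setIntegral_congr_fun measurableSet_Ioo hcongr, integral_const_mul] at h1
    have h2 : ∫ s in Ioo (0:ℝ) 1, ∫ t in Ioo 0 c, f s * arcsineKernel t s
        = ∫ s in Ioo (0:ℝ) 1, π * (c * (f s * eqDensity c s)) := by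
      refine setIntegral_congr_fun measurableSet_Ioo fun s hs => ?_
      have := (integral_arcsineKernel_param hc0 hs).2
      rw [intervalIntegral.integral_of_le hc0.le, integral_Ioc_eq_integral_Ioo] at this
      rw [integral_const_mul, this]; ring
    rw [h2, integral_const_mul, integral_const_mul] at h1
    exact (mul_left_cancel₀ Real.pi_ne_zero h1).symm

/-! ### The logarithmic potential of an arcsine law -/

/-- If `y / r` is the Joukowski image `(w + w⁻¹) / 2`, then
`|y - r cos θ| = (r / 2) ‖e^{iθ} - w‖ ‖e^{iθ} - w⁻¹‖`. The circle averages of the logarithms of the two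
factors are `log⁺ ‖w‖` and `log⁺ ‖w⁻¹‖`, which add up to `|log ‖w‖|`. -/
lemma log_integral_of_joukowski {r y : ℝ} (hr : 0 < r) {w : ℂ} (hw : w ≠ 0)
    (hwy : w + w⁻¹ = ((2 * y / r : ℝ) : ℂ)) :
    ∫ θ in Ioo 0 π, Real.log |y - r * Real.cos θ| =
      π * (Real.log (r / 2) + |Real.log ‖w‖|) := by
  have hnorm : ∀ θ : ℝ, |y - r * Real.cos θ| =
      r / 2 * (‖circleMap 0 1 θ - w‖ * ‖circleMap 0 1 θ - w⁻¹‖) := by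
    intro θ
    set e := circleMap 0 1 θ with he
    have he1 : ‖e‖ = 1 := by simp [he]
    have he0 : e ≠ 0 := by rw [← norm_ne_zero_iff, he1]; exact one_ne_zero
    have hcos : e + e⁻¹ = 2 * ((Real.cos θ : ℝ) : ℂ) := by
      rw [he, circleMap, Complex.ofReal_cos, Complex.cos]
      simp only [zero_add, Complex.ofReal_one, one_mul, neg_mul, Complex.exp_neg]
      ring
    have h2 : ((y - r * Real.cos θ : ℝ) : ℂ) = -(r / 2 : ℝ) * ((e - w) * (e - w⁻¹)) * e⁻¹ := by
      have hr' : (r : ℂ) ≠ 0 := by exact_mod_cast hr.ne'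
      have h3 : (e - w) * (e - w⁻¹) * e⁻¹ = (e + e⁻¹) - (w + w⁻¹) := by
        field_simp; ring
      rw [mul_assoc, h3, hcos, hwy]
      push_cast; field_simp; ring
    rw [← Real.norm_eq_abs, ← Complex.norm_real, h2]
    simp only [norm_mul, norm_neg, norm_inv, he1, Complex.norm_real, inv_one, mul_one]
    rw [Real.norm_of_nonneg (by positivity)]
  have hint : ∀ v : ℂ, IntervalIntegrable (fun θ => Real.log ‖circleMap 0 1 θ - v‖)
      volume 0 (2 * π) := fun v => circleIntegrable_log_norm_sub_const (a := v) 1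
  have havg : ∀ v : ℂ, ∫ θ in (0:ℝ)..2 * π, Real.log ‖circleMap 0 1 θ - v‖
      = 2 * π * ‖v‖.posLog := by
    intro v
    have := circleAverage_log_norm_sub_const_eq_posLog (a := v)
    rw [Real.circleAverage, smul_eq_mul, inv_mul_eq_iff_eq_mul₀ (by positivity)] at this
    exact this
  have hae : ∀ v : ℂ, ∀ᵐ θ : ℝ, θ ∈ uIoc 0 (2 * π) → circleMap 0 1 θ ≠ v := by
    intro v
    have hcount : (circleMap (0:ℂ) 1 ⁻¹' {v} ∩ uIoc 0 (2 * π)).Finite := by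
      have hinj : Set.InjOn (circleMap (0:ℂ) 1) (uIoc 0 (2 * π)) := by
        have := injOn_circleMap_of_abs_sub_le (c := 0) (R := 1) one_ne_zero
          (a := 0) (b := 2 * π) (by simp [abs_of_pos Real.pi_pos])
        exact this
      exact Set.Finite.subset (Set.Subsingleton.finite (s := circleMap (0:ℂ) 1 ⁻¹' {v} ∩ uIoc 0 (2 * π))
        fun x hx y hy => hinj hx.2 hy.2 (hx.1.trans hy.1.symm)) subset_rfl
    have := (hcount.countable.ae_notMem volume)
    filter_upwards [this] with θ hθ h1 h2
    exact hθ ⟨h2, h1⟩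
  have hlog : ∀ᵐ θ : ℝ, θ ∈ uIoc 0 (2 * π) → Real.log |y - r * Real.cos θ| =
      Real.log (r / 2) + (Real.log ‖circleMap 0 1 θ - w‖ +
        Real.log ‖circleMap 0 1 θ - w⁻¹‖) := by
    filter_upwards [hae w, hae w⁻¹] with θ h1 h2 h3
    have h1' := norm_ne_zero_iff.2 (sub_ne_zero.2 (h1 h3))
    have h2' := norm_ne_zero_iff.2 (sub_ne_zero.2 (h2 h3))
    rw [hnorm, Real.log_mul (by positivity) (mul_ne_zero h1' h2'), Real.log_mul h1' h2']
  -- The integrand depends on `cos θ` only, so its integral over `(0, 2π)` is twice the one over `(0, π)`.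
  have hfull : ∫ θ in (0:ℝ)..2 * π, Real.log |y - r * Real.cos θ| =
      2 * π * (Real.log (r / 2) + |Real.log ‖w‖|) := by
    rw [intervalIntegral.integral_congr_ae hlog, intervalIntegral.integral_add (by simp)
      ((hint w).add (hint w⁻¹)), intervalIntegral.integral_add (hint w) (hint w⁻¹), havg, havg,
      intervalIntegral.integral_const, norm_inv, smul_eq_mul]
    have h5 : ‖w‖.posLog + (‖w‖⁻¹).posLog = |Real.log ‖w‖| := by
      simp only [Real.posLog, Real.log_inv]
      rcases le_total 0 (Real.log ‖w‖) with h | h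
      · rw [max_eq_right h, max_eq_left (by linarith), abs_of_nonneg h, add_zero]
      · rw [max_eq_left h, max_eq_right (by linarith), abs_of_nonpos h, zero_add]
    rw [← h5]; ring
  have hIfull : IntervalIntegrable (fun θ => Real.log |y - r * Real.cos θ|) volume 0 (2 * π) := by
    refine ((intervalIntegrable_const (c := Real.log (r / 2))).add
      ((hint w).add (hint w⁻¹))).congr_ae ?_
    rw [Filter.EventuallyEq, ae_restrict_iff' measurableSet_uIoc]
    filter_upwards [hlog] with θ h h1
    exact (h h1).symm
  have h1 : IntervalIntegrable (fun θ => Real.log |y - r * Real.cos θ|) volume 0 π :=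
    hIfull.mono_set (by
      rw [uIcc_of_le Real.pi_pos.le, uIcc_of_le (by positivity)]
      exact Icc_subset_Icc_right (by linarith [Real.pi_pos]))
  have h2 : IntervalIntegrable (fun θ => Real.log |y - r * Real.cos θ|) volume π (2 * π) :=
    hIfull.mono_set (by
      rw [uIcc_of_le (by linarith [Real.pi_pos]), uIcc_of_le (by positivity)]
      exact Icc_subset_Icc_left (by linarith [Real.pi_pos]))
  have hhalf : ∫ θ in π..2 * π, Real.log |y - r * Real.cos θ| =
      ∫ θ in (0:ℝ)..π, Real.log |y - r * Real.cos θ| := by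
    have := intervalIntegral.integral_comp_sub_left (a := 0) (b := π)
      (fun θ => Real.log |y - r * Real.cos θ|) (2 * π)
    simp only [Real.cos_two_pi_sub] at this
    rw [this]; congr 1 <;> ring
  rw [← intervalIntegral.integral_add_adjacent_intervals h1 h2, hhalf] at hfull
  rw [← integral_Ioc_eq_integral_Ioo, ← intervalIntegral.integral_of_le Real.pi_pos.le]
  linarith

/-- On the interval the Joukowski preimage lies on the unit circle. -/
lemma log_integral_inside {r y : ℝ} (hr : 0 < r) (hy : |y| ≤ r) :
    ∫ θ in Ioo 0 π, Real.log |y - r * Real.cos θ| = π * Real.log (r / 2) := by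
  obtain ⟨h1, h2⟩ := abs_le.1 hy
  set α := Real.arccos (y / r)
  have hα : Real.cos α = y / r :=
    Real.cos_arccos (by rw [le_div_iff₀ hr]; linarith) (by rw [div_le_iff₀ hr]; linarith)
  rw [log_integral_of_joukowski hr (w := Complex.exp (α * Complex.I)) (Complex.exp_ne_zero _)]
  · rw [Complex.norm_exp_ofReal_mul_I]; simp
  · rw [← Complex.exp_neg, ← neg_mul, ← Complex.two_cos, ← Complex.ofReal_cos, hα]
    push_cast; ring

/-- Off the interval the Joukowski preimage is real and different from `±1`. -/
lemma log_integral_outside {r y : ℝ} (hr : 0 < r) (hy : r < |y|) :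
    π * Real.log (r / 2) < ∫ θ in Ioo 0 π, Real.log |y - r * Real.cos θ| := by
  have hy2 : r ^ 2 < y ^ 2 := by rw [← sq_abs y]; nlinarith
  set d := √(y ^ 2 - r ^ 2) with hd
  have hd2 : d ^ 2 = y ^ 2 - r ^ 2 := Real.sq_sqrt (by linarith)
  have hd0 : 0 < d := Real.sqrt_pos.2 (by linarith)
  have hmul : ((y + d) / r) * ((y - d) / r) = 1 := by
    field_simp; nlinarith
  have hw0 : (y + d) / r ≠ 0 := left_ne_zero_of_mul_eq_one hmul
  rw [log_integral_of_joukowski hr (w := (((y + d) / r : ℝ) : ℂ)) (by exact_mod_cast hw0)]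
  · have : Real.log ‖(((y + d) / r : ℝ) : ℂ)‖ ≠ 0 := by
      rw [Complex.norm_real, Real.norm_eq_abs, Real.log_abs]
      refine Real.log_ne_zero.2 ⟨hw0, fun h => ?_, fun h => ?_⟩ <;>
      · rw [h] at hmul
        rw [div_eq_iff hr.ne'] at h
        have h3 : (y - d) / r * r = y - d := by field_simp
        nlinarith
    have := abs_pos.2 this
    have := Real.pi_pos
    nlinarith [mul_pos ‹0 < π› ‹0 < |Real.log _|›]
  · rw [← Complex.ofReal_inv, inv_eq_of_mul_eq_one_right hmul, ← Complex.ofReal_add]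
    congr 1; field_simp; ring

/-! ### The logarithmic potential of the equilibrium measure -/

/-- The logarithmic potential `∫ log |x - s| μ(s) ds`. -/
noncomputable def logPotential (c x : ℝ) : ℝ :=
  ∫ s in Ioo (0:ℝ) 1, Real.log |x - s| * eqDensity c s

lemma integrableOn_log_abs_sub (x : ℝ) : IntegrableOn (fun s => Real.log |x - s|) (Ioo 0 1) := by
  have h : IntervalIntegrable (fun s => Real.log (x - s)) volume (x - x) (x - (x - 1)) :=
    (intervalIntegral.intervalIntegrable_log' (a := x) (b := x - 1)).comp_sub_left x
  have h : IntervalIntegrable (fun s => Real.log (x - s)) volume 0 1 := by simpa using h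
  rw [intervalIntegrable_iff_integrableOn_Ioo_of_le zero_le_one] at h
  simpa only [Real.log_abs] using h

lemma measurable_log_abs_sub (x : ℝ) : Measurable (fun s => Real.log |x - s|) := by fun_prop

lemma integrableOn_mul_eqDensity {c : ℝ} (hc : 0 < c) {f : ℝ → ℝ} (hf : IntegrableOn f (Ioo 0 1)) :
    IntegrableOn (fun s => f s * eqDensity c s) (Ioo 0 1) := by
  refine Integrable.mul_bdd (c := 1 / c) hf (measurable_eqDensity c).aestronglyMeasurable
    (ae_of_all _ fun s => ?_)
  rw [Real.norm_of_nonneg (eqDensity_nonneg hc s)]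
  exact eqDensity_le hc s

lemma integrableOn_eqDensity {c : ℝ} (hc : 0 < c) : IntegrableOn (eqDensity c) (Ioo 0 1) := by
  simpa using integrableOn_mul_eqDensity hc (f := fun _ => (1:ℝ)) (by simp)

lemma integral_eqDensity {c : ℝ} (hc : c ∈ Ioo (0:ℝ) 1) :
    ∫ s in Ioo (0:ℝ) 1, eqDensity c s = 1 := by
  have h := (integral_mul_eqDensity hc (f := fun _ => (1:ℝ)) measurable_const (by simp)).2
  have h1 : ∀ t, arcsineAvg (fun _ => (1:ℝ)) t = 1 := by
    intro t
    simp [arcsineAvg, Real.pi_pos.le, Real.pi_ne_zero]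
  simp only [h1, one_mul] at h
  have h2 : c * ∫ s in Ioo (0:ℝ) 1, eqDensity c s = c * 1 := by
    rw [h]; simp [hc.1.le]
  exact mul_left_cancel₀ hc.1.ne' h2

lemma arcsineAvg_log (x t : ℝ) : arcsineAvg (fun s => Real.log |x - s|) t =
    π⁻¹ * ∫ θ in Ioo 0 π, Real.log |(x - 1 / 2) - √(1 - t ^ 2) / 2 * Real.cos θ| := by
  simp only [arcsineAvg, sub_sub]

lemma arcsineAvg_log_inside {x t : ℝ} (ht : t ∈ Ioo (0:ℝ) 1)
    (hx : |x - 1 / 2| ≤ √(1 - t ^ 2) / 2) :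
    arcsineAvg (fun s => Real.log |x - s|) t = Real.log (√(1 - t ^ 2) / 2 / 2) := by
  have : 0 < √(1 - t ^ 2) := Real.sqrt_pos.2 (by nlinarith [ht.1, ht.2])
  rw [arcsineAvg_log, log_integral_inside (by positivity) hx,
    inv_mul_cancel_left₀ Real.pi_ne_zero]

lemma arcsineAvg_log_outside {x t : ℝ} (ht : t ∈ Ioo (0:ℝ) 1)
    (hx : √(1 - t ^ 2) / 2 < |x - 1 / 2|) :
    Real.log (√(1 - t ^ 2) / 2 / 2) < arcsineAvg (fun s => Real.log |x - s|) t := by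
  have : 0 < √(1 - t ^ 2) := Real.sqrt_pos.2 (by nlinarith [ht.1, ht.2])
  rw [arcsineAvg_log, lt_inv_mul_iff₀ Real.pi_pos]
  exact log_integral_outside (by positivity) hx

lemma half_width_anti {c t : ℝ} (ht : t ∈ Ioo 0 c) : √(1 - c ^ 2) / 2 ≤ √(1 - t ^ 2) / 2 := by
  have := ht.1; have := ht.2
  gcongr

lemma logPotential_inside {c x : ℝ} (hc : c ∈ Ioo (0:ℝ) 1) (hx : |x - 1 / 2| ≤ √(1 - c ^ 2) / 2) :
    c * logPotential c x = ∫ t in Ioo 0 c, Real.log (√(1 - t ^ 2) / 2 / 2) := by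
  rw [logPotential,
    (integral_mul_eqDensity hc (measurable_log_abs_sub x) (integrableOn_log_abs_sub x)).2]
  exact setIntegral_congr_fun measurableSet_Ioo fun t ht =>
    arcsineAvg_log_inside ⟨ht.1, ht.2.trans hc.2⟩ (hx.trans (half_width_anti ht))

/-- The potential is strictly larger outside `[a,b] = {|x - 1/2| ≤ √(1-c²)/2}` than inside. -/
lemma logPotential_lt_of_outside {c x y : ℝ} (hc : c ∈ Ioo (0:ℝ) 1)
    (hx : |x - 1 / 2| ≤ √(1 - c ^ 2) / 2) (hy : √(1 - c ^ 2) / 2 < |y - 1 / 2|) :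
    logPotential c x < logPotential c y := by
  have hX := integral_mul_eqDensity hc (measurable_log_abs_sub x) (integrableOn_log_abs_sub x)
  have hY := integral_mul_eqDensity hc (measurable_log_abs_sub y) (integrableOn_log_abs_sub y)
  refine lt_of_mul_lt_mul_left ?_ hc.1.le
  rw [logPotential, logPotential, hX.2, hY.2, ← sub_pos, ← integral_sub hY.1 hX.1]
  have hXeq : ∀ t ∈ Ioo 0 c, arcsineAvg (fun s => Real.log |x - s|) t =
      Real.log (√(1 - t ^ 2) / 2 / 2) := fun t ht =>
    arcsineAvg_log_inside ⟨ht.1, ht.2.trans hc.2⟩ (hx.trans (half_width_anti ht))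
  have hle : ∀ t ∈ Ioo 0 c, 0 ≤ arcsineAvg (fun s => Real.log |y - s|) t -
      arcsineAvg (fun s => Real.log |x - s|) t := by
    intro t ht
    have ht1 : t ∈ Ioo (0:ℝ) 1 := ⟨ht.1, ht.2.trans hc.2⟩
    rw [hXeq t ht, sub_nonneg]
    rcases le_or_gt |y - 1 / 2| (√(1 - t ^ 2) / 2) with h | h
    · exact (arcsineAvg_log_inside ht1 h).ge
    · exact (arcsineAvg_log_outside ht1 h).le
  rw [setIntegral_pos_iff_support_of_nonneg_ae
    ((ae_restrict_iff' measurableSet_Ioo).2 (ae_of_all _ hle)) (hY.1.sub hX.1)]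
  -- For `t > t₀` the support of the arcsine law no longer contains `y`; if `y ∉ (0,1)`, then the argument
  -- of the root is not positive and `t₀ = 0`.
  set t₀ := √(1 - 4 * (y - 1 / 2) ^ 2) with ht₀
  have ht₀c : t₀ < c := by
    rw [ht₀, Real.sqrt_lt' hc.1]
    have h1 := Real.sq_sqrt (show 0 ≤ 1 - c ^ 2 by nlinarith [hc.1, hc.2])
    have h2 := Real.sqrt_nonneg (1 - c ^ 2)
    rw [← sq_abs (y - 1 / 2)]
    nlinarith
  have hsub : Ioo t₀ c ⊆ (Function.support fun t => arcsineAvg (fun s => Real.log |y - s|) t -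
      arcsineAvg (fun s => Real.log |x - s|) t) ∩ Ioo 0 c := by
    intro t ht
    have htc : t ∈ Ioo 0 c := ⟨(Real.sqrt_nonneg _).trans_lt ht.1, ht.2⟩
    refine ⟨?_, htc⟩
    rw [Function.mem_support, hXeq t htc]
    have h1 : √(1 - t ^ 2) / 2 < |y - 1 / 2| := by
      have h2 : 1 - 4 * (y - 1 / 2) ^ 2 < t ^ 2 := (Real.sqrt_lt' htc.1).1 ht.1
      have h3 : 0 < 2 * |y - 1 / 2| := by
        have := Real.sqrt_nonneg (1 - c ^ 2); linarith
      have : √(1 - t ^ 2) < 2 * |y - 1 / 2| := by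
        rw [Real.sqrt_lt' h3, mul_pow, sq_abs]; linarith
      linarith
    exact (sub_pos.2 (arcsineAvg_log_outside ⟨htc.1, htc.2.trans hc.2⟩ h1)).ne'
  refine lt_of_lt_of_le ?_ (measure_mono hsub)
  simp [ht₀c]

/-! ### The mass to the right of a point -/

/-- The mass of the equilibrium measure to the right of `x`. -/
noncomputable def massRight (c x : ℝ) : ℝ :=
  ∫ s in Ioo (0:ℝ) 1, (if x < s then 1 else 0) * eqDensity c s

lemma integrableOn_ite (x : ℝ) :
    IntegrableOn (fun s : ℝ => if x < s then (1:ℝ) else 0) (Ioo 0 1) := by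
  refine Measure.integrableOn_of_bounded (M := 1) (by simp)
    (Measurable.ite measurableSet_Ioi measurable_const measurable_const).aestronglyMeasurable ?_
  refine ae_of_all _ fun s => ?_
  split_ifs <;> simp

lemma massRight_nonpos {c x : ℝ} (hc : c ∈ Ioo (0:ℝ) 1) (hx : x ≤ 0) : massRight c x = 1 := by
  rw [← integral_eqDensity hc]
  refine setIntegral_congr_fun measurableSet_Ioo fun s hs => ?_
  simp [hx.trans_lt hs.1]

lemma massRight_pos {c x : ℝ} (hc : 0 < c) (hx : x ∈ Ioo (0:ℝ) 1) : 0 < massRight c x := by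
  rw [massRight, setIntegral_pos_iff_support_of_nonneg_ae]
  · have hsub : Ioo x 1 ⊆ (Function.support fun s => (if x < s then 1 else 0) * eqDensity c s) ∩
        Ioo 0 1 := by
      intro s hs
      have hs' : s ∈ Ioo (0:ℝ) 1 := ⟨hx.1.trans hs.1, hs.2⟩
      refine ⟨?_, hs'⟩
      simp [hs.1, (eqDensity_pos hc hs').ne']
    exact lt_of_lt_of_le (by simp [hx.2]) (measure_mono hsub)
  · refine ae_of_all _ fun s => ?_
    have := eqDensity_nonneg hc s
    simp only [Pi.zero_apply]
    split_ifs <;> simp [this]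
  · exact integrableOn_mul_eqDensity hc (integrableOn_ite x)

lemma eqDensity_saturated {c s : ℝ} (hs : s ∈ Ioo (0:ℝ) 1) (hc : c ∈ Ioo (0:ℝ) 1)
    (h : √(1 - c ^ 2) / 2 ≤ |s - 1 / 2|) : eqDensity c s = 1 / c := by
  have h0 : 0 < s - s ^ 2 := by nlinarith [hs.1, hs.2]
  have h1 : 0 < √(s - s ^ 2) := Real.sqrt_pos.2 h0
  have h2 : 2 * √(s - s ^ 2) ≤ c := by
    have h3 := Real.sq_sqrt (show 0 ≤ 1 - c ^ 2 by nlinarith [hc.1, hc.2])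
    have h4 := Real.sqrt_nonneg (1 - c ^ 2)
    have h5 := sq_abs (s - 1 / 2)
    have h6 := Real.sq_sqrt h0.le
    have h7 : (√(1 - c ^ 2) / 2) ^ 2 ≤ |s - 1 / 2| ^ 2 := by gcongr
    exact abs_le_of_sq_le_sq' (by nlinarith) hc.1.le |>.2
  have hpi := Real.pi_pos
  have := hc.1
  rw [eqDensity, Real.arcsin_of_one_le]
  · field_simp
  · rw [le_div_iff₀ (by positivity)]; linarith

lemma massRight_left {c x : ℝ} (hc : c ∈ Ioo (0:ℝ) 1) (hx0 : 0 ≤ x)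
    (hx : x ≤ (1 - √(1 - c ^ 2)) / 2) : massRight c x = 1 - x / c := by
  have hw : 0 < √(1 - c ^ 2) := Real.sqrt_pos.2 (by nlinarith [hc.1, hc.2])
  have h1 : massRight c x = ∫ s in Ioo (0:ℝ) 1, (eqDensity c s - (Iic x).indicator (fun _ => 1 / c) s) := by
    refine setIntegral_congr_fun measurableSet_Ioo fun s hs => ?_
    rcases lt_or_ge x s with h | h
    · simp [h]
    · have : eqDensity c s = 1 / c := eqDensity_saturated hs hc (by
        rw [abs_of_nonpos (by linarith)]; linarith)
      simp [h, not_lt.2 h, this]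
  have hset : Ioo (0:ℝ) 1 ∩ Iic x = Ioc 0 x := by
    ext s; simp only [mem_inter_iff, mem_Ioo, mem_Iic, mem_Ioc]
    constructor
    · rintro ⟨⟨h, _⟩, h'⟩; exact ⟨h, h'⟩
    · rintro ⟨h, h'⟩; exact ⟨⟨h, by linarith⟩, h'⟩
  rw [h1, integral_sub (integrableOn_eqDensity hc.1)
    ((integrable_const _).indicator measurableSet_Iic), integral_eqDensity hc,
    setIntegral_indicator measurableSet_Iic, hset]
  simp [hx0, div_eq_mul_inv]

lemma massRight_right {c x : ℝ} (hc : c ∈ Ioo (0:ℝ) 1) (hx1 : x ≤ 1)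
    (hx : (1 + √(1 - c ^ 2)) / 2 ≤ x) : massRight c x = (1 - x) / c := by
  have hw : 0 < √(1 - c ^ 2) := Real.sqrt_pos.2 (by nlinarith [hc.1, hc.2])
  have h1 : massRight c x = ∫ s in Ioo (0:ℝ) 1, (Ioi x).indicator (fun _ => 1 / c) s := by
    refine setIntegral_congr_fun measurableSet_Ioo fun s hs => ?_
    rcases lt_or_ge x s with h | h
    · have : eqDensity c s = 1 / c := eqDensity_saturated hs hc (by
        rw [abs_of_nonneg (by linarith)]; linarith)
      simp [h, this]
    · simp [not_lt.2 h]
  have hset : Ioo (0:ℝ) 1 ∩ Ioi x = Ioo x 1 := by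
    ext s; simp only [mem_inter_iff, mem_Ioo, mem_Ioi]
    constructor
    · rintro ⟨⟨_, h⟩, h'⟩; exact ⟨h', h⟩
    · rintro ⟨h, h'⟩; exact ⟨⟨by linarith, h'⟩, h⟩
  rw [h1, setIntegral_indicator measurableSet_Ioi, hset]
  simp [hx1, div_eq_mul_inv]

/-! ### Boundary values -/

lemma clog_upper_tendsto {u : ℝ} (hu : u ≠ 0) :
    Tendsto (fun ε : ℝ => Complex.log (u + ε * Complex.I)) (𝓝[>] 0)
      (𝓝 (Real.log |u| + (if u < 0 then π else 0 : ℝ) * Complex.I)) := by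
  have hlim : Tendsto (fun ε : ℝ => (u + ε * Complex.I : ℂ)) (𝓝[>] 0) (𝓝 (u:ℂ)) := by
    have : Continuous (fun ε : ℝ => (u + ε * Complex.I : ℂ)) := by fun_prop
    simpa using (this.tendsto 0).mono_left nhdsWithin_le_nhds
  rcases lt_or_gt_of_ne hu with h | h
  · have h1 := Complex.tendsto_log_nhdsWithin_im_nonneg_of_re_neg_of_im_zero (z := (u:ℂ))
      (by simpa using h) (by simp)
    have h2 := h1.comp (tendsto_nhdsWithin_iff.2 ⟨hlim, by
      filter_upwards [self_mem_nhdsWithin] with ε hε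
      simpa using (le_of_lt hε)⟩)
    simpa [h, Function.comp_def, Complex.norm_real] using h2
  · have h1 := (continuousAt_clog (x := (u:ℂ)) (Or.inl (by simpa using h))).tendsto.comp hlim
    simpa [not_lt.2 h.le, abs_of_pos h, Function.comp_def, Complex.ofReal_log h.le] using h1

/-- The domination that allows passing to the limit `ε → 0` under the integral. -/
lemma norm_clog_le {u ε : ℝ} (hu : u ≠ 0) (hε : ε ∈ Ioo (0:ℝ) 1) :
    ‖Complex.log (u + ε * Complex.I)‖ ≤ |(Real.log |u|)| + |u| + 1 + π := by
  set z : ℂ := u + ε * Complex.I with hz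
  have h1 : |u| ≤ ‖z‖ := by simpa [hz] using Complex.abs_re_le_norm z
  have h2 : ‖z‖ ≤ |u| + 1 := by
    refine (norm_add_le _ _).trans ?_
    simp only [norm_mul, Complex.norm_I, Complex.norm_real, mul_one, Real.norm_eq_abs,
      abs_of_pos hε.1]
    linarith [hε.2]
  have hu0 : 0 < |u| := abs_pos.2 hu
  have h3 : |Real.log ‖z‖| ≤ |(Real.log |u|)| + |u| + 1 := by
    rw [abs_le]
    have h4 := Real.log_le_log hu0 h1
    have h5 := Real.log_le_sub_one_of_pos (hu0.trans_le h1)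
    have h6 := neg_abs_le (Real.log |u|)
    have h7 := abs_nonneg (Real.log |u|)
    constructor <;> linarith
  calc ‖Complex.log z‖ ≤ |(Complex.log z).re| + |(Complex.log z).im| :=
        Complex.norm_le_abs_re_add_abs_im _
    _ ≤ _ := by
      rw [Complex.log_re, Complex.log_im]
      exact add_le_add h3 (Complex.abs_arg_le_pi z)

lemma tendsto_complexPotential {c : ℝ} (hc : 0 < c) (x : ℝ) :
    Tendsto (fun ε : ℝ => ∫ s in Ioo (0:ℝ) 1,
        (eqDensity c s : ℂ) * Complex.log (x + ε * Complex.I - s)) (𝓝[>] 0)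
      (𝓝 (logPotential c x + (π * massRight c x : ℝ) * Complex.I)) := by
  have hlim : ((logPotential c x + (π * massRight c x : ℝ) * Complex.I) : ℂ) =
      ∫ s in Ioo (0:ℝ) 1, (eqDensity c s : ℂ) *
        (Real.log |x - s| + (if x - s < 0 then π else 0 : ℝ) * Complex.I) := by
    have h1 : ∀ s : ℝ, (eqDensity c s : ℂ) *
        (Real.log |x - s| + (if x - s < 0 then π else 0 : ℝ) * Complex.I) =
        ((Real.log |x - s| * eqDensity c s : ℝ) : ℂ) +
          ((((if x < s then 1 else 0) * eqDensity c s : ℝ) : ℂ)) * (π * Complex.I) := by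
      intro s
      by_cases h : x < s <;> simp [h, mul_add] <;> ring
    simp_rw [h1]
    rw [integral_add (integrableOn_mul_eqDensity hc (integrableOn_log_abs_sub x)).ofReal
      ((integrableOn_mul_eqDensity hc (integrableOn_ite x)).ofReal.mul_const _),
      integral_mul_const, integral_complex_ofReal, integral_complex_ofReal,
      logPotential, massRight]
    push_cast; ring
  rw [hlim]
  refine tendsto_integral_filter_of_dominated_convergence
    (fun s => 1 / c * (|(Real.log |x - s|)| + |x - s| + 1 + π)) ?_ ?_ ?_ ?_
  · refine Eventually.of_forall fun ε => Measurable.aestronglyMeasurable ?_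
    exact (Complex.measurable_ofReal.comp (measurable_eqDensity c)).mul
      (Complex.measurable_log.comp (by fun_prop))
  · filter_upwards [Ioo_mem_nhdsGT (zero_lt_one' ℝ)] with ε hε
    have : ∀ᵐ s : ℝ, s ≠ x := by simp [ae_iff]
    filter_upwards [ae_restrict_of_ae this] with s hs
    have h1 := norm_clog_le (sub_ne_zero.2 hs.symm) hε
    have h2 : (x + ε * Complex.I - s : ℂ) = ((x - s : ℝ) : ℂ) + ε * Complex.I := by
      push_cast; ring
    rw [norm_mul, h2, Complex.norm_real, Real.norm_of_nonneg (eqDensity_nonneg hc s)]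
    exact mul_le_mul (eqDensity_le hc s) h1 (norm_nonneg _) (by positivity)
  · refine Integrable.const_mul ?_ _
    refine (((integrableOn_log_abs_sub x).abs.add ?_).add (integrable_const _)).add
      (integrable_const _)
    exact ((by fun_prop : Continuous fun s : ℝ => |x - s|).integrableOn_Icc (a := 0) (b := 1)).mono_set
      Ioo_subset_Icc_self
  · have : ∀ᵐ s : ℝ, s ≠ x := by simp [ae_iff]
    filter_upwards [ae_restrict_of_ae this] with s hs
    refine Tendsto.const_mul _ ?_
    have := clog_upper_tendsto (sub_ne_zero.2 hs.symm)
    refine this.congr fun ε => ?_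
    congr 1; push_cast; ring

lemma complexPotential_conj (c x ε : ℝ) (hε : 0 < ε) :
    ∫ s in Ioo (0:ℝ) 1, (eqDensity c s : ℂ) * Complex.log (x - ε * Complex.I - s) =
      (starRingEnd ℂ) (∫ s in Ioo (0:ℝ) 1,
        (eqDensity c s : ℂ) * Complex.log (x + ε * Complex.I - s)) := by
  rw [← integral_conj]
  congr 1; ext s
  rw [map_mul, Complex.conj_ofReal, ← Complex.log_conj]
  · simp [sub_eq_add_neg]
  · intro h
    have := (Complex.arg_eq_pi_iff.1 h).2
    simp at this
    exact hε.ne' this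

lemma logPotential_lt_of_log_lt {c x y : ℝ} (hc : 0 < c)
    (h : ∀ s ∈ Ioo (0:ℝ) 1, Real.log |x - s| < Real.log |y - s|) :
    logPotential c x < logPotential c y := by
  have hX := integrableOn_mul_eqDensity hc (integrableOn_log_abs_sub x)
  have hY := integrableOn_mul_eqDensity hc (integrableOn_log_abs_sub y)
  rw [logPotential, logPotential, ← sub_pos, ← integral_sub hY hX]
  have hpos : ∀ s ∈ Ioo (0:ℝ) 1,
      0 < Real.log |y - s| * eqDensity c s - Real.log |x - s| * eqDensity c s := by
    intro s hs
    rw [← sub_mul]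
    exact mul_pos (sub_pos.2 (h s hs)) (eqDensity_pos hc hs)
  rw [setIntegral_pos_iff_support_of_nonneg_ae
    ((ae_restrict_iff' measurableSet_Ioo).2 (ae_of_all _ fun s hs => (hpos s hs).le)) (hY.sub hX)]
  refine lt_of_lt_of_le ?_ (measure_mono (show Ioo (0:ℝ) 1 ⊆ _ from
    fun s hs => ⟨(hpos s hs).ne', hs⟩))
  simp

lemma complexPotential_real {c x : ℝ} (hx : 1 ≤ x) :
    ∫ s in Ioo (0:ℝ) 1, (eqDensity c s : ℂ) * Complex.log (x - s) = (logPotential c x : ℂ) := by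
  rw [logPotential, ← integral_complex_ofReal]
  refine setIntegral_congr_fun measurableSet_Ioo fun s hs => ?_
  have h : 0 < x - s := by linarith [hs.2]
  rw [abs_of_pos h, ← Complex.ofReal_sub, ← Complex.ofReal_log h.le]
  push_cast; ring

/-- mapping properties of `φ = l/2 − g`, where `g` is the logarithmic
potential of the equilibrium measure. Boundary values `φ_±(x) = lim_{ε→0⁺} φ(x ± iε)`. -/
theorem phi_mapping_properties
    (c : ℝ) (hc0 : 0 < c) (hc1 : c < 1)
    (a b : ℝ)
    (ha : a = (1 - Real.sqrt (1 - c ^ 2)) / 2)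
    (hb : b = (1 + Real.sqrt (1 - c ^ 2)) / 2)
    (μ : ℝ → ℝ)
    (hμab : ∀ x, a < x → x < b →
      μ x = (2 / (π * c)) * Real.arcsin (c / (2 * Real.sqrt (x - x ^ 2))))
    (hμout : ∀ x, (0 ≤ x ∧ x ≤ a) ∨ (b ≤ x ∧ x ≤ 1) → μ x = 1 / c)
    (g : ℂ → ℂ)
    (hg : ∀ z, g z = ∫ s in (0:ℝ)..1, (μ s : ℂ) * Complex.log (z - s))
    (l : ℝ)
    (hl : l = 2 * ∫ s in (0:ℝ)..1, Real.log |a - s| * μ s)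
    (φ : ℂ → ℂ)
    (hφ : ∀ z, φ z = (l:ℂ)/2 - g z)
    (φp φm : ℝ → ℂ)
    (hφp : ∀ x : ℝ, Tendsto (fun ε : ℝ => φ (↑x + ↑ε * Complex.I)) (𝓝[>] 0) (𝓝 (φp x)))
    (hφm : ∀ x : ℝ, Tendsto (fun ε : ℝ => φ (↑x - ↑ε * Complex.I)) (𝓝[>] 0) (𝓝 (φm x))) :
    -- (i) x ∈ (−∞,0)
    (∀ x : ℝ, x < 0 →
        (φp x).re < (φp 0).re ∧ (φm x).re < (φm 0).re ∧
        (φp x).im = -π ∧ (φm x).im = π)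
    -- (ii) x ∈ [0,a)
    ∧ (∀ x : ℝ, 0 ≤ x → x < a →
        (φp x).re < 0 ∧ (φm x).re < 0 ∧
        (φp x).im = -((1 - x/c) * π) ∧ (φm x).im = (1 - x/c) * π)
    -- (iii) values at a and b
    ∧ (φp a = -(((1:ℂ) - (a:ℂ)/(c:ℂ)) * (Real.pi : ℂ) * Complex.I) ∧
       φm a = ((1:ℂ) - (a:ℂ)/(c:ℂ)) * (Real.pi : ℂ) * Complex.I ∧
       φp b = -((1/(c:ℂ)) * (1 - (b:ℂ)) * (Real.pi : ℂ) * Complex.I) ∧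
       φm b = (1/(c:ℂ)) * (1 - (b:ℂ)) * (Real.pi : ℂ) * Complex.I)
    -- (iv) x ∈ (a,b)
    ∧ (∀ x : ℝ, a < x → x < b →
        (φp x).re = 0 ∧ (φm x).re = 0 ∧
        (φp x).arg = -(π/2) ∧ (φm x).arg = π/2)
    -- (v) x ∈ (b,1)
    ∧ (∀ x : ℝ, b < x → x < 1 →
        (φp x).re < 0 ∧ (φm x).re < 0 ∧
        (φp x).im = -((1 - x) * π / c) ∧ (φm x).im = (1 - x) * π / c)
    -- (vi) x ∈ (1,+∞): φ(x) real and φ(x) < φ(1) < 0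
    ∧ (∀ x : ℝ, 1 < x →
        (φ (x:ℂ)).im = 0 ∧ (φ (x:ℂ)).re < (φ (1:ℂ)).re ∧ (φ (1:ℂ)).re < 0) := by
  have hc : c ∈ Ioo (0:ℝ) 1 := ⟨hc0, hc1⟩
  have hpi := Real.pi_pos
  have hw : 0 < √(1 - c ^ 2) := Real.sqrt_pos.2 (by nlinarith)
  have hw2 : √(1 - c ^ 2) ^ 2 = 1 - c ^ 2 := Real.sq_sqrt (by nlinarith)
  have hw1 : √(1 - c ^ 2) < 1 := by nlinarith
  have ha0 : 0 < a := by rw [ha]; linarith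
  have hab : a < b := by rw [ha, hb]; linarith
  have hb1 : b < 1 := by rw [hb]; linarith
  have hμ : ∀ s ∈ Ioo (0:ℝ) 1, μ s = eqDensity c s := by
    intro s hs
    rcases le_or_gt s a with h | h
    · rw [hμout s (Or.inl ⟨hs.1.le, h⟩), eqDensity_saturated hs hc]
      rw [abs_of_nonpos (by linarith)]; linarith
    rcases le_or_gt b s with h' | h'
    · rw [hμout s (Or.inr ⟨h', hs.2.le⟩), eqDensity_saturated hs hc]
      rw [abs_of_nonneg (by linarith)]; linarith
    · exact hμab s h h'
  have hl' : l / 2 = logPotential c a := by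
    rw [hl, mul_div_cancel_left₀ _ two_ne_zero, intervalIntegral.integral_of_le zero_le_one,
      integral_Ioc_eq_integral_Ioo, logPotential]
    exact setIntegral_congr_fun measurableSet_Ioo fun s hs => by simp only [hμ s hs]
  have hφ' : ∀ z, φ z = (logPotential c a : ℂ) -
      ∫ s in Ioo (0:ℝ) 1, (eqDensity c s : ℂ) * Complex.log (z - s) := by
    intro z
    rw [hφ, hg, ← hl', intervalIntegral.integral_of_le zero_le_one, integral_Ioc_eq_integral_Ioo,
      setIntegral_congr_fun measurableSet_Ioo
        (fun s hs => by simp only [hμ s hs] : EqOn (fun s : ℝ => (μ s : ℂ) * Complex.log (z - s))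
          (fun s : ℝ => (eqDensity c s : ℂ) * Complex.log (z - s)) (Ioo 0 1))]
    push_cast; rfl
  have hp : ∀ x, φp x = (logPotential c a - logPotential c x : ℝ) -
      (π * massRight c x : ℝ) * Complex.I := by
    intro x
    refine tendsto_nhds_unique (hφp x) ?_
    simp_rw [hφ']
    convert! (tendsto_complexPotential hc0 x).const_sub (logPotential c a : ℂ) using 2
    push_cast; ring
  have hm : ∀ x, φm x = (logPotential c a - logPotential c x : ℝ) +
      (π * massRight c x : ℝ) * Complex.I := by
    intro x
    have h1 : φm x = (starRingEnd ℂ) (φp x) := by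
      refine tendsto_nhds_unique (hφm x) ?_
      refine ((Complex.continuous_conj.tendsto _).comp (hφp x)).congr' ?_
      filter_upwards [self_mem_nhdsWithin] with ε hε
      rw [Function.comp_apply, hφ', hφ', complexPotential_conj c x ε hε, map_sub,
        Complex.conj_ofReal]
    rw [h1, hp]; simp
  have hpre : ∀ x, (φp x).re = logPotential c a - logPotential c x := by intro x; simp [hp]
  have hmre : ∀ x, (φm x).re = logPotential c a - logPotential c x := by intro x; simp [hm]
  have hpim : ∀ x, (φp x).im = -(π * massRight c x) := by intro x; simp [hp]
  have hmim : ∀ x, (φm x).im = π * massRight c x := by intro x; simp [hm]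
  have habs_a : |a - 1 / 2| ≤ √(1 - c ^ 2) / 2 := by
    rw [abs_le]; constructor <;> linarith
  have hout : ∀ x, x < a ∨ b < x → logPotential c a < logPotential c x := by
    rintro x h
    refine logPotential_lt_of_outside hc habs_a ?_
    rw [lt_abs]
    rcases h with h | h
    · right; linarith
    · left; linarith
  have hin : ∀ x, a ≤ x → x ≤ b → logPotential c x = logPotential c a := by
    intro x h1 h2
    refine mul_left_cancel₀ hc0.ne' ?_
    rw [logPotential_inside hc habs_a, logPotential_inside hc]
    rw [abs_le]; constructor <;> linarith
  have hcC : (c : ℂ) ≠ 0 := by exact_mod_cast hc0.ne'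
  refine ⟨fun x hx => ?_, fun x hx0 hxa => ?_, ⟨?_, ?_, ?_, ?_⟩, fun x hxa hxb => ?_,
    fun x hxb hx1 => ?_, fun x hx => ?_⟩
  · have h : logPotential c 0 < logPotential c x := by
      refine logPotential_lt_of_log_lt hc0 fun s hs => ?_
      rw [abs_of_nonpos (by linarith [hs.1]), abs_of_nonpos (by linarith [hs.1])]
      exact Real.log_lt_log (by linarith [hs.1]) (by linarith)
    rw [hpre, hpre, hmre, hmre, hpim, hmim, massRight_nonpos hc hx.le]
    refine ⟨?_, ?_, ?_, ?_⟩ <;> linarith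
  · have h := hout x (Or.inl hxa)
    rw [hpre, hmre, hpim, hmim, massRight_left hc hx0 (by linarith)]
    refine ⟨?_, ?_, ?_, ?_⟩ <;> linarith
  · rw [hp, massRight_left hc ha0.le ha.le]; push_cast; ring
  · rw [hm, massRight_left hc ha0.le ha.le]; push_cast; ring
  · rw [hp, massRight_right hc hb1.le hb.ge, hin b hab.le le_rfl]; push_cast; ring
  · rw [hm, massRight_right hc hb1.le hb.ge, hin b hab.le le_rfl]; push_cast; ring
  · have hM := massRight_pos hc0 (x := x) ⟨by linarith, by linarith⟩
    have h := hin x hxa.le hxb.le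
    refine ⟨by rw [hpre, h, sub_self], by rw [hmre, h, sub_self], ?_, ?_⟩
    · rw [Complex.arg_eq_neg_pi_div_two_iff, hpre, hpim, h]
      exact ⟨sub_self _, by have := mul_pos hpi hM; linarith⟩
    · rw [Complex.arg_eq_pi_div_two_iff, hmre, hmim, h]
      exact ⟨sub_self _, mul_pos hpi hM⟩
  · have h := hout x (Or.inr hxb)
    rw [hpre, hmre, hpim, hmim, massRight_right hc hx1.le (by linarith)]
    refine ⟨by linarith, by linarith, by ring, by ring⟩
  · have hreal : ∀ y : ℝ, 1 ≤ y → φ (y : ℂ) = (logPotential c a - logPotential c y : ℝ) := by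
      intro y hy
      rw [hφ', complexPotential_real hy]; push_cast; rfl
    have h1 := hreal 1 le_rfl
    rw [Complex.ofReal_one] at h1
    rw [h1, hreal x hx.le, Complex.ofReal_im, Complex.ofReal_re, Complex.ofReal_re]
    have h2 := hout 1 (Or.inr hb1)
    have h3 : logPotential c 1 < logPotential c x := by
      refine logPotential_lt_of_log_lt hc0 fun s hs => ?_
      rw [abs_of_nonneg (by linarith [hs.2]), abs_of_nonneg (by linarith [hs.2])]
      exact Real.log_lt_log (by linarith [hs.2]) (by linarith)
    exact ⟨rfl, by linarith, by linarith⟩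
end

section
/- For every x ∈ (a,b), the boundary values of ν on the interval (a,b) satisfy lim_{ε→0⁺} ν(x + iε) = +πi(μ(x) − 1/c) and lim_{ε→0⁺} ν(x − iε) = −πi(μ(x) − 1/c); equivalently, ν_±(x) = ∓(2i/c)·arccos(c/(2√(x−x²))). -/
/-!
On approaching `x ∈ (a, b)` from the half-plane of sign `σ = ±1`, the product
`(z - a) ^ (1/2) * (z - b) ^ (1/2)` tends to `σ i s` with `s = √(x - a) √(b - x)`: the first factor is
continuous at `x`, and in the second the sign of the imaginary part decides on which side of its
cut the square root is evaluated (`cpow_half_of_im`). Since `a + b = 1` and `a b = c² / 4`, we have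
`(c / 2)² + s² = x - x²`, so `c / 2 - σ i s` has modulus `√(x - x²)` and argument
`-σ arccos (c / (2 √(x - x²)))` (`log_half_sub`). Its real part is positive, so the logarithm is
continuous there; the modulus part cancels against `log (z - z²) / c`, leaving
`-σ (2 i / c) arccos (c / (2 √(x - x²)))`. The form with `μ` is `arcsin = π / 2 - arccos`.
-/

open Complex Real Filter Topology

/-- The square root near its cut, written through the square root of `-w`, which is continuous
there. -/
lemma cpow_half_of_im (σ : ℝ) (hσ : σ = 1 ∨ σ = -1) (w : ℂ) (hw : 0 < σ * w.im) :
    w ^ ((1:ℂ)/2) = (σ : ℂ) * Complex.I * (-w) ^ ((1:ℂ)/2) := by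
  have hw0 : w ≠ 0 := by
    rintro rfl
    simp at hw
  have hlog : Complex.log w = Complex.log (-w) + σ * π * Complex.I := by
    rcases hσ with rfl | rfl
    · have h : 0 < w.im := by linarith
      simp only [Complex.log, norm_neg, Complex.arg_neg_eq_arg_sub_pi_of_im_pos h]
      push_cast
      ring
    · have h : w.im < 0 := by linarith
      simp only [Complex.log, norm_neg, Complex.arg_neg_eq_arg_add_pi_of_im_neg h]
      push_cast
      ring
  have hI : Complex.exp (π / 2 * Complex.I) = Complex.I := by
    rw [Complex.exp_mul_I, Complex.cos_pi_div_two, Complex.sin_pi_div_two]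
    simp
  rw [Complex.cpow_def_of_ne_zero hw0, Complex.cpow_def_of_ne_zero (neg_ne_zero.mpr hw0), hlog,
    add_mul, Complex.exp_add, mul_comm]
  congr 1
  rcases hσ with rfl | rfl
  · have : ((1 : ℝ) : ℂ) * π * Complex.I * (1 / 2) = π / 2 * Complex.I := by
      push_cast
      ring
    rw [this, hI]
    simp
  · have : ((-1 : ℝ) : ℂ) * π * Complex.I * (1 / 2) = -(π / 2 * Complex.I) := by
      push_cast
      ring
    rw [this, Complex.exp_neg, hI]
    simp

/-- Polar form of `c / 2 - σ i s`, the modulus being `√R` with `R = (c / 2)² + s²`. -/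
lemma log_half_sub (σ : ℝ) (hσ : σ = 1 ∨ σ = -1) (c s R : ℝ) (hc : 0 < c) (hs : 0 ≤ s)
    (hR : c ^ 2 / 4 + s ^ 2 = R) :
    Complex.log ((c:ℂ)/2 - σ * Complex.I * s) =
      ((Real.log R / 2 : ℝ) : ℂ) - σ * Complex.I * (Real.arccos (c / (2 * √R)) : ℂ) := by
  have hR0 : 0 < R := by rw [← hR]; positivity
  have hq : 0 < √R := Real.sqrt_pos.mpr hR0
  have hq2 : √R ^ 2 = R := Real.sq_sqrt hR0.le
  have hle : c / (2 * √R) ≤ 1 := by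
    rw [div_le_one (by positivity)]
    nlinarith [sq_nonneg s]
  have hge : 0 < c / (2 * √R) := by positivity
  set θ := Real.arccos (c / (2 * √R)) with hθ
  have hcos : √R * Real.cos θ = c / 2 := by
    rw [hθ, Real.cos_arccos (by linarith) hle]
    field_simp
  have hθ0 : 0 ≤ θ := Real.arccos_nonneg _
  have hθ1 : θ < π := by
    have := Real.arccos_lt_pi_div_two.mpr hge
    linarith [Real.pi_pos]
  have hsin : √R * Real.sin θ = s := by
    have h0 : 0 ≤ Real.sin θ := Real.sin_nonneg_of_nonneg_of_le_pi hθ0 hθ1.le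
    rw [← sq_eq_sq₀ (by positivity) hs]
    have := Real.sin_sq_add_cos_sq θ
    have h3 : (√R * Real.cos θ) ^ 2 = (c / 2) ^ 2 := by rw [hcos]
    nlinarith
  have hexp : Complex.exp (((Real.log R / 2 : ℝ) : ℂ) - σ * Complex.I * (θ : ℂ)) =
      (c:ℂ)/2 - σ * Complex.I * s := by
    have h1 : ((Real.log R / 2 : ℝ) : ℂ) - σ * Complex.I * (θ : ℂ) =
        ((Real.log R / 2 : ℝ) : ℂ) + ((-σ * θ : ℝ) : ℂ) * Complex.I := by
      push_cast
      ring
    have h2 : Real.exp (Real.log R / 2) = √R := by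
      rw [← Real.log_sqrt hR0.le, Real.exp_log hq]
    have h3 : Real.cos (-σ * θ) = Real.cos θ := by
      rcases hσ with rfl | rfl <;> simp
    have h4 : Real.sin (-σ * θ) = -σ * Real.sin θ := by
      rcases hσ with rfl | rfl <;> simp
    rw [h1, Complex.exp_add, Complex.exp_mul_I, ← Complex.ofReal_exp, h2, ← Complex.ofReal_cos,
      ← Complex.ofReal_sin, h3, h4, ← hsin]
    have : (c : ℂ) / 2 = ((√R * Real.cos θ : ℝ) : ℂ) := by rw [hcos]; push_cast; rfl
    rw [this]
    push_cast
    ring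
  rw [← hexp]
  apply Complex.log_exp
  · rcases hσ with rfl | rfl <;> simp <;> linarith [Real.pi_pos]
  · rcases hσ with rfl | rfl <;> simp <;> linarith [Real.pi_pos]

/-- The boundary value from the half-plane of sign `σ`, with the two properties of the endpoints
that matter: `a + b = 1` and `a b = c² / 4`. -/
lemma tendsto_nu_side (σ : ℝ) (hσ : σ = 1 ∨ σ = -1) (c a b x : ℝ) (hc : 0 < c)
    (hadd : a + b = 1) (hmul : a * b = c ^ 2 / 4) (hax : a < x) (hxb : x < b) :
    Tendsto (fun ε : ℝ => (2/(c:ℂ)) * Complex.log ((c:ℂ)/2 -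
        ((x + σ * (ε * Complex.I) : ℂ) - (a:ℂ)) ^ ((1:ℂ)/2) *
        ((x + σ * (ε * Complex.I) : ℂ) - (b:ℂ)) ^ ((1:ℂ)/2))
        - (1/(c:ℂ)) * Complex.log ((x + σ * (ε * Complex.I) : ℂ) -
          (x + σ * (ε * Complex.I) : ℂ) ^ 2)) (𝓝[>] 0)
      (𝓝 (-(σ * ((2 * Complex.I/(c:ℂ)) * (Real.arccos (c / (2 * √(x - x ^ 2))) : ℂ))))) := by
  have hzc : Continuous (fun ε : ℝ => (x + σ * (ε * Complex.I) : ℂ)) := by fun_prop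
  have hz : Tendsto (fun ε : ℝ => (x + σ * (ε * Complex.I) : ℂ)) (𝓝[>] 0) (𝓝 (x : ℂ)) := by
    have := hzc.tendsto 0
    simp only [Complex.ofReal_zero, zero_mul, mul_zero, add_zero] at this
    exact this.mono_left nhdsWithin_le_nhds
  set s := √(x - a) * √(b - x) with hs
  have hs2 : s ^ 2 = (x - a) * (b - x) := by
    rw [hs, mul_pow, Real.sq_sqrt (by linarith), Real.sq_sqrt (by linarith)]
  have hR : c ^ 2 / 4 + s ^ 2 = x - x ^ 2 := by
    rw [hs2]
    linear_combination (-1) * hmul + x * hadd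
  have hR0 : 0 < x - x ^ 2 := by rw [← hR]; positivity
  have hsqrt : ∀ r : ℝ, 0 < r → (r : ℂ) ^ ((1:ℂ)/2) = ((√r : ℝ) : ℂ) := by
    intro r hr
    rw [Real.sqrt_eq_rpow, Complex.ofReal_cpow hr.le]
    norm_num
  have hA : Tendsto (fun ε : ℝ => ((x + σ * (ε * Complex.I) : ℂ) - (a:ℂ)) ^ ((1:ℂ)/2)) (𝓝[>] 0)
      (𝓝 ((√(x - a) : ℝ) : ℂ)) := by
    rw [← hsqrt _ (by linarith)]
    push_cast
    refine (hz.sub_const _).cpow tendsto_const_nhds ?_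
    left
    simpa using hax
  have hB : Tendsto (fun ε : ℝ => ((x + σ * (ε * Complex.I) : ℂ) - (b:ℂ)) ^ ((1:ℂ)/2)) (𝓝[>] 0)
      (𝓝 (σ * Complex.I * ((√(b - x) : ℝ) : ℂ))) := by
    have h : Tendsto (fun ε : ℝ => σ * Complex.I *
        (-((x + σ * (ε * Complex.I) : ℂ) - (b:ℂ))) ^ ((1:ℂ)/2)) (𝓝[>] 0)
        (𝓝 (σ * Complex.I * ((√(b - x) : ℝ) : ℂ))) := by
      refine Tendsto.const_mul _ ?_
      rw [← hsqrt _ (by linarith)]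
      have e : ((b - x : ℝ) : ℂ) = -((x : ℂ) - b) := by push_cast; ring
      rw [e]
      refine (hz.sub_const _).neg.cpow tendsto_const_nhds ?_
      left
      simpa using hxb
    refine h.congr' ?_
    filter_upwards [self_mem_nhdsWithin] with ε hε
    have hε' : 0 < ε := hε
    refine (cpow_half_of_im σ hσ _ ?_).symm
    rcases hσ with rfl | rfl <;> simpa using hε'
  have hlog1 := ((hA.mul hB).const_sub ((c:ℂ)/2)).clog (by
    left
    have : ((√(x - a) : ℝ) : ℂ) * (σ * Complex.I * ((√(b - x) : ℝ) : ℂ)) =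
        ((σ * s : ℝ) : ℂ) * Complex.I := by
      rw [hs]; push_cast; ring
    rw [this]
    simpa using hc)
  have hlog2 := (hz.sub (hz.pow 2)).clog (by
    have : (x : ℂ) - (x : ℂ) ^ 2 = ((x - x ^ 2 : ℝ) : ℂ) := by push_cast; rfl
    rw [this]
    exact Complex.ofReal_mem_slitPlane.mpr hR0)
  have key := (hlog1.const_mul (2/(c:ℂ))).sub (hlog2.const_mul (1/(c:ℂ)))
  convert key using 2
  have e1 : ((√(x - a) : ℝ) : ℂ) * (σ * Complex.I * ((√(b - x) : ℝ) : ℂ)) =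
      σ * Complex.I * (s : ℂ) := by
    rw [hs]; push_cast; ring
  have e2 : (x : ℂ) - (x : ℂ) ^ 2 = ((x - x ^ 2 : ℝ) : ℂ) := by push_cast; rfl
  rw [e1, e2, ← Complex.ofReal_log hR0.le, log_half_sub σ hσ c s _ hc (by positivity) hR]
  push_cast
  ring

/-- boundary values of `ν` on `(a,b)`:
`ν_±(x) = ±πi(μ(x) − 1/c) = ∓(2i/c)·arccos(c/(2√(x−x²)))`. -/
theorem nu_boundary_values
    (c : ℝ) (hc0 : 0 < c) (hc1 : c < 1)
    (a b : ℝ)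
    (ha : a = (1 - Real.sqrt (1 - c ^ 2)) / 2)
    (hb : b = (1 + Real.sqrt (1 - c ^ 2)) / 2)
    (μ : ℝ → ℝ)
    (hμab : ∀ x, a < x → x < b →
      μ x = (2 / (π * c)) * Real.arcsin (c / (2 * Real.sqrt (x - x ^ 2))))
    (ν : ℂ → ℂ)
    (hν : ∀ z, ν z =
      (2/(c:ℂ)) * Complex.log ((c:ℂ)/2 - (z - (a:ℂ)) ^ ((1:ℂ)/2) * (z - (b:ℂ)) ^ ((1:ℂ)/2))
        - (1/(c:ℂ)) * Complex.log (z - z ^ 2))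
    (x : ℝ) (hax : a < x) (hxb : x < b) :
    Tendsto (fun ε : ℝ => ν (↑x + ↑ε * Complex.I)) (𝓝[>] 0)
      (𝓝 ((Real.pi : ℂ) * Complex.I * ((μ x : ℂ) - 1/(c:ℂ)))) ∧
    Tendsto (fun ε : ℝ => ν (↑x - ↑ε * Complex.I)) (𝓝[>] 0)
      (𝓝 (-((Real.pi : ℂ) * Complex.I * ((μ x : ℂ) - 1/(c:ℂ))))) ∧
    (Real.pi : ℂ) * Complex.I * ((μ x : ℂ) - 1/(c:ℂ))
      = -((2 * Complex.I/(c:ℂ)) * (Real.arccos (c / (2 * Real.sqrt (x - x ^ 2))) : ℂ)) := by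
  have hsq : √(1 - c ^ 2) ^ 2 = 1 - c ^ 2 := Real.sq_sqrt (by nlinarith)
  have hadd : a + b = 1 := by rw [ha, hb]; ring
  have hmul : a * b = c ^ 2 / 4 := by
    rw [ha, hb]
    linear_combination (-1 / 4) * hsq
  have heq : (Real.pi : ℂ) * Complex.I * ((μ x : ℂ) - 1/(c:ℂ))
      = -((2 * Complex.I/(c:ℂ)) * (Real.arccos (c / (2 * Real.sqrt (x - x ^ 2))) : ℂ)) := by
    have hcC : (c : ℂ) ≠ 0 := by exact_mod_cast hc0.ne'
    have hpi : (π : ℂ) ≠ 0 := by exact_mod_cast Real.pi_ne_zero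
    rw [hμab x hax hxb, Real.arccos]
    push_cast
    field_simp
    ring
  refine ⟨?_, ?_, heq⟩
  · rw [heq]
    simpa [hν] using tendsto_nu_side 1 (Or.inl rfl) c a b x hc0 hadd hmul hax hxb
  · rw [heq]
    simpa [hν, sub_eq_add_neg] using
      tendsto_nu_side (-1) (Or.inr rfl) c a b x hc0 hadd hmul hax hxb
end

section
/- For every z in the open upper half-plane, φ*(z) = φ̃(z) + πi(1/c − 1), and for every z in the open lower half-plane, φ*(z) = φ̃(z) − πi(1/c − 1). -/
/-!
On the open upper half-plane both `φ*` and `φ̃` are primitives of `ν`, so each of them differs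
from one fixed explicit primitive `G` by a constant, read off from the boundary value of `G` at
the point where the function vanishes. Hence `φ* - φ̃ = G(a) - G(b)`.

With `w = z - 1/2` and `S = ((z-a)(z-b))^{1/2}`, so that `S² = w² - (b-a)²/4` and
`z - z² = (c/2 - S)(c/2 + S)`, one finds `S' = w/S` and `ν' = -w/(S(z - z²))`. Integration by
parts then gives
`G = w ν - (1/2c) (log (S - c w) - log (S + c w)) - log (w + S)`.
In the upper half-plane `Im w ≤ Im S` (`im_le_im_of_sq_eq`), so all three logarithms are taken of
points of the upper half-plane; as principal logarithms they extend continuously to the nonzero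
reals from above (`tendsto_log_of_im_pos`). At `a` and `b` one has `S = 0` and `ν = 0`, and the
difference `G(a) - G(b)` collects only the jumps `log (-x) - log x = πi`, `x > 0`, which add up to
`πi/c - πi`.

The lower half-plane follows by conjugation, since `ν (conj z) = conj (ν z)` off the real line.
-/

open Complex Real Filter Topology Set

namespace PhiShift

/-- The branch of `((z-a)(z-b))^{1/2}` appearing in `ν`: the product of the two principal roots. -/
noncomputable def S (a b : ℝ) (z : ℂ) : ℂ :=
  (z - (a:ℂ)) ^ ((1:ℂ)/2) * (z - (b:ℂ)) ^ ((1:ℂ)/2)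

/-- The function `ν` of the statement, with its parameters explicit. -/
noncomputable def nu (c a b : ℝ) (z : ℂ) : ℂ :=
  (2/(c:ℂ)) * Complex.log ((c:ℂ)/2 - S a b z) - (1/(c:ℂ)) * Complex.log (z - z ^ 2)

/-- A primitive of `ν` on the upper half-plane. -/
noncomputable def G (c a b : ℝ) (z : ℂ) : ℂ :=
  (z - 1/2) * nu c a b z
    - 1/(2*(c:ℂ)) * (Complex.log (S a b z - c * (z - 1/2)) - Complex.log (S a b z + c * (z - 1/2)))
    - Complex.log (z - 1/2 + S a b z)

/-! ### The branch of the square root -/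

lemma cpow_half_sq (x : ℂ) : (x ^ ((1:ℂ)/2)) ^ 2 = x := by
  rw [one_div]
  exact Complex.cpow_nat_inv_pow x (n := 2) two_ne_zero

/-- The principal square root maps the upper half-plane into the open first quadrant. -/
lemma cpow_half_quadrant {x : ℂ} (hx : 0 < x.im) :
    0 < (x ^ ((1:ℂ)/2)).re ∧ 0 < (x ^ ((1:ℂ)/2)).im := by
  have hx0 : x ≠ 0 := by rintro rfl; simp at hx
  have h1 : 0 < x.arg := by
    rcases (Complex.arg_nonneg_iff.2 hx.le).lt_or_eq with h | h
    · exact h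
    · have := (Complex.arg_eq_zero_iff.1 h.symm).2
      linarith
  have h2 : x.arg ≤ Real.pi := Complex.arg_le_pi x
  have hne : x.arg ≠ Real.pi := fun h => by
    have := (Complex.arg_eq_pi_iff.1 h).2
    linarith
  have h3 : x.arg < Real.pi := lt_of_le_of_ne h2 hne
  have him : (Complex.log x * ((1:ℂ)/2)).im = x.arg / 2 := by
    rw [show ((1:ℂ)/2) = (((1/2:ℝ)):ℂ) by push_cast; rfl, Complex.im_mul_ofReal, Complex.log_im]
    ring
  rw [Complex.cpow_def_of_ne_zero hx0, Complex.exp_re, Complex.exp_im, him]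
  constructor
  · exact mul_pos (Real.exp_pos _) (Real.cos_pos_of_mem_Ioo ⟨by linarith, by linarith⟩)
  · exact mul_pos (Real.exp_pos _) (Real.sin_pos_of_mem_Ioo ⟨by linarith, by linarith⟩)

lemma S_sq (a b : ℝ) (z : ℂ) : S a b z ^ 2 = (z - a) * (z - b) := by
  rw [S, mul_pow, cpow_half_sq, cpow_half_sq]

lemma S_im_pos (a b : ℝ) {z : ℂ} (hz : 0 < z.im) : 0 < (S a b z).im := by
  obtain ⟨h1, h2⟩ := cpow_half_quadrant (x := z - a) (by simpa using hz)
  obtain ⟨h3, h4⟩ := cpow_half_quadrant (x := z - b) (by simpa using hz)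
  rw [S, Complex.mul_im]
  positivity

lemma S_ne_zero (a b : ℝ) {z : ℂ} (hz : 0 < z.im) : S a b z ≠ 0 := by
  intro h
  have := S_im_pos a b hz
  rw [h] at this
  simp at this

lemma hasDerivAt_S {a b : ℝ} (hab : a + b = 1) {z : ℂ} (hz : 0 < z.im) :
    HasDerivAt (S a b) ((z - 1/2) / S a b z) z := by
  have hd : DifferentiableAt ℂ (S a b) z := by
    unfold S
    apply DifferentiableAt.mul
    · exact DifferentiableAt.cpow_const (by fun_prop)
        (Complex.mem_slitPlane_iff.2 (Or.inr (by simpa using hz.ne')))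
    · exact DifferentiableAt.cpow_const (by fun_prop)
        (Complex.mem_slitPlane_iff.2 (Or.inr (by simpa using hz.ne')))
  have h1 := hd.hasDerivAt.pow 2
  have h2 : HasDerivAt (fun z : ℂ => (z - a) * (z - b)) (1 * (z - b) + (z - a) * 1) z :=
    ((hasDerivAt_id z).sub_const (a:ℂ)).mul ((hasDerivAt_id z).sub_const (b:ℂ))
  have h3 : (S a b) ^ 2 = fun z : ℂ => (z - a) * (z - b) := funext fun z => S_sq a b z
  rw [h3] at h1
  have h4 := h1.unique h2
  have habc : (a:ℂ) + b = 1 := by exact_mod_cast hab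
  have h5 : deriv (S a b) z = (z - 1/2) / S a b z := by
    rw [eq_div_iff (S_ne_zero a b hz)]
    norm_num at h4
    linear_combination h4 / 2 - habc / 2
  rw [← h5]
  exact hd.hasDerivAt

/-- If `S² = w² - r` with `r > 0` and both `S` and `w` lie above the real line, then `S` lies at
least as high as `w`. -/
lemma im_le_im_of_sq_eq {S w : ℂ} {r : ℝ} (hr : 0 < r) (hS : 0 < S.im) (hw : 0 < w.im)
    (h : S ^ 2 = w ^ 2 - r) : w.im ≤ S.im := by
  have hre := congrArg Complex.re h
  have him := congrArg Complex.im h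
  simp only [pow_two, Complex.mul_re, Complex.mul_im, Complex.sub_re, Complex.sub_im,
    Complex.ofReal_re, Complex.ofReal_im] at hre him
  by_contra! hlt
  have h1 : S.re * S.im = w.re * w.im := by linarith
  have h2 : S.re ^ 2 * S.im ^ 2 = w.re ^ 2 * w.im ^ 2 := by
    rw [← mul_pow, ← mul_pow, h1]
  have h3 : S.im ^ 2 < w.im ^ 2 := by nlinarith
  have h4 : S.re ^ 2 < w.re ^ 2 := by nlinarith
  nlinarith [sq_nonneg S.re, sq_nonneg w.re, pow_pos hS 2, pow_pos hw 2]

/-! ### Conjugation symmetry of `ν` -/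

lemma log_conj_symm {x : ℂ} (hx : x ∈ Complex.slitPlane) :
    Complex.log ((starRingEnd ℂ) x) = (starRingEnd ℂ) (Complex.log x) :=
  Complex.log_conj _ (Complex.slitPlane_arg_ne_pi hx)

lemma z_sub_sq_mem {z : ℂ} (hz : 0 < z.im) : z - z ^ 2 ∈ Complex.slitPlane := by
  rw [Complex.mem_slitPlane_iff]
  simp only [pow_two, Complex.mul_re, Complex.mul_im, Complex.sub_re, Complex.sub_im]
  by_cases h : z.re = 1/2
  · left
    rw [h]
    nlinarith
  · right
    intro h0
    apply h
    have : z.im * (1 - 2 * z.re) = 0 := by linarith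
    rcases mul_eq_zero.1 this with h | h <;> linarith

lemma mem_slit_of_im {x : ℂ} (hx : x.im ≠ 0) : x ∈ Complex.slitPlane :=
  Complex.mem_slitPlane_iff.2 (Or.inr hx)

lemma half_sub_S_mem (c a b : ℝ) {z : ℂ} (hz : 0 < z.im) :
    (c:ℂ)/2 - S a b z ∈ Complex.slitPlane := by
  apply mem_slit_of_im
  have := S_im_pos a b hz
  have h : ((c:ℂ)/2).im = 0 := by
    rw [show (c:ℂ)/2 = ((c/2:ℝ):ℂ) by push_cast; rfl, Complex.ofReal_im]
  rw [Complex.sub_im, h]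
  linarith

lemma cpow_half_conj {x : ℂ} (hx : 0 < x.im) :
    ((starRingEnd ℂ) x) ^ ((1:ℂ)/2) = (starRingEnd ℂ) (x ^ ((1:ℂ)/2)) := by
  have h := Complex.conj_cpow x ((1:ℂ)/2) (Complex.slitPlane_arg_ne_pi (mem_slit_of_im hx.ne'))
  rw [h, map_div₀, map_one, Complex.conj_ofNat]

lemma nu_conj (c a b : ℝ) {z : ℂ} (hz : 0 < z.im) :
    nu c a b ((starRingEnd ℂ) z) = (starRingEnd ℂ) (nu c a b z) := by
  have h1 : S a b ((starRingEnd ℂ) z) = (starRingEnd ℂ) (S a b z) := by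
    have ha := cpow_half_conj (x := z - a) (by simpa using hz)
    have hb := cpow_half_conj (x := z - b) (by simpa using hz)
    simp only [map_sub, Complex.conj_ofReal] at ha hb
    rw [S, S, map_mul, ha, hb]
  have h2 := log_conj_symm (half_sub_S_mem c a b hz)
  have h3 := log_conj_symm (z_sub_sq_mem hz)
  simp only [map_sub, map_div₀, map_pow, Complex.conj_ofReal, Complex.conj_ofNat] at h2 h3
  simp only [nu, map_sub, map_mul, map_div₀, map_one, Complex.conj_ofReal, Complex.conj_ofNat]
  rw [h1, h2, h3]

/-! ### The primitive `G` on the upper half-plane -/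

/-- The standing relations between `a`, `b` and `c`. -/
structure Params (c a b : ℝ) : Prop where
  c_pos : 0 < c
  c_lt : c < 1
  lt : a < b
  add : a + b = 1
  mul : 4 * (a * b) = c ^ 2

variable {c a b : ℝ}

lemma S_sq' (h : Params c a b) (z : ℂ) :
    S a b z ^ 2 = (z - 1/2) ^ 2 - ((((b - a) / 2) ^ 2 : ℝ) : ℂ) := by
  have h1 : (a:ℂ) + b = 1 := by exact_mod_cast h.add
  rw [S_sq]
  push_cast
  have : (b:ℂ) = 1 - a := by linear_combination h1
  rw [this]
  ring

lemma im_w_le (h : Params c a b) {z : ℂ} (hz : 0 < z.im) : z.im ≤ (S a b z).im := by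
  have := im_le_im_of_sq_eq (S := S a b z) (w := z - 1/2) (r := ((b - a) / 2) ^ 2)
    (by have := h.lt; have : 0 < (b - a) / 2 := by linarith
        positivity) (S_im_pos a b hz) (by simpa using hz) (S_sq' h z)
  simpa using this

lemma im_sub_pos (h : Params c a b) {z : ℂ} (hz : 0 < z.im) :
    0 < (S a b z - c * (z - 1/2)).im := by
  have h1 := im_w_le h hz
  have : (S a b z - c * (z - 1/2)).im = (S a b z).im - c * z.im := by simp
  rw [this]
  nlinarith [h.c_lt]

lemma im_add_pos (h : Params c a b) {z : ℂ} (hz : 0 < z.im) :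
    0 < (S a b z + c * (z - 1/2)).im := by
  have h1 := S_im_pos a b hz
  have : (S a b z + c * (z - 1/2)).im = (S a b z).im + c * z.im := by simp
  rw [this]
  nlinarith [mul_pos h.c_pos hz]

lemma im_w_add_pos (a b : ℝ) {z : ℂ} (hz : 0 < z.im) : 0 < (z - 1/2 + S a b z).im := by
  have h1 := S_im_pos a b hz
  have : (z - 1/2 + S a b z).im = z.im + (S a b z).im := by simp
  rw [this]
  linarith

/-- The derivative of `ν` is algebraic, because `z - z² = (c/2 - S)(c/2 + S)`. -/
lemma hasDerivAt_nu (h : Params c a b) {z : ℂ} (hz : 0 < z.im) :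
    HasDerivAt (nu c a b) (-(z - 1/2) / (S a b z * (z - z ^ 2))) z := by
  have hS := hasDerivAt_S h.add hz
  have h1 := (hS.const_sub ((c:ℂ)/2)).clog (half_sub_S_mem c a b hz)
  have h2 := ((hasDerivAt_id z).sub ((hasDerivAt_id z).pow 2)).clog (z_sub_sq_mem hz)
  have h3 := (h1.const_mul (2/(c:ℂ))).sub (h2.const_mul (1/(c:ℂ)))
  refine h3.congr_deriv ?_
  have hc : (c:ℂ) ≠ 0 := by exact_mod_cast h.c_pos.ne'
  have hS0 := S_ne_zero a b hz
  have h4 := Complex.slitPlane_ne_zero (half_sub_S_mem c a b hz)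
  have h5 := Complex.slitPlane_ne_zero (z_sub_sq_mem hz)
  have hsum : (a:ℂ) + b = 1 := by exact_mod_cast h.add
  have hprod : 4 * ((a:ℂ) * b) = c ^ 2 := by exact_mod_cast h.mul
  have hsq : z - z ^ 2 = ((c:ℂ)/2 - S a b z) * ((c:ℂ)/2 + S a b z) := by
    linear_combination hprod / 4 - z * hsum + S_sq a b z
  rw [hsq] at h5
  have h6 := (mul_ne_zero_iff.1 h5).2
  simp only [id, Pi.sub_apply, Pi.pow_apply]
  rw [hsq]
  generalize S a b z = s at *
  have hX : (c:ℂ) = (c/2 - s) + (c/2 + s) := by ring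
  have hY : 2 * s = (c/2 + s) - (c/2 - s) := by ring
  generalize (c:ℂ)/2 - s = X at *
  generalize (c:ℂ)/2 + s = Y at *
  generalize (c:ℂ) = k at *
  field_simp
  push_cast
  linear_combination (2 * z - 1) * (hX + hY)

lemma hasDerivAt_G (h : Params c a b) {z : ℂ} (hz : 0 < z.im) :
    HasDerivAt (G c a b) (nu c a b z) z := by
  have hS := hasDerivAt_S h.add hz
  have hw := (hasDerivAt_id z).sub_const (1/2 : ℂ)
  have e1 := hw.mul (hasDerivAt_nu h hz)
  have e2 := (hS.sub (hw.const_mul (c:ℂ))).clog (mem_slit_of_im (im_sub_pos h hz).ne')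
  have e3 := (hS.add (hw.const_mul (c:ℂ))).clog (mem_slit_of_im (im_add_pos h hz).ne')
  have e4 := (hw.add hS).clog (mem_slit_of_im (im_w_add_pos a b hz).ne')
  have e5 := (e1.sub ((e2.sub e3).const_mul (1/(2*(c:ℂ))))).sub e4
  refine e5.congr_deriv ?_
  have hc : (c:ℂ) ≠ 0 := by exact_mod_cast h.c_pos.ne'
  have hS0 := S_ne_zero a b hz
  have n1 := Complex.slitPlane_ne_zero (mem_slit_of_im (im_sub_pos h hz).ne')
  have n2 := Complex.slitPlane_ne_zero (mem_slit_of_im (im_add_pos h hz).ne')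
  have n3 := Complex.slitPlane_ne_zero (mem_slit_of_im (im_w_add_pos a b hz).ne')
  have n4 := Complex.slitPlane_ne_zero (z_sub_sq_mem hz)
  have hsum : (a:ℂ) + b = 1 := by exact_mod_cast h.add
  have hprod : 4 * ((a:ℂ) * b) = c ^ 2 := by exact_mod_cast h.mul
  have hsq := S_sq a b z
  have hsq' : S a b z ^ 2 = (z - 1/2) ^ 2 - (1 - c ^ 2) / 4 := by
    linear_combination hsq + hprod / 4 - z * hsum
  have hc2 : (1:ℂ) - c ^ 2 ≠ 0 := by
    have : (1:ℝ) - c ^ 2 ≠ 0 := by nlinarith [h.c_pos, h.c_lt]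
    exact_mod_cast this
  simp only [id, Pi.sub_apply, Pi.add_apply]
  generalize S a b z = s at *
  generalize nu c a b z = v at *
  obtain ⟨w, rfl⟩ : ∃ w, z = w + 1/2 := ⟨z - 1/2, by ring⟩
  simp only [add_sub_cancel_right] at *
  have hz2 : w + 1/2 - (w + 1/2) ^ 2 = 1/4 - w ^ 2 := by ring
  rw [hz2] at n4 ⊢
  have k1 : w * (-w / (s * (1/4 - w ^ 2))) = 1 / s - 1 / (4 * s * (1/4 - w ^ 2)) := by
    obtain ⟨D, hD⟩ : ∃ D, D = 1/4 - w ^ 2 := ⟨_, rfl⟩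
    rw [← hD] at n4 ⊢
    field_simp
    linear_combination (-4) * hD
  have k2 : (w / s - c * 1) / (s - c * w) - (w / s + c * 1) / (s + c * w)
      = - (2 * c) / (4 * s * (1/4 - w ^ 2)) := by
    have n5 : (s - c * w) * (s + c * w) = - (1 - c ^ 2) * (1/4 - w ^ 2) := by
      linear_combination hsq'
    have : (w / s - c * 1) / (s - c * w) - (w / s + c * 1) / (s + c * w)
      = (2 * c * (w ^ 2 - s ^ 2)) / (s * ((s - c * w) * (s + c * w))) := by
      rw [div_sub_div _ _ n1 n2, div_eq_div_iff (mul_ne_zero n1 n2)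
        (mul_ne_zero hS0 (mul_ne_zero n1 n2))]
      field_simp
      ring
    rw [this, n5, hsq', div_eq_div_iff (by
      refine mul_ne_zero hS0 (mul_ne_zero (neg_ne_zero.2 hc2) n4)) (by
      refine mul_ne_zero (mul_ne_zero (by norm_num) hS0) n4)]
    ring
  have k3 : (1 + w / s) / (w + s) = 1 / s := by
    field_simp
    ring
  rw [k1, k2, k3]
  field_simp
  ring

/-! ### Boundary values at `a` and `b` -/

/-- The principal logarithm extends continuously from the upper half-plane to the nonzero reals. -/
lemma tendsto_log_of_im_pos {p : ℂ} {f : ℂ → ℂ} {x : ℝ} (hx : x ≠ 0)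
    (hf : Tendsto f (𝓝[{z : ℂ | 0 < z.im}] p) (𝓝 (x:ℂ)))
    (hpos : ∀ z : ℂ, 0 < z.im → 0 < (f z).im) :
    Tendsto (fun z => Complex.log (f z)) (𝓝[{z : ℂ | 0 < z.im}] p) (𝓝 (Complex.log x)) := by
  have hcont : ContinuousWithinAt Complex.log {z : ℂ | 0 ≤ z.im} (x:ℂ) := by
    rcases lt_or_gt_of_ne hx with h | h
    · exact Complex.continuousWithinAt_log_of_re_neg_of_im_zero (by simpa using h) (by simp)
    · exact (continuousAt_clog (Complex.mem_slitPlane_iff.2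
        (Or.inl (by simpa using h)))).continuousWithinAt
  refine Tendsto.comp hcont (tendsto_nhdsWithin_iff.2 ⟨hf, ?_⟩)
  filter_upwards [self_mem_nhdsWithin] with z hz using (hpos z hz).le

lemma tendsto_S (U : Set ℂ) {p : ℝ} (hp : p = a ∨ p = b) :
    Tendsto (S a b) (𝓝[U] (p:ℂ)) (𝓝 0) := by
  rw [tendsto_zero_iff_norm_tendsto_zero]
  have h1 : ∀ z, ‖S a b z‖ = Real.sqrt ‖(z - a) * (z - b)‖ := by
    intro z
    rw [← S_sq, norm_pow, Real.sqrt_sq (norm_nonneg _)]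
  simp only [h1]
  have h2 : Continuous fun z : ℂ => Real.sqrt ‖(z - a) * (z - b)‖ := by fun_prop
  have h3 := (h2.tendsto (p:ℂ)).mono_left (nhdsWithin_le_nhds (s := U))
  rcases hp with rfl | rfl <;> simpa using h3

/-- `ν` vanishes at both branch points. -/
lemma tendsto_nu (h : Params c a b) (U : Set ℂ) {p : ℝ} (hp : p = a ∨ p = b) :
    Tendsto (nu c a b) (𝓝[U] (p:ℂ)) (𝓝 0) := by
  have hc := h.c_pos
  have hpp : p - p ^ 2 = (c / 2) ^ 2 := by
    have h1 := h.add
    have h2 := h.mul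
    rcases hp with rfl | rfl
    · obtain rfl : b = 1 - p := by linarith
      linarith
    · obtain rfl : a = 1 - p := by linarith
      linarith
  have hppc : (p:ℂ) - (p:ℂ) ^ 2 = ((c / 2 : ℝ) : ℂ) ^ 2 := by exact_mod_cast hpp
  have hS := tendsto_S U hp
  have t1 : Tendsto (fun z => Complex.log ((c:ℂ)/2 - S a b z)) (𝓝[U] (p:ℂ))
      (𝓝 (Complex.log ((c:ℂ)/2 - 0))) := by
    refine (tendsto_const_nhds.sub hS).clog ?_
    rw [sub_zero, show (c:ℂ)/2 = ((c/2:ℝ):ℂ) by push_cast; rfl]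
    exact Complex.ofReal_mem_slitPlane.2 (by linarith)
  have t2 : Tendsto (fun z : ℂ => Complex.log (z - z ^ 2)) (𝓝[U] (p:ℂ))
      (𝓝 (Complex.log ((p:ℂ) - (p:ℂ) ^ 2))) := by
    have : Continuous fun z : ℂ => z - z ^ 2 := by fun_prop
    refine ((this.tendsto (p:ℂ)).mono_left nhdsWithin_le_nhds).clog ?_
    rw [hppc, ← Complex.ofReal_pow]
    exact Complex.ofReal_mem_slitPlane.2 (by positivity)
  have t3 := (t1.const_mul (2/(c:ℂ))).sub (t2.const_mul (1/(c:ℂ)))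
  have hz : (2/(c:ℂ)) * Complex.log ((c:ℂ)/2 - 0)
      - (1/(c:ℂ)) * Complex.log ((p:ℂ) - (p:ℂ) ^ 2) = 0 := by
    rw [hppc, sub_zero, show (c:ℂ)/2 = ((c/2:ℝ):ℂ) by push_cast; rfl, ← Complex.ofReal_pow,
      ← Complex.ofReal_log (by positivity), ← Complex.ofReal_log (by positivity), Real.log_pow]
    push_cast
    ring
  rw [hz] at t3
  exact t3

lemma tendsto_G (h : Params c a b) {p : ℝ} (hp : p = a ∨ p = b) :
    Tendsto (G c a b) (𝓝[{z : ℂ | 0 < z.im}] (p:ℂ))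
      (𝓝 (- (1/(2*(c:ℂ)) * (Complex.log ((-(c * (p - 1/2)) : ℝ) : ℂ)
        - Complex.log ((c * (p - 1/2) : ℝ) : ℂ))) - Complex.log ((p - 1/2 : ℝ) : ℂ))) := by
  have hlt := h.lt
  have hadd := h.add
  have hp0 : p - 1/2 ≠ 0 := by
    rcases hp with rfl | rfl <;> intro h0 <;> linarith
  have hcp : c * (p - 1/2) ≠ 0 := mul_ne_zero h.c_pos.ne' hp0
  have hS := tendsto_S {z : ℂ | 0 < z.im} hp
  have hw : Tendsto (fun z : ℂ => z - 1/2) (𝓝[{z : ℂ | 0 < z.im}] (p:ℂ)) (𝓝 ((p:ℂ) - 1/2)) :=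
    ((continuous_id.sub continuous_const).tendsto (p:ℂ)).mono_left nhdsWithin_le_nhds
  have t0 := hw.mul (tendsto_nu h {z : ℂ | 0 < z.im} hp)
  have t1 := tendsto_log_of_im_pos (p := (p:ℂ)) (x := -(c * (p - 1/2))) (neg_ne_zero.2 hcp)
    (f := fun z => S a b z - c * (z - 1/2))
    (by convert hS.sub (hw.const_mul (c:ℂ)) using 2; push_cast; ring)
    (fun z hz => im_sub_pos h hz)
  have t2 := tendsto_log_of_im_pos (p := (p:ℂ)) (x := c * (p - 1/2)) hcp
    (f := fun z => S a b z + c * (z - 1/2))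
    (by convert hS.add (hw.const_mul (c:ℂ)) using 2; push_cast; ring)
    (fun z hz => im_add_pos h hz)
  have t3 := tendsto_log_of_im_pos (p := (p:ℂ)) (x := p - 1/2) hp0
    (f := fun z => z - 1/2 + S a b z)
    (by convert hw.add hS using 2; push_cast; ring)
    (fun z hz => im_w_add_pos a b hz)
  have t4 := (t0.sub ((t1.sub t2).const_mul (1/(2*(c:ℂ))))).sub t3
  rw [mul_zero, zero_sub] at t4
  exact t4

lemma log_neg_ofReal {x : ℝ} (hx : 0 < x) :
    Complex.log ((-x : ℝ) : ℂ) = Complex.log (x:ℂ) + Real.pi * Complex.I := by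
  rw [← Complex.ofReal_log hx.le, Complex.log, Complex.arg_ofReal_of_neg (by linarith),
    Complex.norm_real, norm_neg, Real.norm_of_nonneg hx.le]

/-! ### Comparison of primitives -/

/-- On the upper half-plane a primitive of `ν` is determined by its boundary value at `p`. -/
lemma primitive_eq (h : Params c a b) {p : ℝ} {g : ℂ} {f : ℂ → ℂ}
    (hf : ∀ z : ℂ, 0 < z.im → HasDerivAt f (nu c a b z) z)
    (hf0 : Tendsto f (𝓝[{z : ℂ | 0 < z.im}] (p:ℂ)) (𝓝 0))
    (hg : Tendsto (G c a b) (𝓝[{z : ℂ | 0 < z.im}] (p:ℂ)) (𝓝 g))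
    {z : ℂ} (hz : 0 < z.im) : f z = G c a b z - g := by
  have hd : ∀ z : ℂ, 0 < z.im → HasDerivAt (fun z => f z - G c a b z) 0 z := fun z hz =>
    ((hf z hz).sub (hasDerivAt_G h hz)).congr_deriv (sub_self _)
  obtain ⟨k, hk⟩ := IsOpen.exists_is_const_of_deriv_eq_zero (𝕜 := ℂ)
    (f := fun z => f z - G c a b z) (s := {z : ℂ | 0 < z.im})
    (isOpen_lt continuous_const Complex.continuous_im)
    (convex_halfSpace_im_gt 0).isPreconnected
    (fun z hz => (hd z hz).differentiableAt.differentiableWithinAt)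
    (fun z hz => (hd z hz).deriv)
  have hne : (𝓝[{z : ℂ | 0 < z.im}] (p:ℂ)).NeBot := by
    rw [← mem_closure_iff_nhdsWithin_neBot, Complex.closure_setOfPred_lt_im]
    simp
  have h1 : Tendsto (fun z => f z - G c a b z) (𝓝[{z : ℂ | 0 < z.im}] (p:ℂ)) (𝓝 k) := by
    refine tendsto_const_nhds.congr' ?_
    filter_upwards [self_mem_nhdsWithin] with z hz using (hk z hz).symm
  have h2 := tendsto_nhds_unique h1 (hf0.sub hg)
  have h3 := hk z hz
  rw [h2] at h3
  linear_combination h3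

/-- The shift formula on the upper half-plane, for any two primitives of `ν` there that vanish
at `a` and at `b` respectively. -/
lemma shift_upper (h : Params c a b) {ft fs : ℂ → ℂ}
    (hft : ∀ z : ℂ, 0 < z.im → HasDerivAt ft (nu c a b z) z)
    (hfta : Tendsto ft (𝓝[{z : ℂ | 0 < z.im}] (a:ℂ)) (𝓝 0))
    (hfs : ∀ z : ℂ, 0 < z.im → HasDerivAt fs (nu c a b z) z)
    (hfsb : Tendsto fs (𝓝[{z : ℂ | 0 < z.im}] (b:ℂ)) (𝓝 0))
    {z : ℂ} (hz : 0 < z.im) :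
    fs z = ft z + (Real.pi : ℂ) * Complex.I * (1/(c:ℂ) - 1) := by
  rw [primitive_eq h hft hfta (tendsto_G h (Or.inl rfl)) hz,
    primitive_eq h hfs hfsb (tendsto_G h (Or.inr rfl)) hz]
  have hlt := h.lt
  have hadd := h.add
  have hs : 0 < b - 1/2 := by linarith
  have hcs : 0 < c * (b - 1/2) := mul_pos h.c_pos hs
  have hc : (c:ℂ) ≠ 0 := by exact_mod_cast h.c_pos.ne'
  rw [show a - 1/2 = -(b - 1/2) by linarith, mul_neg, neg_neg, log_neg_ofReal hs,
    log_neg_ofReal hcs]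
  field_simp
  ring

/-- Conjugation carries a primitive of `ν` on the lower half-plane vanishing at the real point `p`
to one on the upper half-plane. -/
lemma conj_side {f : ℂ → ℂ} {p : ℝ}
    (hf : ∀ z : ℂ, z.im < 0 → HasDerivAt f (nu c a b z) z)
    (hf0 : Tendsto f (𝓝[{z : ℂ | z.im < 0}] (p:ℂ)) (𝓝 0)) :
    (∀ z : ℂ, 0 < z.im →
      HasDerivAt ((starRingEnd ℂ) ∘ f ∘ (starRingEnd ℂ)) (nu c a b z) z) ∧
    Tendsto ((starRingEnd ℂ) ∘ f ∘ (starRingEnd ℂ)) (𝓝[{z : ℂ | 0 < z.im}] (p:ℂ)) (𝓝 0) := by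
  constructor
  · intro z hz
    have h1 := (hf ((starRingEnd ℂ) z) (by simpa using hz)).conj_conj
    rw [nu_conj c a b hz] at h1
    simpa using h1
  · have h1 : Tendsto (starRingEnd ℂ) (𝓝[{z : ℂ | 0 < z.im}] (p:ℂ))
        (𝓝[{z : ℂ | z.im < 0}] (p:ℂ)) := by
      refine tendsto_nhdsWithin_iff.2 ⟨?_, ?_⟩
      · have := (Complex.continuous_conj.tendsto (p:ℂ)).mono_left
          (nhdsWithin_le_nhds (s := {z : ℂ | 0 < z.im}))
        rwa [Complex.conj_ofReal] at this
      · filter_upwards [self_mem_nhdsWithin] with z hz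
        simpa using hz
    have h2 := Complex.continuous_conj.tendsto (0:ℂ)
    rw [map_zero] at h2
    exact h2.comp (hf0.comp h1)

end PhiShift


/-- `φ*(z) = φ̃(z) ± πi(1/c − 1)` for `z` in the open upper/lower half-plane,
where `φ̃` and `φ*` are the antiderivatives of `ν` on their respective domains,
vanishing at `a` resp. `b`. -/
theorem phi_star_eq_phi_tilde_shift
    (c : ℝ) (hc0 : 0 < c) (hc1 : c < 1)
    (a b : ℝ)
    (ha : a = (1 - Real.sqrt (1 - c ^ 2)) / 2)
    (hb : b = (1 + Real.sqrt (1 - c ^ 2)) / 2)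
    (ν : ℂ → ℂ)
    (hν : ∀ z, ν z =
      (2/(c:ℂ)) * Complex.log ((c:ℂ)/2 - (z - (a:ℂ)) ^ ((1:ℂ)/2) * (z - (b:ℂ)) ^ ((1:ℂ)/2))
        - (1/(c:ℂ)) * Complex.log (z - z ^ 2))
    (Dt Ds : Set ℂ)
    (hDt : Dt = {z : ℂ | ¬ (z.im = 0 ∧ (z.re ≤ 0 ∨ a ≤ z.re))})
    (hDs : Ds = {z : ℂ | ¬ (z.im = 0 ∧ (z.re ≤ b ∨ 1 ≤ z.re))})
    (φt φs : ℂ → ℂ)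
    (hφt : ∀ z ∈ Dt, HasDerivAt φt (ν z) z)
    (hφta : Tendsto φt (nhdsWithin (a:ℂ) Dt) (𝓝 0))
    (hφs : ∀ z ∈ Ds, HasDerivAt φs (ν z) z)
    (hφsb : Tendsto φs (nhdsWithin (b:ℂ) Ds) (𝓝 0)) :
    ∀ z : ℂ,
      (0 < z.im → φs z = φt z + (Real.pi : ℂ) * Complex.I * (1/(c:ℂ) - 1)) ∧
      (z.im < 0 → φs z = φt z - (Real.pi : ℂ) * Complex.I * (1/(c:ℂ) - 1)) := by
  have hs : 0 < Real.sqrt (1 - c ^ 2) := Real.sqrt_pos.2 (by nlinarith)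
  have hss : Real.sqrt (1 - c ^ 2) ^ 2 = 1 - c ^ 2 := Real.sq_sqrt (by nlinarith)
  have h : PhiShift.Params c a b :=
    { c_pos := hc0, c_lt := hc1
      lt := by rw [ha, hb]; linarith
      add := by rw [ha, hb]; ring
      mul := by rw [ha, hb]; linear_combination -hss }
  obtain rfl : ν = PhiShift.nu c a b := funext hν
  have mt : ∀ z : ℂ, z.im ≠ 0 → z ∈ Dt := fun z hz => by
    rw [hDt]; exact fun h0 => hz h0.1
  have ms : ∀ z : ℂ, z.im ≠ 0 → z ∈ Ds := fun z hz => by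
    rw [hDs]; exact fun h0 => hz h0.1
  intro z
  constructor
  · intro hz
    exact PhiShift.shift_upper h (fun z hz => hφt z (mt z hz.ne'))
      (hφta.mono_left (nhdsWithin_mono _ fun z hz => mt z (ne_of_gt hz)))
      (fun z hz => hφs z (ms z hz.ne'))
      (hφsb.mono_left (nhdsWithin_mono _ fun z hz => ms z (ne_of_gt hz))) hz
  · intro hz
    obtain ⟨t1, t2⟩ := PhiShift.conj_side (fun z hz => hφt z (mt z hz.ne))
      (hφta.mono_left (nhdsWithin_mono _ fun z hz => mt z (ne_of_lt hz)))
    obtain ⟨s1, s2⟩ := PhiShift.conj_side (fun z hz => hφs z (ms z hz.ne))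
      (hφsb.mono_left (nhdsWithin_mono _ fun z hz => ms z (ne_of_lt hz)))
    have hz' : 0 < ((starRingEnd ℂ) z).im := by simpa using hz
    have key := congrArg (starRingEnd ℂ) (PhiShift.shift_upper h t1 t2 s1 s2 hz')
    simp only [Function.comp_apply, Complex.conj_conj, map_add, map_mul, map_sub, map_div₀,
      map_one, Complex.conj_I, Complex.conj_ofReal] at key
    rw [key]
    ring
end

section
/- One has ∫_a^b (2/(πc))·arcsin(c/(2√(s − s²))) ds = 1 − 2a/c; consequently the equilibrium density μ satisfies the normalization ∫_0^1 μ(x) dx = 1. -/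
open Real MeasureTheory

/-!
With `r = √(1 - c²)` and `s = (1 + u) / 2`, the integral over `[a, b]` becomes half of
`∫_{-r}^{r} arcsin (c / √(1 - u²)) du`. Integrating by parts gives the elementary primitive
`F(u) = u arcsin (c / √(1 - u²)) + c arcsin (u / r) - arcsin (c u / (r √(1 - u²)))`,
which is continuous on `[-r, r]`, differentiable inside (`hahnPrimitive_hasDerivAt`) and odd, with
`F(r) = (π / 2) (r + c - 1)`. Since `c - 2 a = r + c - 1`, this is the first claim. On the two
outer intervals `μ` is the constant `1 / c`; each has length `a`, and they supply the missing
mass `2 a / c`.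
-/

/-- A primitive of `u ↦ arcsin (c / √(1 - u²))` on `[-r, r]`, where `c² + r² = 1`. -/
noncomputable def hahnPrimitive (c r u : ℝ) : ℝ :=
  u * arcsin (c / √(1 - u ^ 2)) + c * arcsin (u / r) - arcsin (c * u / (r * √(1 - u ^ 2)))

lemma hahnPrimitive_hasDerivAt {c r u : ℝ} (hr : 0 < r) (hcr : c ^ 2 + r ^ 2 = 1)
    (hu : u ^ 2 < r ^ 2) :
    HasDerivAt (hahnPrimitive c r) (arcsin (c / √(1 - u ^ 2))) u := by
  have hq2 : 0 < 1 - u ^ 2 := by nlinarith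
  have hw2 : 0 < r ^ 2 - u ^ 2 := by linarith
  have hQ : HasDerivAt (fun x : ℝ => √(1 - x ^ 2)) (-u / √(1 - u ^ 2)) u := by
    have h := ((hasDerivAt_pow 2 u).const_sub 1).sqrt hq2.ne'
    convert h using 1
    push_cast
    field_simp
  obtain ⟨q, hq⟩ : ∃ q, q = √(1 - u ^ 2) := ⟨_, rfl⟩
  -- The three arcsines have arguments with `√(1 - g²)` equal to `w / q`, `w / r`, `w / (r q)`.
  obtain ⟨w, hw⟩ : ∃ w, w = √(r ^ 2 - u ^ 2) := ⟨_, rfl⟩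
  have hq0 : 0 < q := hq ▸ sqrt_pos.2 hq2
  have hw0 : 0 < w := hw ▸ sqrt_pos.2 hw2
  have hqs : q ^ 2 = 1 - u ^ 2 := by rw [hq]; exact sq_sqrt hq2.le
  have hws : w ^ 2 = r ^ 2 - u ^ 2 := by rw [hw]; exact sq_sqrt hw2.le
  rw [← hq] at hQ
  -- If `1 - g² = k²` with `k > 0`, then `arcsin` has derivative `1 / k` at `g`.
  have key : ∀ g k : ℝ, 0 < k → 1 - g ^ 2 = k ^ 2 → HasDerivAt arcsin (1 / k) g := by
    intro g k hk h
    have h' := hasDerivAt_arcsin (x := g) (by rintro rfl; nlinarith) (by rintro rfl; nlinarith)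
    rwa [h, sqrt_sq hk.le] at h'
  have k1 := key (c / q) (w / q) (by positivity) (by
    field_simp; rw [hqs, hws]; linarith)
  have k2 := key (u / r) (w / r) (by positivity) (by
    field_simp; rw [hws])
  have k3 := key (c * u / (r * q)) (w / (r * q)) (by positivity) (by
    field_simp; rw [hqs, hws]
    linear_combination (-u ^ 2) * hcr)
  have d1 : HasDerivAt (fun x => c / √(1 - x ^ 2)) _ u :=
    (hasDerivAt_const u c).fun_div hQ (by rw [← hq]; exact hq0.ne')
  have d3 : HasDerivAt (fun x => c * x / (r * √(1 - x ^ 2))) _ u :=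
    ((hasDerivAt_id' u).const_mul c).fun_div (hQ.const_mul r) (by rw [← hq]; positivity)
  rw [hq] at k1 k3
  have e1 := k1.comp u d1
  have e2 := k2.comp u ((hasDerivAt_id' u).div_const r)
  have e3 := k3.comp u d3
  have h : HasDerivAt (hahnPrimitive c r) _ u :=
    (((hasDerivAt_id' u).mul e1).add (e2.const_mul c)).sub e3
  refine h.congr_deriv ?_
  simp only [Function.comp, ← hq]
  generalize arcsin (c / q) = A
  field_simp
  ring

lemma hahn_integrand_continuousOn {c r : ℝ} (hc : 0 < c) (hcr : c ^ 2 + r ^ 2 = 1) :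
    ContinuousOn (fun u : ℝ => arcsin (c / √(1 - u ^ 2))) (Set.Icc (-r) r) := by
  refine continuous_arcsin.comp_continuousOn (continuousOn_const.div (by fun_prop) ?_)
  intro u hu
  have : 0 < 1 - u ^ 2 := by nlinarith [hu.1, hu.2]
  exact (sqrt_pos.2 this).ne'

/-- The integral in the centred variable `u = 2 s - 1`, read off from the endpoint values of
`hahnPrimitive`. -/
lemma hahn_integral_centered {c r : ℝ} (hc : 0 < c) (hr : 0 < r) (hcr : c ^ 2 + r ^ 2 = 1) :
    ∫ u in (-r)..r, arcsin (c / √(1 - u ^ 2)) = π * (r + c - 1) := by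
  have hcont : ContinuousOn (hahnPrimitive c r) (Set.Icc (-r) r) := by
    unfold hahnPrimitive
    refine ((continuousOn_id.mul (hahn_integrand_continuousOn hc hcr)).add
      (Continuous.continuousOn (continuous_const.mul
        (continuous_arcsin.comp (continuous_id.div_const r))))).sub
      (continuous_arcsin.comp_continuousOn (ContinuousOn.div (by fun_prop) (by fun_prop) ?_))
    intro u hu
    have : 0 < 1 - u ^ 2 := by nlinarith [hu.1, hu.2]
    have := sqrt_pos.2 this
    positivity
  rw [intervalIntegral.integral_eq_sub_of_hasDerivAt_of_le (by linarith) hcont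
    (fun u hu => hahnPrimitive_hasDerivAt hr hcr (by nlinarith [hu.1, hu.2]))
    (ContinuousOn.intervalIntegrable (by
      rw [Set.uIcc_of_le (by linarith)]; exact hahn_integrand_continuousOn hc hcr))]
  have hs : √(1 - r ^ 2) = c := by
    rw [show 1 - r ^ 2 = c ^ 2 by linarith, sqrt_sq hc.le]
  have h1 : c * r / (r * c) = 1 := by field_simp
  have h2 : c * -r / (r * c) = -1 := by field_simp
  simp only [hahnPrimitive, neg_sq, hs, h1, h2, div_self hc.ne', div_self hr.ne', neg_div,
    arcsin_neg, arcsin_one]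
  ring

theorem hahn_equilibrium_measure_normalization
    (c : ℝ) (hc0 : 0 < c) (hc1 : c < 1)
    (a b : ℝ)
    (ha : a = (1 - Real.sqrt (1 - c ^ 2)) / 2)
    (hb : b = (1 + Real.sqrt (1 - c ^ 2)) / 2)
    (μ : ℝ → ℝ)
    (hμab : ∀ x, a < x → x < b →
      μ x = (2 / (π * c)) * Real.arcsin (c / (2 * Real.sqrt (x - x ^ 2))))
    (hμout : ∀ x, (0 ≤ x ∧ x ≤ a) ∨ (b ≤ x ∧ x ≤ 1) → μ x = 1 / c) :
    (∫ s in a..b, (2 / (π * c)) * Real.arcsin (c / (2 * Real.sqrt (s - s ^ 2)))) = 1 - 2 * a / c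
    ∧ (∫ x in (0:ℝ)..1, μ x) = 1 := by
  have hpos : 0 < 1 - c ^ 2 := by nlinarith
  obtain ⟨r, hr⟩ : ∃ r, r = √(1 - c ^ 2) := ⟨_, rfl⟩
  rw [← hr] at ha hb
  have hr0 : 0 < r := hr ▸ sqrt_pos.2 hpos
  have hcr : c ^ 2 + r ^ 2 = 1 := by rw [hr, sq_sqrt hpos.le]; ring
  have hr1 : r < 1 := by nlinarith
  have hsub : ∀ s : ℝ, 2 * √(s - s ^ 2) = √(1 - (2 * s - 1) ^ 2) := by
    intro s
    rw [show 1 - (2 * s - 1) ^ 2 = 2 ^ 2 * (s - s ^ 2) by ring, sqrt_mul (by norm_num),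
      sqrt_sq (by norm_num)]
  have first : (∫ s in a..b, (2 / (π * c)) * arcsin (c / (2 * √(s - s ^ 2))))
      = 1 - 2 * a / c := by
    simp only [hsub]
    rw [intervalIntegral.integral_const_mul,
      intervalIntegral.integral_comp_mul_sub (fun u => arcsin (c / √(1 - u ^ 2)))
        (two_ne_zero) 1,
      show 2 * a - 1 = -r by rw [ha]; ring, show 2 * b - 1 = r by rw [hb]; ring,
      hahn_integral_centered hc0 hr0 hcr, ha, smul_eq_mul]
    have := pi_pos
    field_simp
    ring
  refine ⟨first, ?_⟩
  have ha0 : 0 ≤ a := by linarith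
  have hab : a ≤ b := by linarith
  have hb1 : b ≤ 1 := by linarith
  have hmid_cont : ContinuousOn (fun s => (2 / (π * c)) * arcsin (c / (2 * √(s - s ^ 2))))
      (Set.uIcc a b) := by
    simp only [hsub]
    refine continuousOn_const.mul ((hahn_integrand_continuousOn hc0 hcr).comp
      (f := fun s : ℝ => 2 * s - 1) (by fun_prop) ?_)
    intro s hs
    rw [Set.uIcc_of_le hab] at hs
    constructor <;> linarith [hs.1, hs.2]
  -- At the endpoints `s - s² = c² / 4`, so both formulas for `μ` give `1 / c` there.
  have hend : ∀ s, (2 * s - 1) ^ 2 = r ^ 2 →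
      (2 / (π * c)) * arcsin (c / (2 * √(s - s ^ 2))) = 1 / c := by
    intro s hs
    rw [hsub, hs, show 1 - r ^ 2 = c ^ 2 by linarith, sqrt_sq hc0.le, div_self hc0.ne',
      arcsin_one]
    have := pi_pos
    field_simp
  have hmid : Set.EqOn (fun s => (2 / (π * c)) * arcsin (c / (2 * √(s - s ^ 2)))) μ
      (Set.uIcc a b) := by
    intro s hs
    rw [Set.uIcc_of_le hab] at hs
    rcases hs.1.eq_or_lt with h | h
    · rw [hμout s (Or.inl ⟨by linarith, h.ge⟩)]
      exact hend s (by rw [← h, ha]; ring)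
    rcases hs.2.eq_or_lt with h' | h'
    · rw [hμout s (Or.inr ⟨h'.ge, by linarith⟩)]
      exact hend s (by rw [h', hb]; ring)
    exact (hμab s h h').symm
  have hleft : Set.EqOn (fun _ => 1 / c) μ (Set.uIcc 0 a) := by
    intro s hs
    rw [Set.uIcc_of_le ha0] at hs
    exact (hμout s (Or.inl hs)).symm
  have hright : Set.EqOn (fun _ => 1 / c) μ (Set.uIcc b 1) := by
    intro s hs
    rw [Set.uIcc_of_le hb1] at hs
    exact (hμout s (Or.inr hs)).symm
  have i1 : IntervalIntegrable μ volume 0 a :=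
    (continuousOn_const.congr hleft.symm).intervalIntegrable
  have i2 : IntervalIntegrable μ volume a b :=
    (hmid_cont.congr hmid.symm).intervalIntegrable
  have i3 : IntervalIntegrable μ volume b 1 :=
    (continuousOn_const.congr hright.symm).intervalIntegrable
  rw [← intervalIntegral.integral_add_adjacent_intervals (i1.trans i2) i3,
    ← intervalIntegral.integral_add_adjacent_intervals i1 i2,
    ← intervalIntegral.integral_congr hleft, ← intervalIntegral.integral_congr hright,
    ← intervalIntegral.integral_congr hmid, first, intervalIntegral.integral_const,
    intervalIntegral.integral_const, smul_eq_mul, smul_eq_mul, ha, hb]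
  field_simp
  ring
end

section
/- For every z ∈ ℂ∖(−∞,b], with all logarithms and square roots taken as principal branches, ∫_a^b log(z−s)/(s·√((s−a)(b−s))) ds = −(4π/c)·log( (z + √(z−a)·√(z−b) + c/2) / ((√(z−a) + √(z−b))·z) ). -/
open Complex MeasureTheory

/-!
Put `r = (b - a) / 2`, so `4 r ^ 2 = 1 - c ^ 2`, and substitute `s = 1/2 + r cos t`, which turns the
integral into `∫₀^π log (z - s(t)) / s(t) dt`. With `u = √(z - a)`, `v = √(z - b)` and
`q = (u - v) / (u + v)`, a Joukowski factorization gives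
`z - s(t) = ((u + v) / 2) ^ 2 (1 - q e^{it}) (1 - q e^{-it})`, where `‖q‖ < 1` because `u` and `v`
lie in the right half-plane and their imaginary parts have the same sign. `log_factor` shows
that this identity passes to principal logarithms. Hence, with
`G w = log ((u + v) / 2) + log (1 - q w)`, the integral equals `∫₀^{2π} G (e^{it}) / s(t) dt`.

Up to the constant `2 / c`, `1 / s(t)` is the Poisson kernel at `x = -(1 - c) / (2 r)`, and `G` is
holomorphic on a neighbourhood of the closed unit disc, so Cauchy's formula
(`poisson_integral`) evaluates the integral as `(4π / c) G x`. Finally the quotient inside the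
logarithm of the claim is `exp (-G x)`, by the identity
`(z + u v + c / 2) (1 - q x) = 2 z`. Both `(u + v) / 2` and `1 - q x` have positive real part, so
`|Im (G x)| < π` and the principal logarithm of `exp (-G x)` is `-G x`.
-/

lemma sqrt_slit {w : ℂ} (hw : w ∈ slitPlane) :
    (w ^ ((1:ℂ)/2)) ^ 2 = w ∧ 0 < (w ^ ((1:ℂ)/2)).re := by
  have h0 : w ≠ 0 := slitPlane_ne_zero hw
  have e : w ^ ((1:ℂ)/2) = exp (log w / 2) := by
    rw [cpow_def_of_ne_zero h0]; congr 1; ring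
  rw [e]
  constructor
  · rw [← exp_nat_mul]
    rw [show ((2:ℕ):ℂ) * (log w / 2) = log w by push_cast; ring, exp_log h0]
  · rw [exp_re]
    have h2 : (log w / 2).im = arg w / 2 := by
      rw [show log w / 2 = log w / ((2:ℝ):ℂ) by norm_num, div_ofReal_im, log_im]
    rw [h2]
    have h3 := (mem_slitPlane_iff_arg.1 hw).1
    have h4 := neg_pi_lt_arg w
    have h5 : arg w < Real.pi := lt_of_le_of_ne (arg_le_pi w) h3
    exact mul_pos (Real.exp_pos _) (Real.cos_pos_of_mem_Ioo ⟨by linarith, by linarith⟩)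

/-- Equal imaginary parts of the squares force `u.im` and `v.im` to have the same sign, so that
`Re (u * conj v) > 0`. -/
lemma norm_sub_lt_norm_add {u v : ℂ} (hu : 0 < u.re) (hv : 0 < v.re)
    (h : (u ^ 2).im = (v ^ 2).im) : ‖u - v‖ < ‖u + v‖ := by
  have h1 : u.re * u.im = v.re * v.im := by
    simp [pow_two] at h; linarith
  have h2 : 0 ≤ u.im * v.im := by
    have : (u.re * v.re) * (u.im * v.im) = (v.re * v.im) ^ 2 := by
      linear_combination (v.re * v.im) * h1
    by_contra hneg
    push Not at hneg
    nlinarith [mul_pos hu hv, sq_nonneg (v.re * v.im)]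
  have h3 : ‖u - v‖ ^ 2 < ‖u + v‖ ^ 2 := by
    rw [← normSq_eq_norm_sq, ← normSq_eq_norm_sq, normSq_apply, normSq_apply]
    simp
    nlinarith [mul_pos hu hv]
  exact lt_of_pow_lt_pow_left₀ 2 (norm_nonneg _) h3

lemma abs_im_log_lt {w : ℂ} (h : 0 < w.re) : |(log w).im| < Real.pi / 2 := by
  rw [log_im]; exact abs_arg_lt_pi_div_two_iff.2 (Or.inl h)

lemma re_one_sub_pos {w : ℂ} (h : ‖w‖ < 1) : 0 < (1 - w).re := by
  have := (abs_le.1 (abs_re_le_norm w)).2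
  simp; linarith

lemma norm_mul_exp_lt {q : ℂ} (h : ‖q‖ < 1) (t : ℝ) : ‖q * exp (t * I)‖ < 1 := by
  rw [norm_mul, norm_exp_ofReal_mul_I, mul_one]; exact h

/-- The factorization `((u + v) / 2) ^ 2 * (1 - q e^{it}) * (1 - q e^{-it})`, with
`q = (u - v) / (u + v)`, at the level of principal logarithms. Halving both sides and exponentiating
gives two continuous functions of `t` with equal squares; they agree at `t = 0`, hence everywhere,
which rules out a sign. The remaining ambiguity `4πi n` is excluded by bounding imaginary parts. -/
lemma log_factor {u v : ℂ} (hu : 0 < u.re) (hv : 0 < v.re)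
    (hq : ‖(u - v) / (u + v)‖ < 1)
    (hs : ∀ t : ℝ, (u ^ 2 * (1 - Real.cos t) + v ^ 2 * (1 + Real.cos t)) / 2 ∈ slitPlane) (t : ℝ) :
    log ((u ^ 2 * (1 - Real.cos t) + v ^ 2 * (1 + Real.cos t)) / 2) =
      (log ((u + v) / 2) + log (1 - (u - v) / (u + v) * exp (t * I))) +
      (log ((u + v) / 2) + log (1 - (u - v) / (u + v) * exp ((-t : ℝ) * I))) := by
  set q := (u - v) / (u + v) with hqdef
  have huv : 0 < (u + v).re := by simp; linarith
  have huv0 : u + v ≠ 0 := fun h => by rw [h] at huv; simp at huv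
  have hv0 : v ≠ 0 := fun h => by rw [h] at hv; simp at hv
  have hp : 0 < ((u + v) / 2).re := by
    rw [show (u + v) / 2 = (u + v) / ((2:ℝ):ℂ) by norm_num, div_ofReal_re]; positivity
  have hp0 : (u + v) / 2 ≠ 0 := by simpa using huv0
  have hre : ∀ t : ℝ, 0 < (1 - q * exp (t * I)).re := fun t => re_one_sub_pos (norm_mul_exp_lt hq t)
  have hne : ∀ t : ℝ, 1 - q * exp (t * I) ≠ 0 := fun t h => by
    have := hre t; rw [h] at this; simp at this
  have hsl : ∀ t : ℝ, 1 - q * exp (t * I) ∈ slitPlane := fun t => Or.inl (hre t)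
  have hcont : Continuous fun t : ℝ => log (1 - q * exp (t * I)) :=
    Continuous.clog (by fun_prop) hsl
  let f : ℝ → ℂ := fun t => exp (log ((u ^ 2 * (1 - Real.cos t) + v ^ 2 * (1 + Real.cos t)) / 2) / 2)
  let g : ℝ → ℂ := fun t => exp (log ((u + v) / 2) +
    (log (1 - q * exp (t * I)) + log (1 - q * exp ((-t : ℝ) * I))) / 2)
  have hf : Continuous f := by
    refine continuous_exp.comp (Continuous.div_const (Continuous.clog ?_ hs) 2)
    fun_prop
  have hg : Continuous g := by
    have := hcont.comp continuous_neg
    exact continuous_exp.comp (continuous_const.add ((hcont.add this).div_const 2))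
  have hsq : Set.EqOn (f ^ 2) (g ^ 2) Set.univ := by
    intro t _
    simp only [Pi.pow_apply, f, g]
    rw [← exp_nat_mul, ← exp_nat_mul]
    rw [show ∀ x : ℂ, ((2:ℕ):ℂ) * (x / 2) = x by intro x; push_cast; ring,
      show ∀ x y w : ℂ, ((2:ℕ):ℂ) * (x + (y + w) / 2) = x + x + y + w by
        intro x y w; push_cast; ring,
      exp_add, exp_add, exp_add, exp_log hp0, exp_log (hne t), exp_log (hne (-t)),
      exp_log (slitPlane_ne_zero (hs t)), ofReal_cos, Complex.cos, ofReal_neg, hqdef]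
    have hE : exp (t * I) * exp (-t * I) = 1 := by
      rw [← exp_add]; simp
    have h2 : q * (u + v) = u - v := by rw [hqdef]; field_simp
    generalize exp (t * I) = A at *
    generalize exp (-t * I) = B at *
    rw [← hqdef]
    have : (u + v) / 2 * ((u + v) / 2) * (1 - q * A) * (1 - q * B) =
      ((u + v) - (u - v) * A) * ((u + v) - (u - v) * B) / 4 := by
      rw [← h2]; ring
    rw [this]
    linear_combination -((u - v) ^ 2) / 4 * hE
  have h0 : f 0 = g 0 := by
    have hpv : (u + v) / 2 * (1 - q) = v := by rw [hqdef]; field_simp; ring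
    have hq0 : 1 - q ≠ 0 := by simpa using hne 0
    have hl : log (v ^ 2) = 2 * log v := by
      have hb := abs_lt.1 (abs_im_log_lt hv)
      have : v ^ 2 = exp (2 * log v) := by
        rw [two_mul, exp_add, exp_log hv0, pow_two]
      rw [this, log_exp] <;> simp only [mul_im] <;> simp at hb ⊢ <;> linarith
    simp only [f, g]
    simp only [Real.cos_zero, ofReal_one, sub_self, mul_zero, zero_add, ofReal_zero, zero_mul,
      exp_zero, mul_one, neg_zero]
    rw [show v ^ 2 * (1 + 1) / 2 = v ^ 2 by ring, hl, mul_div_cancel_left₀ _ (two_ne_zero),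
      add_self_div_two, exp_add, exp_log hv0, exp_log hp0, exp_log hq0, hpv]
  have hfg := isPreconnected_univ.eq_of_sq_eq hf.continuousOn hg.continuousOn hsq
    (fun _ => exp_ne_zero _) (Set.mem_univ 0) h0 (Set.mem_univ t)
  simp only [f, g] at hfg
  obtain ⟨n, hn⟩ := exp_eq_exp_iff_exists_int.1 hfg
  have b1 := abs_lt.1 (abs_im_log_lt hp)
  have b2 := abs_lt.1 (abs_im_log_lt (hre t))
  have b3 := abs_lt.1 (abs_im_log_lt (hre (-t)))
  have b4 := neg_pi_lt_arg ((u ^ 2 * (1 - Real.cos t) + v ^ 2 * (1 + Real.cos t)) / 2)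
  have b5 := arg_le_pi ((u ^ 2 * (1 - Real.cos t) + v ^ 2 * (1 + Real.cos t)) / 2)
  rw [← log_im] at b4 b5
  generalize log ((u ^ 2 * (1 - Real.cos t) + v ^ 2 * (1 + Real.cos t)) / 2) = X at *
  generalize log ((u + v) / 2) = P at *
  generalize log (1 - q * exp (t * I)) = Y at *
  generalize log (1 - q * exp ((-t : ℝ) * I)) = Z at *
  have him : X.im = 2 * P.im + Y.im + Z.im + 4 * (n * Real.pi) := by
    have h : X = 2 * P + Y + Z + ((4 * (n * Real.pi) : ℝ) : ℂ) * I := by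
      push_cast; linear_combination 2 * hn
    rw [h]; simp
  have hn0 : n = 0 := by
    have h1 : (n : ℝ) < 1 := by
      by_contra hc; push Not at hc
      nlinarith [Real.pi_pos]
    have h2 : (-1 : ℝ) < n := by
      by_contra hc; push Not at hc
      nlinarith [Real.pi_pos]
    have h1' : n < 1 := by exact_mod_cast h1
    have h2' : -1 < n := by exact_mod_cast h2
    omega
  rw [hn0] at hn
  push_cast at hn
  linear_combination 2 * hn

lemma integral_symm_periodic {f : ℝ → ℂ} (hf : Continuous f)
    (hp : Function.Periodic f (2 * Real.pi)) :
    ∫ t in (0:ℝ)..Real.pi, (f t + f (-t)) = ∫ t in (0:ℝ)..(2 * Real.pi), f t := by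
  have hi : ∀ x y, IntervalIntegrable f volume x y := fun x y => hf.intervalIntegrable x y
  have hi' : ∀ x y, IntervalIntegrable (fun t => f (-t)) volume x y := fun x y =>
    (hf.comp continuous_neg).intervalIntegrable x y
  rw [intervalIntegral.integral_add (hi _ _) (hi' _ _),
    intervalIntegral.integral_comp_neg, add_comm, neg_zero,
    intervalIntegral.integral_add_adjacent_intervals (hi _ _) (hi _ _)]
  have := hp.intervalIntegral_add_eq (-Real.pi) 0
  rw [show -Real.pi + 2 * Real.pi = Real.pi by ring, zero_add] at this
  exact this

/-- The substitution `s = 1/2 + r cos t`; no integrability of `F` is needed, since the change of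
variables is an injective differentiable map on the open interval. -/
lemma integral_arcsine_subst {r : ℝ} (hr : 0 < r) (F : ℝ → ℂ) :
    ∫ s in (1/2 - r)..(1/2 + r), F s / (Real.sqrt ((s - (1/2 - r)) * ((1/2 + r) - s)) : ℂ) =
      ∫ t in (0:ℝ)..Real.pi, F (1/2 + r * Real.cos t) := by
  have himg : (fun t : ℝ => 1/2 + r * Real.cos t) '' Set.Ioo 0 Real.pi =
      Set.Ioo (1/2 - r) (1/2 + r) := by
    ext s
    constructor
    · rintro ⟨t, ⟨h0, h1⟩, rfl⟩
      have h2 : Real.cos t < 1 := by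
        have := Real.cos_lt_cos_of_nonneg_of_le_pi le_rfl h1.le h0
        simpa using this
      have h3 : -1 < Real.cos t := by
        have := Real.cos_lt_cos_of_nonneg_of_le_pi h0.le le_rfl h1
        simpa using this
      constructor <;> simp only <;> nlinarith
    · rintro ⟨h0, h1⟩
      have e1 : -1 < (s - 1/2) / r := by rw [lt_div_iff₀ hr]; linarith
      have e2 : (s - 1/2) / r < 1 := by rw [div_lt_iff₀ hr]; linarith
      refine ⟨Real.arccos ((s - 1/2) / r), ⟨Real.arccos_pos.2 e2, ?_⟩, ?_⟩
      · exact lt_of_le_of_ne (Real.arccos_le_pi _) fun h => by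
          rw [Real.arccos_eq_pi] at h; linarith
      · simp only
        rw [Real.cos_arccos e1.le e2.le]; field_simp; ring
  rw [intervalIntegral.integral_of_le (by linarith), intervalIntegral.integral_of_le Real.pi_pos.le,
    integral_Ioc_eq_integral_Ioo, integral_Ioc_eq_integral_Ioo, ← himg,
    integral_image_eq_integral_abs_deriv_smul (f' := fun t => r * (-Real.sin t)) measurableSet_Ioo
      (fun t _ => (((Real.hasDerivAt_cos t).const_mul r).const_add (1/2)).hasDerivWithinAt)]
  · refine setIntegral_congr_fun measurableSet_Ioo fun t ht => ?_
    have hsin : 0 < r * Real.sin t := mul_pos hr (Real.sin_pos_of_mem_Ioo ht)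
    rw [show (1/2 + r * Real.cos t - (1/2 - r)) * (1/2 + r - (1/2 + r * Real.cos t)) =
        (r * Real.sin t) ^ 2 by
      rw [mul_pow, Real.sin_sq]; ring, Real.sqrt_sq hsin.le, mul_neg, abs_neg, abs_of_pos hsin,
      real_smul, mul_div_cancel₀]
    exact_mod_cast hsin.ne'
  · intro x hx y hy hxy
    simp only at hxy
    exact Real.injOn_cos (Set.Ioo_subset_Icc_self hx) (Set.Ioo_subset_Icc_self hy)
      (mul_left_cancel₀ hr.ne' (by linarith))

/-- Poisson's formula at the point `x = -(1 - c) / (2r)`: on the unit circle `w = e^{it}`,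
`1/2 + r cos t = r (w - x) (w - y) / (2 w)` with `y = -(1 + c) / (2r)` outside the closed disc, so
Cauchy's formula applies to `G w / (w - y)`. -/
lemma poisson_integral {r c : ℝ} (hr : 0 < r) (hc0 : 0 < c) (hc1 : c < 1)
    (hrc : 4 * r ^ 2 = 1 - c ^ 2) {G : ℂ → ℂ}
    (hG : DifferentiableOn ℂ G (Metric.closedBall 0 1)) :
    ∫ t in (0:ℝ)..(2 * Real.pi), G (exp (t * I)) / ((1/2 + r * Real.cos t : ℝ) : ℂ) =
      4 * Real.pi / c * G ((-((1 - c) / (2 * r)) : ℝ) : ℂ) := by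
  set x : ℝ := -((1 - c) / (2 * r)) with hx
  set y : ℝ := -((1 + c) / (2 * r)) with hy
  have hxr : 2 * r * x = -(1 - c) := by rw [hx]; field_simp
  have hyr : 2 * r * y = -(1 + c) := by rw [hy]; field_simp
  have hr1 : 1 - c < 2 * r := by nlinarith
  have hr2 : 2 * r < 1 + c := by nlinarith
  have hxlt : -1 < x := by nlinarith
  have hx0 : x < 0 := by nlinarith
  have hylt : y < -1 := by nlinarith
  have hyne : ∀ w ∈ Metric.closedBall (0:ℂ) 1, w - y ≠ 0 := by
    intro w hw h
    rw [sub_eq_zero] at h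
    rw [h, mem_closedBall_zero_iff, norm_real, Real.norm_eq_abs] at hw
    have := (abs_le.1 hw).1
    linarith
  have hxb : (x : ℂ) ∈ Metric.ball (0:ℂ) 1 := by
    rw [mem_ball_zero_iff, norm_real, Real.norm_eq_abs, abs_lt]
    constructor <;> linarith
  have hd : DifferentiableOn ℂ (fun w => G w / (w - y)) (Metric.closedBall 0 1) :=
    hG.div (by fun_prop) hyne
  have hC := hd.circleIntegral_sub_inv_smul hxb
  have hxy : (r : ℂ) * (x - y) = c := by
    have : r * (x - y) = c := by linarith
    exact_mod_cast this
  have hrC : (r : ℂ) ≠ 0 := by exact_mod_cast hr.ne'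
  have hcC : (c : ℂ) ≠ 0 := by exact_mod_cast hc0.ne'
  have hxyC : (x : ℂ) - y ≠ 0 := fun h => by rw [h, mul_zero] at hxy; exact hcC hxy.symm
  have key : ∀ t : ℝ, G (exp (t * I)) / ((1/2 + r * Real.cos t : ℝ) : ℂ) =
      (2 / (I * r)) * (deriv (circleMap 0 1) t •
        ((circleMap 0 1 t - x)⁻¹ • (G (circleMap 0 1 t) / (circleMap 0 1 t - y)))) := by
    intro t
    rw [deriv_circleMap]
    have hcm : circleMap 0 1 t = exp (t * I) := by simp [circleMap]
    rw [hcm]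
    have hnorm : ‖exp (t * I)‖ = 1 := norm_exp_ofReal_mul_I t
    have hA0 : exp (t * I) ≠ 0 := exp_ne_zero _
    have hAy : exp (t * I) - y ≠ 0 := hyne _ (by simp [hnorm])
    have hAx : exp (t * I) - x ≠ 0 := fun h => by
      rw [sub_eq_zero] at h
      rw [← h, mem_ball_zero_iff, hnorm] at hxb
      exact lt_irrefl _ hxb
    have hE : exp (-t * I) = (exp (t * I))⁻¹ := by rw [neg_mul, exp_neg]
    have hs : ((1/2 + r * Real.cos t : ℝ) : ℂ) =
        r * (exp (t * I) - x) * (exp (t * I) - y) / (2 * exp (t * I)) := by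
      have h1 : (r : ℂ) * (x + y) = -1 := by
        have : r * (x + y) = -1 := by linarith
        exact_mod_cast this
      have h2 : (x : ℂ) * y = 1 := by
        have : x * y = 1 := by
          have h3 : (4 * r ^ 2) * (x * y) = (4 * r ^ 2) * 1 := by
            calc (4 * r ^ 2) * (x * y) = (2 * r * x) * (2 * r * y) := by ring
              _ = _ := by rw [hxr, hyr, hrc]; ring
          exact mul_left_cancel₀ (by positivity) h3
        exact_mod_cast this
      push_cast
      rw [Complex.cos, hE]
      field_simp
      linear_combination exp (t * I) * h1 - r * h2
    rw [hs, smul_eq_mul, smul_eq_mul]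
    have := I_ne_zero
    field_simp
  rw [intervalIntegral.integral_congr (fun t _ => key t), intervalIntegral.integral_const_mul]
  rw [circleIntegral] at hC
  rw [hC, smul_eq_mul, ← hxy]
  field_simp
  ring

/-- for `z ∈ ℂ∖(−∞,b]`, with principal branches,
`∫_a^b log(z−s)/(s·√((s−a)(b−s))) ds
  = −(4π/c)·log((z + √(z−a)·√(z−b) + c/2)/((√(z−a) + √(z−b))·z))`. -/
theorem log_integral_sqrt_weight_over_s
    (c : ℝ) (hc0 : 0 < c) (hc1 : c < 1)
    (a b : ℝ)
    (ha : a = (1 - Real.sqrt (1 - c ^ 2)) / 2)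
    (hb : b = (1 + Real.sqrt (1 - c ^ 2)) / 2)
    (z : ℂ) (hz : ¬ (z.im = 0 ∧ z.re ≤ b)) :
    (∫ s in a..b, Complex.log (z - s) / ((s : ℂ) * (Real.sqrt ((s - a) * (b - s)) : ℂ)))
      = -(4 * (Real.pi : ℂ) / (c : ℂ)) *
        Complex.log ((z + (z - (a:ℂ)) ^ ((1:ℂ)/2) * (z - (b:ℂ)) ^ ((1:ℂ)/2) + (c:ℂ)/2) /
          (((z - (a:ℂ)) ^ ((1:ℂ)/2) + (z - (b:ℂ)) ^ ((1:ℂ)/2)) * z)) := by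
  obtain ⟨r, hrdef⟩ : ∃ r, r = Real.sqrt (1 - c ^ 2) / 2 := ⟨_, rfl⟩
  have hr : 0 < r := by
    rw [hrdef]; exact half_pos (Real.sqrt_pos.2 (by nlinarith))
  have hrc : 4 * r ^ 2 = 1 - c ^ 2 := by
    rw [hrdef, div_pow, Real.sq_sqrt (by nlinarith)]; ring
  obtain rfl : a = 1/2 - r := by rw [ha, hrdef]; ring
  obtain rfl : b = 1/2 + r := by rw [hb, hrdef]; ring
  have hr2 : 2 * r < 1 := by nlinarith
  have hslit : ∀ s : ℝ, s ≤ 1/2 + r → z - s ∈ slitPlane := by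
    intro s hs
    rw [mem_slitPlane_iff]
    by_contra h
    push Not at h
    simp at h
    exact hz ⟨h.2, by linarith⟩
  obtain ⟨hu2, hu⟩ := sqrt_slit (hslit (1/2 - r) (by linarith))
  obtain ⟨hv2, hv⟩ := sqrt_slit (hslit (1/2 + r) le_rfl)
  set u := (z - ((1/2 - r : ℝ) : ℂ)) ^ ((1:ℂ)/2)
  set v := (z - ((1/2 + r : ℝ) : ℂ)) ^ ((1:ℂ)/2)
  have hz0 : z ≠ 0 := by
    have := slitPlane_ne_zero (hslit 0 (by linarith)); simpa using this
  have huv : 0 < (u + v).re := by simp; linarith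
  have huv0 : u + v ≠ 0 := fun h => by rw [h] at huv; simp at huv
  have hp : 0 < ((u + v) / 2).re := by
    rw [show (u + v) / 2 = (u + v) / ((2:ℝ):ℂ) by norm_num, div_ofReal_re]; positivity
  have hp0 : (u + v) / 2 ≠ 0 := by simpa using huv0
  have hq : ‖(u - v) / (u + v)‖ < 1 := by
    rw [norm_div, div_lt_one (norm_pos_iff.2 huv0)]
    exact norm_sub_lt_norm_add hu hv (by rw [hu2, hv2]; simp)
  have hzs : ∀ t : ℝ, z - ((1/2 + r * Real.cos t : ℝ) : ℂ) =
      (u ^ 2 * (1 - Real.cos t) + v ^ 2 * (1 + Real.cos t)) / 2 := by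
    intro t; rw [hu2, hv2]; push_cast; ring
  have hlog := log_factor hu hv hq (fun t => by
    rw [← hzs]; exact hslit _ (by nlinarith [Real.cos_le_one t]))
  set q := (u - v) / (u + v) with hqdef
  let G : ℂ → ℂ := fun w => log ((u + v) / 2) + log (1 - q * w)
  have hqw : ∀ w ∈ Metric.closedBall (0:ℂ) 1, 0 < (1 - q * w).re := by
    intro w hw
    refine re_one_sub_pos ?_
    rw [mem_closedBall_zero_iff] at hw
    rw [norm_mul]
    nlinarith [norm_nonneg q, norm_nonneg w]
  have hG : DifferentiableOn ℂ G (Metric.closedBall 0 1) := by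
    refine (differentiableOn_const _).add (DifferentiableOn.clog (by fun_prop) ?_)
    exact fun w hw => Or.inl (hqw w hw)
  have hspos : ∀ t : ℝ, 1/2 + r * Real.cos t ≠ 0 := fun t => by
    nlinarith [Real.neg_one_le_cos t]
  have hint : (∫ s in (1/2 - r)..(1/2 + r),
      log (z - s) / ((s : ℂ) * (Real.sqrt ((s - (1/2 - r)) * (1/2 + r - s)) : ℂ))) =
      4 * Real.pi / c * G ((-((1 - c) / (2 * r)) : ℝ) : ℂ) := by
    rw [← poisson_integral hr hc0 hc1 hrc hG, ← integral_symm_periodic]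
    · rw [← intervalIntegral.integral_congr (fun s _ => div_div (log (z - s)) (s : ℂ)
        (Real.sqrt ((s - (1/2 - r)) * (1/2 + r - s)) : ℂ)),
        integral_arcsine_subst hr (fun s => log (z - s) / (s : ℂ))]
      refine intervalIntegral.integral_congr fun t _ => ?_
      rw [hzs, hlog, Real.cos_neg, ← add_div]
    · refine Continuous.div ?_ (by fun_prop) (fun t => by exact_mod_cast hspos t)
      exact hG.continuousOn.comp_continuous (by fun_prop) (fun t => by simp [norm_exp_ofReal_mul_I])
    · intro t
      simp only
      rw [Real.cos_add_two_pi, ofReal_add, add_mul, exp_add]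
      push_cast
      rw [exp_two_pi_mul_I, mul_one]
  rw [hint]
  set x : ℝ := -((1 - c) / (2 * r)) with hx
  have hxr : 2 * r * x = -(1 - c) := by rw [hx]; field_simp
  have hr1 : 1 - c < 2 * r := by nlinarith
  have hxb : (x : ℂ) ∈ Metric.closedBall (0:ℂ) 1 := by
    rw [mem_closedBall_zero_iff, norm_real, Real.norm_eq_abs, abs_le]
    constructor <;> nlinarith
  have hX := hqw _ hxb
  have hX0 : 1 - q * x ≠ 0 := fun h => by rw [h] at hX; simp at hX
  have hW : (z + u * v + c / 2) / ((u + v) * z) = exp (-(G x)) := by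
    rw [exp_neg, exp_add, exp_log hp0, exp_log hX0]
    have hrC : (r : ℂ) ≠ 0 := by exact_mod_cast hr.ne'
    have hrcC : 4 * (r : ℂ) ^ 2 = 1 - c ^ 2 := by exact_mod_cast hrc
    have hxrC : 2 * (r : ℂ) * x = -(1 - c) := by exact_mod_cast hxr
    have h1c : (1 + c : ℂ) ≠ 0 := by
      have : (1 + c : ℝ) ≠ 0 := by linarith
      exact_mod_cast this
    have h1c' : (1 - c : ℂ) ≠ 0 := by
      have : (1 - c : ℝ) ≠ 0 := by linarith
      exact_mod_cast this
    push_cast at hu2 hv2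
    have hq1 : 2 * r * q = 2 * z - 1 - 2 * (u * v) := by
      have : 2 * r * q * (u + v) = (2 * z - 1 - 2 * (u * v)) * (u + v) := by
        rw [hqdef]; field_simp
        linear_combination 2 * v * hu2 + 2 * u * hv2
      exact mul_right_cancel₀ huv0 this
    have hqx : (1 + c) * (1 - q * x) = 2 * z + c - 2 * (u * v) := by
      -- The factor `1 - c` produces `4 r ^ 2`, and `(2 r q) (2 r x)` eliminates `r`.
      have : (1 - c) * ((1 + c) * (1 - q * x)) = (1 - c) * (2 * z + c - 2 * (u * v)) := by
        linear_combination (1 - q * x) * (-hrcC) - (2 * r * x) * hq1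
          - (2 * z - 1 - 2 * (u * v)) * hxrC + 1 * hrcC
      exact mul_left_cancel₀ h1c' this
    have huv2 : (u * v) ^ 2 = z ^ 2 - z + c ^ 2 / 4 := by
      rw [mul_pow, hu2, hv2]; linear_combination -hrcC / 4
    have hfin : (z + u * v + c / 2) * (1 - q * x) = 2 * z := by
      refine mul_left_cancel₀ h1c ?_
      linear_combination (z + u * v + c / 2) * hqx - 2 * huv2
    rw [eq_comm, inv_eq_iff_eq_inv, inv_div, eq_div_iff]
    · linear_combination (u + v) / 2 * hfin
    · intro h
      rw [h, zero_mul] at hfin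
      exact hz0 (by simpa using hfin.symm)
  rw [hW, log_exp]
  · ring
  all_goals
    have b1 := abs_lt.1 (abs_im_log_lt hp)
    have b2 := abs_lt.1 (abs_im_log_lt hX)
    simp only [G, neg_im, add_im]
    linarith
end

section
/- For every z ∈ ℂ∖(−∞,b], with principal branches, ∫_a^b log(z−s)/√((s−a)(b−s)) ds = 2π·log( (√(z−b) + √(z−a))/2 ). -/
open Complex MeasureTheory

/-!
Put `p = √(z-a)`, `q = √(z-b)`, `u = (q+p)/2`, `w = (p-q)/(p+q)`, and substitute
`s = (a+b)/2 + (b-a)/2 · cos θ`, which turns the integral into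
`∫_0^π log (z - (a+b)/2 - (b-a)/2 · cos θ) dθ`. The argument of the logarithm factors as
`u² (1 - w e^{iθ}) (1 - w e^{-iθ})`, and `|w| < 1` because `p` and `q` lie in the right half plane
with imaginary parts of the same sign (`norm_sub_lt_norm_add`).

The factorization holds for the principal logarithms themselves (`log_factorization`): both sides
have the same derivative in `θ`, and at `θ = 0` the only numbers involved are `q`, `u` and `1 - w`,
all in the right half plane. The terms `log (1 - w e^{±iθ})` together integrate to the integral of
`log (1 - w e^{iθ})` over a full circle, which is `0` by the mean value property
(`integral_log_one_sub`), leaving `π · 2 log u`.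
-/

theorem re_sqrt_pos {x : ℂ} (hx : x ∈ slitPlane) : 0 < (x ^ ((1:ℂ)/2)).re := by
  have h0 := slitPlane_ne_zero hx
  rw [cpow_def_of_ne_zero h0, exp_re]
  have h1 : (log x * (1/2)).im = arg x / 2 := by
    have : log x * (1/2) = ((1/2 : ℝ) : ℂ) * log x := by push_cast; ring
    rw [this, im_ofReal_mul, log_im]; ring
  rw [h1]
  have h2 := neg_pi_lt_arg x
  have h3 := arg_le_pi x
  have h4 : arg x < Real.pi := lt_of_le_of_ne h3 (slitPlane_arg_ne_pi hx)
  exact mul_pos (Real.exp_pos _) (Real.cos_pos_of_mem_Ioo ⟨by linarith, by linarith⟩)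

theorem sqrt_mul_self' {x : ℂ} (hx : x ≠ 0) : x ^ ((1:ℂ)/2) * x ^ ((1:ℂ)/2) = x := by
  rw [← cpow_add _ _ hx]; norm_num

theorem log_mul_of_re_pos {x y : ℂ} (hx : 0 < x.re) (hy : 0 < y.re) :
    log (x * y) = log x + log y := by
  have hx' := abs_lt.1 (abs_arg_lt_pi_div_two_iff.2 (Or.inl hx))
  have hy' := abs_lt.1 (abs_arg_lt_pi_div_two_iff.2 (Or.inl hy))
  refine log_mul (fun h => by simp [h] at hx) (fun h => by simp [h] at hy) ⟨?_, ?_⟩ <;>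
    linarith [hx'.1, hx'.2, hy'.1, hy'.2]

/-- The inequality is `Re (p * conj q) > 0`. The imaginary parts of `p` and `q` have the same sign
since `p * p` and `q * q` have the same imaginary part. -/
theorem norm_sub_lt_norm_add_s12 {p q : ℂ} (hp : 0 < p.re) (hq : 0 < q.re)
    (h : (p * p).im = (q * q).im) : ‖p - q‖ < ‖p + q‖ := by
  have h1 : p.re * p.im = q.re * q.im := by simp only [mul_im] at h; linarith
  have h2 : 0 ≤ p.im * q.im := by
    have h3 : 0 ≤ (p.re * q.re) * (p.im * q.im) := by
      have : (p.re * q.re) * (p.im * q.im) = (q.re * q.im) ^ 2 := by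
        rw [sq]; nth_rewrite 1 [← h1]; ring
      rw [this]; positivity
    exact nonneg_of_mul_nonneg_right h3 (mul_pos hp hq)
  have h4 := mul_pos hp hq
  refine lt_of_pow_lt_pow_left₀ 2 (norm_nonneg _) ?_
  rw [← normSq_eq_norm_sq, ← normSq_eq_norm_sq, normSq_apply, normSq_apply]
  simp only [sub_re, sub_im, add_re, add_im]
  nlinarith

theorem norm_mul_exp (w : ℂ) (t : ℝ) : ‖w * exp (t * I)‖ = ‖w‖ := by
  rw [norm_mul, norm_exp_ofReal_mul_I, mul_one]

theorem one_sub_mem {w : ℂ} (hw : ‖w‖ < 1) : 1 - w ∈ slitPlane := by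
  rw [sub_eq_add_neg]; exact mem_slitPlane_of_norm_lt_one (by rwa [norm_neg])

theorem continuous_log_one_sub {w : ℂ} (hw : ‖w‖ < 1) :
    Continuous fun t : ℝ => log (1 - w * exp (t * I)) :=
  Continuous.clog (by fun_prop) fun t => one_sub_mem (by rwa [norm_mul_exp])

/-- The mean value property of `ζ ↦ log (1 - w ζ)` on the unit circle. -/
theorem integral_log_one_sub {w : ℂ} (hw : ‖w‖ < 1) :
    ∫ t in (0:ℝ)..(2 * Real.pi), log (1 - w * exp (t * I)) = 0 := by
  have hmem : ∀ x ∈ Metric.closedBall (0:ℂ) |1|, 1 - w * x ∈ slitPlane := by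
    intro x hx
    have hx1 : ‖x‖ ≤ 1 := by simpa using hx
    refine one_sub_mem ?_
    rw [norm_mul]
    nlinarith [norm_nonneg w, norm_nonneg x]
  have hd : ∀ x ∈ Metric.closedBall (0:ℂ) |1|,
      DifferentiableAt ℂ (fun x : ℂ => log (1 - w * x)) x := fun x hx => by
    have h1 : DifferentiableAt ℂ (fun x : ℂ => 1 - w * x) x := by fun_prop
    exact h1.clog (hmem x hx)
  have h : Real.circleAverage (fun x : ℂ => log (1 - w * x)) 0 1 = log (1 - w * 0) :=
    circleAverage_of_differentiable_on_off_countable Set.countable_empty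
      (fun x hx => (hd x hx).continuousAt.continuousWithinAt)
      (fun x hx => hd x (Metric.ball_subset_closedBall hx.1))
  rw [Real.circleAverage_def] at h
  simp only [circleMap, ofReal_one, one_mul, zero_add, mul_zero, sub_zero, log_one] at h
  rcases smul_eq_zero.1 h with h | h
  · exact absurd h (by positivity)
  · exact h

theorem integral_log_pair {w : ℂ} (hw : ‖w‖ < 1) :
    ∫ t in (0:ℝ)..Real.pi, (log (1 - w * exp (t * I)) + log (1 - w * exp ((-t : ℝ) * I))) = 0 := by
  have hc := continuous_log_one_sub hw
  have hc' : Continuous fun t : ℝ => log (1 - w * exp ((-t : ℝ) * I)) := hc.comp continuous_neg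
  rw [intervalIntegral.integral_add (hc.intervalIntegrable _ _) (hc'.intervalIntegrable _ _)]
  have h1 : ∫ t in (0:ℝ)..Real.pi, log (1 - w * exp ((-t : ℝ) * I))
      = ∫ t in Real.pi..(2 * Real.pi), log (1 - w * exp (t * I)) := by
    have h2 := intervalIntegral.integral_comp_sub_left (a := 0) (b := Real.pi)
      (fun t : ℝ => log (1 - w * exp (t * I))) (2 * Real.pi)
    rw [sub_zero, show 2 * Real.pi - Real.pi = Real.pi by ring] at h2
    rw [← h2]
    refine intervalIntegral.integral_congr fun t _ => ?_
    have : exp (((2 * Real.pi - t : ℝ) : ℂ) * I) = exp ((-t : ℝ) * I) := by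
      rw [← exp_periodic (((-t : ℝ) : ℂ) * I)]
      congr 1; push_cast; ring
    simp only [this]
  rw [h1, intervalIntegral.integral_add_adjacent_intervals (hc.intervalIntegrable _ _)
    (hc.intervalIntegrable _ _), integral_log_one_sub hw]

/-- The derivatives of the two sides in `t` agree, so it suffices to compare them at `t = 0`. There
the identity reads `log (q * q) = 2 log u + 2 log (1 - w)` with `q = u (1 - w)`. -/
theorem log_factorization {u w : ℂ} (hw : ‖w‖ < 1) (hu : 0 < u.re)
    (hq : 0 < (u * (1 - w)).re) {A r : ℂ} (hA : A = u * u * (1 + w * w)) (hr : r = 2 * u * u * w)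
    (hs : ∀ t : ℝ, A - r * Real.cos t ∈ slitPlane) (t : ℝ) :
    log (A - r * Real.cos t)
      = 2 * log u + (log (1 - w * exp (t * I)) + log (1 - w * exp ((-t : ℝ) * I))) := by
  have hu0 : u ≠ 0 := fun h => by simp [h] at hu
  have hE : ∀ t : ℝ, HasDerivAt (fun t : ℝ => exp (t * I)) (exp (t * I) * I) t := fun t => by
    have h1 : HasDerivAt (fun t : ℝ => (t : ℂ) * I) (1 * I) t :=
      (ofRealCLM.hasDerivAt (x := t)).mul_const I
    simpa using h1.cexp
  have hL : ∀ t : ℝ, HasDerivAt (fun t : ℝ => log (1 - w * exp (t * I)))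
      (-(w * (exp (t * I) * I)) / (1 - w * exp (t * I))) t := fun t =>
    (((hE t).const_mul w).const_sub 1).clog_real (one_sub_mem (by rwa [norm_mul_exp]))
  have hL' : ∀ t : ℝ, HasDerivAt (fun t : ℝ => log (1 - w * exp ((-t : ℝ) * I)))
      (-(-(w * (exp ((-t : ℝ) * I) * I)) / (1 - w * exp ((-t : ℝ) * I)))) t := fun t => by
    have := HasDerivAt.scomp t (hL (-t)) (hasDerivAt_neg t)
    simpa [Function.comp_def] using this
  have hF : ∀ t : ℝ, HasDerivAt (fun t : ℝ => log (A - r * Real.cos t))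
      (-(r * ((-Real.sin t : ℝ) : ℂ)) / (A - r * Real.cos t)) t := fun t =>
    (((Real.hasDerivAt_cos t).ofReal_comp.const_mul r).const_sub A).clog_real (hs t)
  have hD : ∀ t : ℝ, HasDerivAt (fun t : ℝ => log (A - r * Real.cos t)
      - (log (1 - w * exp (t * I)) + log (1 - w * exp ((-t : ℝ) * I)))) 0 t := fun t => by
    refine ((hF t).sub ((hL t).add (hL' t))).congr_deriv ?_
    have n1 := slitPlane_ne_zero (one_sub_mem (w := w * exp (t * I)) (by rwa [norm_mul_exp]))
    have n2 := slitPlane_ne_zero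
      (one_sub_mem (w := w * exp ((-t : ℝ) * I)) (by rwa [norm_mul_exp]))
    have hEE : exp (t * I) * exp ((-t : ℝ) * I) = 1 := by
      rw [← exp_add]; push_cast; rw [show (t : ℂ) * I + -t * I = 0 by ring, exp_zero]
    have hcos : ((Real.cos t : ℝ) : ℂ) = (exp (t * I) + exp ((-t : ℝ) * I)) / 2 := by
      rw [ofReal_cos, Complex.cos]; push_cast; rfl
    have hsin : ((-Real.sin t : ℝ) : ℂ) = (exp (t * I) - exp ((-t : ℝ) * I)) * I / 2 := by
      rw [ofReal_neg, ofReal_sin, Complex.sin]; push_cast; ring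
    rw [hcos, hsin, hA, hr]
    generalize exp (t * I) = E at *
    generalize exp ((-t : ℝ) * I) = E' at *
    have hfac : u * u * (1 + w * w) - 2 * u * u * w * ((E + E') / 2)
        = u * u * ((1 - w * E) * (1 - w * E')) := by
      linear_combination (-u * u * w * w) * hEE
    rw [hfac]
    field_simp
    ring
  have hconst := is_const_of_deriv_eq_zero (fun t => (hD t).differentiableAt)
    (fun t => (hD t).deriv) t 0
  have h1w : 0 < (1 - w).re := by
    have := (abs_re_le_norm w).trans_lt hw
    rw [sub_re, one_re]; linarith [(abs_lt.1 this).2]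
  have h0 : A - r = (u * (1 - w)) * (u * (1 - w)) := by rw [hA, hr]; ring
  simp only [Real.cos_zero, ofReal_one, mul_one, ofReal_zero, neg_zero, zero_mul, exp_zero, h0,
    log_mul_of_re_pos hq hq, log_mul_of_re_pos hu h1w] at hconst
  linear_combination hconst

/-- The substitution `s = (a+b)/2 + (b-a)/2 · cos t`. No integrability is needed, since the change
of variables formula for injective maps holds for arbitrary `G`. -/
theorem integral_subst {a b : ℝ} (hab : a < b) (G : ℝ → ℂ) :
    ∫ s in a..b, G s / (Real.sqrt ((s - a) * (b - s)) : ℂ)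
      = ∫ t in (0:ℝ)..Real.pi, G ((a + b) / 2 + (b - a) / 2 * Real.cos t) := by
  have hr : 0 < (b - a) / 2 := by linarith
  set f : ℝ → ℝ := fun t => (a + b) / 2 + (b - a) / 2 * Real.cos t with hf
  have himg : f '' Set.Ioo 0 Real.pi = Set.Ioo a b := by
    ext s
    constructor
    · rintro ⟨t, ht, rfl⟩
      have h1 : Real.cos t < 1 := by
        have := Real.cos_lt_cos_of_nonneg_of_le_pi le_rfl ht.2.le ht.1
        rwa [Real.cos_zero] at this
      have h2 : -1 < Real.cos t := by
        have := Real.cos_lt_cos_of_nonneg_of_le_pi ht.1.le le_rfl ht.2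
        rwa [Real.cos_pi] at this
      constructor <;> simp only [hf] <;> nlinarith
    · rintro ⟨h1, h2⟩
      have h3 : (s - (a + b) / 2) / ((b - a) / 2) < 1 := by rw [div_lt_one hr]; linarith
      have h4 : -1 < (s - (a + b) / 2) / ((b - a) / 2) := by rw [lt_div_iff₀ hr]; linarith
      refine ⟨Real.arccos ((s - (a + b) / 2) / ((b - a) / 2)),
        ⟨Real.arccos_pos.2 h3, Real.arccos_lt_pi.2 h4⟩, ?_⟩
      simp only [hf]
      rw [Real.cos_arccos h4.le h3.le, mul_div_cancel₀ _ hr.ne']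
      ring
  have hinj : Set.InjOn f (Set.Ioo 0 Real.pi) := by
    intro x hx y hy hxy
    refine Real.injOn_cos (Set.Ioo_subset_Icc_self hx) (Set.Ioo_subset_Icc_self hy) ?_
    exact mul_left_cancel₀ hr.ne' (add_left_cancel hxy)
  rw [intervalIntegral.integral_of_le hab.le, intervalIntegral.integral_of_le Real.pi_pos.le,
    integral_Ioc_eq_integral_Ioo, integral_Ioc_eq_integral_Ioo, ← himg,
    integral_image_eq_integral_abs_deriv_smul (f' := fun t => (b - a) / 2 * (-Real.sin t))
      measurableSet_Ioo
      (fun x _ => (((Real.hasDerivAt_cos x).const_mul _).const_add _).hasDerivWithinAt) hinj]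
  refine setIntegral_congr_fun measurableSet_Ioo fun t ht => ?_
  have hsin := Real.sin_pos_of_mem_Ioo ht
  have hpos : 0 < (b - a) / 2 * Real.sin t := mul_pos hr hsin
  have h1 : (f t - a) * (b - f t) = ((b - a) / 2 * Real.sin t) ^ 2 := by
    simp only [hf]
    rw [mul_pow, Real.sin_sq]; ring
  have h2 : |(b - a) / 2 * (-Real.sin t)| = (b - a) / 2 * Real.sin t := by
    rw [mul_neg, abs_neg, abs_of_pos hpos]
  have h3 : (((b - a) / 2 * Real.sin t : ℝ) : ℂ) ≠ 0 := ofReal_ne_zero.2 hpos.ne'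
  rw [h1, h2, Real.sqrt_sq hpos.le, real_smul]
  exact mul_div_cancel₀ _ h3

/-- for `z ∈ ℂ∖(−∞,b]`, with principal branches,
`∫_a^b log(z−s)/√((s−a)(b−s)) ds = 2π·log((√(z−b) + √(z−a))/2)`. -/
theorem log_integral_sqrt_weight
    (a b : ℝ) (hab : a < b)
    (z : ℂ) (hz : ¬ (z.im = 0 ∧ z.re ≤ b)) :
    (∫ s in a..b, Complex.log (z - s) / (Real.sqrt ((s - a) * (b - s)) : ℂ))
      = 2 * (Real.pi : ℂ) *
        Complex.log (((z - (b:ℂ)) ^ ((1:ℂ)/2) + (z - (a:ℂ)) ^ ((1:ℂ)/2)) / 2) := by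
  have hslit : ∀ s : ℝ, s ≤ b → z - s ∈ slitPlane := by
    intro s hs
    rw [mem_slitPlane_iff, sub_re, sub_im, ofReal_re, ofReal_im, sub_zero]
    by_contra! h
    exact hz ⟨h.2, by linarith [h.1]⟩
  rw [integral_subst hab (fun s => log (z - s))]
  have hp := re_sqrt_pos (hslit a hab.le)
  have hq := re_sqrt_pos (hslit b le_rfl)
  have hpp := sqrt_mul_self' (slitPlane_ne_zero (hslit a hab.le))
  have hqq := sqrt_mul_self' (slitPlane_ne_zero (hslit b le_rfl))
  generalize (z - (a:ℂ)) ^ ((1:ℂ)/2) = p at *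
  generalize (z - (b:ℂ)) ^ ((1:ℂ)/2) = q at *
  have hsum : 0 < (q + p).re := by rw [add_re]; linarith
  have hne : q + p ≠ 0 := fun h => by simp [h] at hsum
  have hu : 0 < ((q + p) / 2).re := by
    rw [div_ofNat_re]; positivity
  have hw : ‖(p - q) / (q + p)‖ < 1 := by
    rw [norm_div, div_lt_one (norm_pos_iff.2 hne), add_comm q p]
    exact norm_sub_lt_norm_add_s12 hp hq (by rw [hpp, hqq]; simp)
  have huw : (q + p) / 2 * (1 - (p - q) / (q + p)) = q := by field_simp; ring
  have hA : z - (a + b) / 2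
      = (q + p) / 2 * ((q + p) / 2) * (1 + (p - q) / (q + p) * ((p - q) / (q + p))) := by
    field_simp
    linear_combination (-2 : ℂ) * hpp - 2 * hqq
  have hr : ((b : ℂ) - a) / 2
      = 2 * ((q + p) / 2) * ((q + p) / 2) * ((p - q) / (q + p)) := by
    field_simp
    linear_combination hqq - hpp
  have hcast : ∀ t : ℝ, z - (((a + b) / 2 + (b - a) / 2 * Real.cos t : ℝ) : ℂ)
      = z - (a + b) / 2 - (b - a) / 2 * Real.cos t := fun t => by push_cast; ring
  have hlog := log_factorization hw hu (by rwa [huw]) hA hr fun t => by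
    rw [← hcast]
    exact hslit _ (by nlinarith [Real.cos_le_one t])
  simp only [hcast, hlog]
  have hc := continuous_log_one_sub hw
  have hc' : Continuous fun t : ℝ => log (1 - (p - q) / (q + p) * exp ((-t : ℝ) * I)) :=
    hc.comp continuous_neg
  rw [intervalIntegral.integral_add intervalIntegrable_const
    (Continuous.intervalIntegrable (by fun_prop) _ _), integral_log_pair hw,
    intervalIntegral.integral_const, real_smul]
  push_cast
  ring
end

section
/- For every z ∈ ℂ∖(−∞,1], the logarithmic potential g(z) := ∫_0^1 log(z−s)μ(s) ds has the explicit evaluation g(z) = −1 − 2·log 2 + (1/c)(z−1)·log(z−1) − (1/c)·z·log z + (2 − 2/c)·log( (z−a)^{1/2} + (z−b)^{1/2} ) + (2/c)·z·log( z + (z−a)^{1/2}(z−b)^{1/2} + c/2 ) + (2/c)(1−z)·log( z − 1 + (z−a)^{1/2}(z−b)^{1/2} − c/2 ), all logarithms and square roots being principal branches. -/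
/-!
The idea is to write the density as a mixture of arcsine laws. On all of `(0, 1)`, the density is
`μ s = (2 / (π c)) * arcsin (c / (2 √(s - s²)))`, because `Real.arcsin` is clamped to `π / 2` on
arguments `≥ 1`, which is where `s` lies outside `(a, b)` (`density_eq`). Moreover
`2 arcsin (c / (2 √(s - s²))) = ∫ t in 0..c, 1 / √(s - s² - t²/4)`, where the integrand is taken
to vanish when the radicand is `≤ 0` (`kernel_integral`). For fixed `t` the function
`s ↦ 1 / (π √(s - s² - t²/4))` is the arcsine density of an interval centred at `1/2` of
half-length `√(1 - t²) / 2`, so `μ` is the average over `t ∈ (0, c)` of these probability densities.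

For real `x > 1`, Fubini (`fubini_step`) reduces the potential of `μ` to the potential of an arcsine
law, which is `log ((2 x - 1 + 2 R) / 4)` with `R = √(x² - x + t²/4)` (`arcsine_potential`); this
amounts to `log |e^{iθ} - r|` having mean zero over the unit circle for `|r| < 1` (`log_circle`).
The remaining integral over `t` has an explicit primitive `antider`, vanishing at `t = 0`
(`antider_zero`, `hasDerivAt_antider`), and its value at `t = c` is `c` times the claimed formula
(`explicitG_ofReal`).

Finally both sides are holomorphic on the connected open set `ℂ ∖ (-∞, 1]`
(`differentiableOn_potential`, `differentiableOn_explicitG`), so they agree there by the identity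
theorem. For the right-hand side one needs that no argument of a logarithm meets `(-∞, 0]`
(`log_args_mem`): both square roots have positive real part, and their imaginary parts have the
sign of `Im z`.
-/

open Complex Real MeasureTheory

/-! ### The potential of an arcsine law -/

/-- Up to the factor `2 π`, the integral is the mean of `log |e^{iθ} - r|` over the unit circle. -/
lemma log_circle (r : ℝ) (h0 : 0 ≤ r) (h1 : r < 1) :
    ∫ θ in (0:ℝ)..π, Real.log (1 + r ^ 2 - 2 * r * Real.cos θ) = 0 := by
  have hpos : ∀ θ : ℝ, 0 < 1 + r ^ 2 - 2 * r * Real.cos θ := fun θ => by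
    nlinarith [Real.cos_le_one θ, mul_nonneg h0 (sub_nonneg.2 (Real.cos_le_one θ))]
  have hcont : Continuous fun θ : ℝ => Real.log (1 + r ^ 2 - 2 * r * Real.cos θ) :=
    Continuous.log (by fun_prop) fun θ => (hpos θ).ne'
  have key := circleAverage_log_norm_sub_const₀ (a := (r : ℂ))
    (by rwa [Complex.norm_real, Real.norm_of_nonneg h0])
  have hnorm : ∀ θ : ℝ, Real.log ‖circleMap 0 1 θ - (r : ℂ)‖
      = (1 / 2) * Real.log (1 + r ^ 2 - 2 * r * Real.cos θ) := fun θ => by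
    rw [Complex.norm_eq_sqrt_sq_add_sq, Real.log_sqrt (by positivity)]
    have : (circleMap 0 1 θ - (r : ℂ)).re ^ 2 + (circleMap 0 1 θ - (r : ℂ)).im ^ 2
        = 1 + r ^ 2 - 2 * r * Real.cos θ := by
      simp [circleMap, Complex.exp_re, Complex.exp_im]
      linear_combination Real.sin_sq_add_cos_sq θ
    rw [this]; ring
  have h2 : ∫ θ in (0:ℝ)..2 * π, Real.log (1 + r ^ 2 - 2 * r * Real.cos θ) = 0 := by
    rw [circleAverage_def] at key
    simp only [hnorm, intervalIntegral.integral_const_mul, smul_eq_mul] at key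
    have := Real.pi_pos
    have h3 : (2 * π)⁻¹ ≠ 0 := by positivity
    simpa [h3, this.ne'] using key
  -- The cosine is symmetric about `π`, so the two half-circles contribute equally.
  have h3 : ∫ θ in π..2 * π, Real.log (1 + r ^ 2 - 2 * r * Real.cos θ)
      = ∫ θ in (0:ℝ)..π, Real.log (1 + r ^ 2 - 2 * r * Real.cos θ) := by
    have := intervalIntegral.integral_comp_sub_left (a := 0) (b := π)
      (fun θ => Real.log (1 + r ^ 2 - 2 * r * Real.cos θ)) (2 * π)
    simp only [Real.cos_two_pi_sub] at this
    rw [this]; congr 1 <;> ring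
  have h4 := intervalIntegral.integral_add_adjacent_intervals
    (hcont.intervalIntegrable (μ := volume) 0 π) (hcont.intervalIntegrable π (2 * π))
  linarith

/-- `π` times the logarithmic potential at `x > 1` of the arcsine law on the interval where
`s - s² > t²/4`. Outside that interval the integrand is `0`, since `√` vanishes on negative numbers
and `0⁻¹ = 0`. The substitution `s = 1/2 + (ρ/2) cos θ`, with `ρ = √(1 - t²)`, reduces it to
`log_circle`. -/
lemma arcsine_potential (x t : ℝ) (hx : 1 < x) (ht0 : 0 < t) (ht1 : t < 1) :
    ∫ s in (0:ℝ)..1, Real.log (x - s) * (√(s - s ^ 2 - t ^ 2 / 4))⁻¹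
      = π * (Real.log (2 * x - 1 + 2 * √(x ^ 2 - x + t ^ 2 / 4)) - 2 * Real.log 2) := by
  set ρ := √(1 - t ^ 2) with hρ
  have hρ2 : ρ ^ 2 = 1 - t ^ 2 := Real.sq_sqrt (by nlinarith)
  have hρ0 : 0 < ρ := Real.sqrt_pos.2 (by nlinarith)
  have hρ1 : ρ < 1 := by nlinarith
  set R := √(x ^ 2 - x + t ^ 2 / 4) with hR
  have hR2 : R ^ 2 = x ^ 2 - x + t ^ 2 / 4 := Real.sq_sqrt (by nlinarith)
  have hR0 : 0 ≤ R := Real.sqrt_nonneg _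
  set G := 2 * x - 1 + 2 * R with hG
  have hG1 : 1 < G := by linarith
  -- `(√(1 - y ^ 2))⁻¹` is `0` outside `(-1, 1)`, so the rescaled integral may be restricted there.
  have hsupp : ∀ y : ℝ, ¬ (-1 < y ∧ y < 1) → √(1 - y ^ 2) = 0 := fun y hy => by
    apply Real.sqrt_eq_zero_of_nonpos
    by_contra h
    exact hy (abs_lt.1 ((sq_lt_one_iff_abs_lt_one y).1 (by linarith)))
  have h1 : ∫ s in (0:ℝ)..1, Real.log (x - s) * (√(s - s ^ 2 - t ^ 2 / 4))⁻¹
      = ∫ y in (-1:ℝ)..1, Real.log (x - (ρ / 2 * y + 1 / 2)) * (√(1 - y ^ 2))⁻¹ := by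
    have e := intervalIntegral.integral_comp_mul_add (a := -ρ⁻¹) (b := ρ⁻¹)
      (fun s => Real.log (x - s) * (√(s - s ^ 2 - t ^ 2 / 4))⁻¹) (c := ρ / 2) (by positivity) (1 / 2)
    have e0 : ρ / 2 * -ρ⁻¹ + 1 / 2 = 0 := by field_simp; norm_num
    have e1 : ρ / 2 * ρ⁻¹ + 1 / 2 = 1 := by field_simp; norm_num
    rw [e0, e1] at e
    have e2 : ∀ y : ℝ, √((ρ / 2 * y + 1 / 2) - (ρ / 2 * y + 1 / 2) ^ 2 - t ^ 2 / 4)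
        = ρ / 2 * √(1 - y ^ 2) := fun y => by
      rw [show (ρ / 2 * y + 1 / 2) - (ρ / 2 * y + 1 / 2) ^ 2 - t ^ 2 / 4
        = (ρ / 2) ^ 2 * (1 - y ^ 2) by linear_combination (-1 / 4) * hρ2,
        Real.sqrt_mul (by positivity), Real.sqrt_sq (by positivity)]
    have e3 : ∫ y in (-ρ⁻¹)..ρ⁻¹, Real.log (x - (ρ / 2 * y + 1 / 2)) * (√(1 - y ^ 2))⁻¹
        = ∫ y in (-1:ℝ)..1, Real.log (x - (ρ / 2 * y + 1 / 2)) * (√(1 - y ^ 2))⁻¹ := by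
      have hρi : 1 < ρ⁻¹ := (one_lt_inv₀ hρ0).2 hρ1
      have hs : Function.support
          (fun y : ℝ => Real.log (x - (ρ / 2 * y + 1 / 2)) * (√(1 - y ^ 2))⁻¹)
          ⊆ Set.Ioo (-1) 1 := fun y hy => by
        by_contra h
        exact hy (by simp [hsupp y h])
      rw [intervalIntegral.integral_eq_integral_of_support_subset,
        intervalIntegral.integral_eq_integral_of_support_subset]
      · exact hs.trans Set.Ioo_subset_Ioc_self
      · exact hs.trans fun y hy => ⟨by linarith [hy.1], by linarith [hy.2]⟩
    rw [← e3]
    simp only [e2, mul_inv, smul_eq_mul] at e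
    have e4 : ∀ y : ℝ, Real.log (x - (ρ / 2 * y + 1 / 2)) * ((ρ / 2)⁻¹ * (√(1 - y ^ 2))⁻¹)
        = (ρ / 2)⁻¹ * (Real.log (x - (ρ / 2 * y + 1 / 2)) * (√(1 - y ^ 2))⁻¹) := fun y => by ring
    simp only [e4, intervalIntegral.integral_const_mul] at e
    exact (mul_left_cancel₀ (by positivity) e).symm
  have h2 := Polynomial.Chebyshev.integral_measureT (fun y => Real.log (x - (ρ / 2 * y + 1 / 2)))
  rw [Polynomial.Chebyshev.integral_measureT_eq_integral_cos] at h2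
  simp only [Real.sqrt_inv] at h2
  rw [h1, ← h2]
  have hr0 : 0 ≤ ρ / G := by positivity
  have hr1 : ρ / G < 1 := (div_lt_one (by positivity)).2 (by linarith)
  have hpos : ∀ θ : ℝ, 0 < 1 + (ρ / G) ^ 2 - 2 * (ρ / G) * Real.cos θ := fun θ => by
    nlinarith [Real.cos_le_one θ, mul_nonneg hr0 (sub_nonneg.2 (Real.cos_le_one θ))]
  -- With `G = 2 x - 1 + 2 R`, the argument of the logarithm is `(G/4) |1 - (ρ/G) e^{iθ}|²`.
  have hsplit : ∀ θ : ℝ, Real.log (x - (ρ / 2 * Real.cos θ + 1 / 2))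
      = Real.log (G / 4) + Real.log (1 + (ρ / G) ^ 2 - 2 * (ρ / G) * Real.cos θ) := fun θ => by
    rw [← Real.log_mul (by positivity) (hpos θ).ne']
    congr 1
    have : G ≠ 0 := by positivity
    have h5 : G ^ 2 + ρ ^ 2 = G * (4 * x - 2) := by
      rw [hG]; linear_combination 4 * hR2 + hρ2
    field_simp
    linear_combination (-2) * h5
  have hcont : Continuous fun θ : ℝ =>
      Real.log (1 + (ρ / G) ^ 2 - 2 * (ρ / G) * Real.cos θ) :=
    Continuous.log (by fun_prop) fun θ => (hpos θ).ne'
  simp only [hsplit]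
  rw [intervalIntegral.integral_add (by simp) (hcont.intervalIntegrable _ _),
    log_circle _ hr0 hr1, intervalIntegral.integral_const,
    Real.log_div (by positivity) (by norm_num), show (4:ℝ) = 2 ^ 2 by norm_num, Real.log_pow]
  simp

/-! ### The density as a mixture of arcsine laws -/

/-- `2 arcsin (t / m)` is a primitive of the kernel on either side of `t = m`. Beyond `m` the clamped
`arcsin` is constant and the kernel is `0`, since its radicand is negative. -/
lemma kernel_aux (m p q : ℝ) (hm : 0 < m) (hp : 0 ≤ p) (hpq : p ≤ q) (h : q ≤ m ∨ m ≤ p) :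
    IntervalIntegrable (fun t => (√(m ^ 2 / 4 - t ^ 2 / 4))⁻¹) volume p q ∧
    ∫ t in p..q, (√(m ^ 2 / 4 - t ^ 2 / 4))⁻¹
      = 2 * Real.arcsin (q / m) - 2 * Real.arcsin (p / m) := by
  have hc : ContinuousOn (fun t => 2 * Real.arcsin (t / m)) (Set.uIcc p q) := by
    apply Continuous.continuousOn
    exact continuous_const.mul (Real.continuous_arcsin.comp (by fun_prop))
  have hd : ∀ t ∈ Set.Ioo p q,
      HasDerivAt (fun t => 2 * Real.arcsin (t / m)) ((√(m ^ 2 / 4 - t ^ 2 / 4))⁻¹) t := by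
    intro t ht
    have ht0 : 0 < t / m := div_pos (hp.trans_lt ht.1) hm
    have htm : t / m ≠ 1 := by
      rw [Ne, div_eq_one_iff_eq hm.ne']
      rintro rfl
      rcases h with h | h
      · linarith [ht.2]
      · linarith [ht.1]
    have := ((Real.hasDerivAt_arcsin (by linarith) htm).comp t
      ((hasDerivAt_id t).div_const m)).const_mul 2
    refine this.congr_deriv ?_
    rw [show m ^ 2 / 4 - t ^ 2 / 4 = (m / 2) ^ 2 * (1 - (t / m) ^ 2) by field_simp; ring,
      Real.sqrt_mul (by positivity), Real.sqrt_sq (by positivity), mul_inv]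
    simp only [one_div]
    field_simp
  have hi : IntervalIntegrable (fun t => (√(m ^ 2 / 4 - t ^ 2 / 4))⁻¹) volume p q := by
    apply intervalIntegral.intervalIntegrable_deriv_of_nonneg hc
    · rwa [min_eq_left hpq, max_eq_right hpq]
    · intro t _; positivity
  refine ⟨hi, ?_⟩
  rw [Set.uIcc_of_le hpq] at hc
  exact intervalIntegral.integral_eq_sub_of_hasDerivAt_of_le hpq hc hd hi

/-- Integrating the arcsine kernels over `t ∈ (0, c)` gives the clamped arcsine, for every
`s ∈ (0, 1)`: there is no case distinction between the band `(a, b)` and its complement. -/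
lemma kernel_integral (c s : ℝ) (hc : 0 < c) (hs0 : 0 < s) (hs1 : s < 1) :
    IntervalIntegrable (fun t => (√(s - s ^ 2 - t ^ 2 / 4))⁻¹) volume 0 c ∧
    ∫ t in (0:ℝ)..c, (√(s - s ^ 2 - t ^ 2 / 4))⁻¹
      = 2 * Real.arcsin (c / (2 * √(s - s ^ 2))) := by
  have h0 : 0 < s - s ^ 2 := by nlinarith
  set m := 2 * √(s - s ^ 2) with hm
  have hm0 : 0 < m := by positivity
  have hm2 : s - s ^ 2 = m ^ 2 / 4 := by
    rw [hm, mul_pow, Real.sq_sqrt h0.le]; ring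
  rw [hm2]
  rcases le_total c m with h | h
  · have := kernel_aux m 0 c hm0 le_rfl hc.le (Or.inl h)
    simpa using this
  · have h1 := kernel_aux m 0 m hm0 le_rfl hm0.le (Or.inl le_rfl)
    have h2 := kernel_aux m m c hm0 hm0.le h (Or.inr le_rfl)
    refine ⟨h1.1.trans h2.1, ?_⟩
    rw [← intervalIntegral.integral_add_adjacent_intervals h1.1 h2.1, h1.2, h2.2]
    simp

/-- Absolute integrability holds because the kernels are nonnegative with bounded `t`-integral
`2 arcsin (…) ≤ π`, while `log (x - s)` is bounded on `[0, 1]`. -/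
lemma fubini_step (x c : ℝ) (hx : 1 < x) (hc : 0 < c) :
    ∫ s in (0:ℝ)..1, Real.log (x - s) * (2 * Real.arcsin (c / (2 * √(s - s ^ 2))))
      = ∫ t in (0:ℝ)..c, ∫ s in (0:ℝ)..1, Real.log (x - s) * (√(s - s ^ 2 - t ^ 2 / 4))⁻¹ := by
  have hae : ∀ᵐ s ∂(volume.restrict (Set.Ioc (0:ℝ) 1)), s ∈ Set.Ioo (0:ℝ) 1 := by
    rw [← restrict_Ioo_eq_restrict_Ioc]
    exact ae_restrict_mem measurableSet_Ioo
  have hint : Integrable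
      (Function.uncurry fun s t : ℝ => Real.log (x - s) * (√(s - s ^ 2 - t ^ 2 / 4))⁻¹)
      ((volume.restrict (Set.Ioc (0:ℝ) 1)).prod (volume.restrict (Set.Ioc (0:ℝ) c))) := by
    rw [integrable_prod_iff (by apply Measurable.aestronglyMeasurable; unfold Function.uncurry; fun_prop)]
    constructor
    · filter_upwards [hae] with s hs
      have := (kernel_integral c s hc hs.1 hs.2).1
      rw [intervalIntegrable_iff_integrableOn_Ioc_of_le hc.le] at this
      exact Integrable.const_mul this (Real.log (x - s))
    · have h1 : Integrable (fun s => |Real.log (x - s)| * (2 * Real.arcsin (c / (2 * √(s - s ^ 2)))))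
          (volume.restrict (Set.Ioc (0:ℝ) 1)) := by
        apply Integrable.mul_bdd (c := 2 * (π / 2))
        · have : ContinuousOn (fun s => |Real.log (x - s)|) (Set.Icc 0 1) := by
            apply ContinuousOn.abs
            apply ContinuousOn.log (by fun_prop)
            intro s hs; linarith [hs.2]
          exact (this.integrableOn_Icc).mono_set Set.Ioc_subset_Icc_self
        · apply Measurable.aestronglyMeasurable
          exact (Real.measurable_arcsin.comp (by fun_prop)).const_mul 2
        · refine Filter.Eventually.of_forall fun s => ?_
          rw [norm_mul, Real.norm_eq_abs, Real.norm_eq_abs, abs_two]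
          have := abs_le.2 ⟨Real.neg_pi_div_two_le_arcsin (c / (2 * √(s - s ^ 2))), Real.arcsin_le_pi_div_two _⟩
          linarith
      refine h1.congr ?_
      filter_upwards [hae] with s hs
      have := (kernel_integral c s hc hs.1 hs.2).2
      rw [intervalIntegral.integral_of_le hc.le] at this
      rw [← this, ← integral_const_mul]
      congr 1; ext t
      simp [Function.uncurry, abs_of_nonneg (Real.sqrt_nonneg _)]
  have hsw := integral_integral_swap hint
  simp only [intervalIntegral.integral_of_le hc.le, intervalIntegral.integral_of_le zero_le_one]
  rw [← hsw]
  apply integral_congr_ae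
  filter_upwards [hae] with s hs
  have := (kernel_integral c s hc hs.1 hs.2).2
  rw [intervalIntegral.integral_of_le hc.le] at this
  rw [← this, ← integral_const_mul]

/-! ### Integration in `t` and the potential on `(1, ∞)` -/

/-- The primitive in `t` of `log (2 x - 1 + 2 √(x² - x + t²/4)) - 2 log 2` that vanishes at `t = 0`.
At `t = c` it equals `c` times the right-hand side of the theorem at the real point `x`. -/
noncomputable def antider (x t : ℝ) : ℝ :=
  t * (-1 - 2 * Real.log 2) + (x - 1) * Real.log (x - 1) - x * Real.log x
    + (t - 1) * Real.log (2 * x - 1 + 2 * √(x ^ 2 - x + t ^ 2 / 4))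
    + 2 * x * Real.log (x + √(x ^ 2 - x + t ^ 2 / 4) + t / 2)
    + 2 * (1 - x) * Real.log (x - 1 + √(x ^ 2 - x + t ^ 2 / 4) - t / 2)

lemma antider_zero (x : ℝ) (hx : 1 < x) : antider x 0 = 0 := by
  have h1 : 0 < x - 1 := by linarith
  have h0 : 0 < x := by linarith
  have hR : √(x ^ 2 - x + 0 ^ 2 / 4) = √x * √(x - 1) := by
    rw [← Real.sqrt_mul h0.le]; congr 1; ring
  have e1 := Real.sq_sqrt h0.le
  have e2 := Real.sq_sqrt h1.le
  have p1 : 0 < √x := Real.sqrt_pos.2 h0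
  have p2 : 0 < √(x - 1) := Real.sqrt_pos.2 h1
  have l1 : Real.log (2 * x - 1 + 2 * (√x * √(x - 1))) = 2 * Real.log (√x + √(x - 1)) := by
    rw [show 2 * x - 1 + 2 * (√x * √(x - 1)) = (√x + √(x - 1)) ^ 2 by
      linear_combination -e1 - e2, Real.log_pow]; norm_num
  have l2 : Real.log (x + √x * √(x - 1) + 0 / 2) = Real.log x / 2 + Real.log (√x + √(x - 1)) := by
    rw [show x + √x * √(x - 1) + 0 / 2 = √x * (√x + √(x - 1)) by linear_combination -e1,
      Real.log_mul (by positivity) (by positivity), Real.log_sqrt h0.le]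
  have l3 : Real.log (x - 1 + √x * √(x - 1) - 0 / 2)
      = Real.log (x - 1) / 2 + Real.log (√x + √(x - 1)) := by
    rw [show x - 1 + √x * √(x - 1) - 0 / 2 = √(x - 1) * (√x + √(x - 1)) by linear_combination -e2,
      Real.log_mul (by positivity) (by positivity), Real.log_sqrt h1.le]
  rw [antider, hR, l1, l2, l3]
  ring

/-- The rational identity behind the derivative of `antider`, written with `α = R + t/2` and
`β = R - t/2`, so that `α + β = 2 R`, `α - β = t` and `α β = x (x - 1)`. -/
lemma deriv_identity (x α β : ℝ) (hx : 1 < x) (hα : 0 < α) (hβ : 0 < β)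
    (h : α * β = x * (x - 1)) :
    (α - β - 1) * ((α - β) / (α + β)) / (2 * x - 1 + (α + β))
      + 2 * x * (α / (α + β)) / (x + α) + 2 * (x - 1) * (β / (α + β)) / (x - 1 + β) = 1 := by
  have hx1 : 0 < x - 1 := by linarith
  have hB : 0 < x + α := by linarith
  have hD : 0 < α + x - 1 := by linarith
  have eC : x - 1 + β = (x - 1) * (x + α) / α := by
    rw [eq_div_iff hα.ne']; linear_combination h
  have eG : 2 * x - 1 + (α + β) = (x + α) * (α + x - 1) / α := by
    rw [eq_div_iff hα.ne']; linear_combination h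
  rw [eC, eG]
  have hs : 0 < α + β := by linarith
  field_simp
  linear_combination (β - α) * h

lemma hasDerivAt_antider (x t : ℝ) (hx : 1 < x) (ht : 0 ≤ t) :
    HasDerivAt (antider x)
      (Real.log (2 * x - 1 + 2 * √(x ^ 2 - x + t ^ 2 / 4)) - 2 * Real.log 2) t := by
  have hq : 0 < x ^ 2 - x + t ^ 2 / 4 := by nlinarith
  have hRd : HasDerivAt (fun t : ℝ => √(x ^ 2 - x + t ^ 2 / 4))
      (t / (4 * √(x ^ 2 - x + t ^ 2 / 4))) t := by
    have := ((((hasDerivAt_id t).pow 2).div_const 4).const_add (x ^ 2 - x)).sqrt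
      (by simpa using hq.ne')
    refine this.congr_deriv ?_
    simp
    field_simp
  unfold antider
  set R := √(x ^ 2 - x + t ^ 2 / 4) with hR
  have hR2 : R ^ 2 = x ^ 2 - x + t ^ 2 / 4 := Real.sq_sqrt hq.le
  have hR0 : 0 < R := Real.sqrt_pos.2 hq
  have hRt : t / 2 < R := by
    apply lt_of_pow_lt_pow_left₀ 2 hR0.le
    nlinarith
  have hG : 0 < 2 * x - 1 + 2 * R := by linarith
  have hB : 0 < x + R + t / 2 := by linarith
  have hC : 0 < x - 1 + R - t / 2 := by linarith
  have d1 := (hasDerivAt_id t).mul_const (-1 - 2 * Real.log 2)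
  have d2 := ((hasDerivAt_id t).sub_const 1).mul (((hRd.const_mul 2).const_add (2 * x - 1)).log hG.ne')
  have d3 := (((hRd.const_add x).add ((hasDerivAt_id t).div_const 2)).log hB.ne').const_mul (2 * x)
  have d4 := (((hRd.const_add (x - 1)).sub ((hasDerivAt_id t).div_const 2)).log hC.ne').const_mul
    (2 * (1 - x))
  have d := (((((d1.add_const ((x - 1) * Real.log (x - 1))).sub_const (x * Real.log x)).add d2).add
    d3).add d4)
  refine d.congr_deriv ?_
  have alg : (t - 1) * (2 * (t / (4 * R)) / (2 * x - 1 + 2 * R))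
      + 2 * x * ((t / (4 * R) + 1 / 2) / (x + R + t / 2))
      + 2 * (1 - x) * ((t / (4 * R) - 1 / 2) / (x - 1 + R - t / 2)) = 1 := by
    have := deriv_identity x (R + t / 2) (R - t / 2) hx (by linarith) (by linarith)
      (by linear_combination hR2)
    have e1 : R + t / 2 + (R - t / 2) = 2 * R := by ring
    have e2 : R + t / 2 - (R - t / 2) = t := by ring
    have e3 : t / (4 * R) + 1 / 2 = (R + t / 2) / (2 * R) := by field_simp; ring
    have e4 : t / (4 * R) - 1 / 2 = -((R - t / 2) / (2 * R)) := by field_simp; ring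
    have e5 : 2 * (t / (4 * R)) = t / (2 * R) := by field_simp; ring
    rw [e1, e2, ← add_assoc x, ← add_sub_assoc (x - 1)] at this
    rw [e3, e4, e5]
    linear_combination this
  simp only [id, Pi.add_apply, Pi.sub_apply, ← hR]
  linear_combination alg

lemma outer_integral (x c : ℝ) (hx : 1 < x) (hc : 0 < c) :
    ∫ t in (0:ℝ)..c, (Real.log (2 * x - 1 + 2 * √(x ^ 2 - x + t ^ 2 / 4)) - 2 * Real.log 2)
      = antider x c := by
  rw [intervalIntegral.integral_eq_sub_of_hasDerivAt (f := antider x), antider_zero x hx, sub_zero]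
  · intro t ht
    rw [Set.uIcc_of_le hc.le] at ht
    exact hasDerivAt_antider x t hx ht.1
  · apply ContinuousOn.intervalIntegrable
    apply ContinuousOn.sub _ continuousOn_const
    apply ContinuousOn.log (by fun_prop)
    intro t _
    have := Real.sqrt_nonneg (x ^ 2 - x + t ^ 2 / 4)
    linarith

/-- The explicit evaluation at real points `x > 1`. -/
lemma real_potential (x c : ℝ) (hx : 1 < x) (hc : 0 < c) (hc1 : c < 1) :
    ∫ s in (0:ℝ)..1, (2 / (π * c)) * Real.arcsin (c / (2 * √(s - s ^ 2))) * Real.log (x - s)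
      = antider x c / c := by
  have e : ∀ s : ℝ, (2 / (π * c)) * Real.arcsin (c / (2 * √(s - s ^ 2))) * Real.log (x - s)
      = (π * c)⁻¹ * (Real.log (x - s) * (2 * Real.arcsin (c / (2 * √(s - s ^ 2))))) := fun s => by
    ring
  simp only [e, intervalIntegral.integral_const_mul]
  rw [fubini_step x c hx hc]
  have : ∫ t in (0:ℝ)..c, ∫ s in (0:ℝ)..1, Real.log (x - s) * (√(s - s ^ 2 - t ^ 2 / 4))⁻¹
      = π * antider x c := by
    rw [← outer_integral x c hx hc, ← intervalIntegral.integral_const_mul]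
    apply intervalIntegral.integral_congr_ae
    refine Filter.Eventually.of_forall fun t ht => ?_
    rw [Set.uIoc_of_le hc.le] at ht
    exact arcsine_potential x t hx ht.1 (ht.2.trans_lt hc1)
  rw [this]
  field_simp

/-! ### Holomorphy of the potential on the cut plane -/

/-- The cut plane `ℂ ∖ (-∞, 1]`, encoded as the translate of `slitPlane` by `1`. -/
def cutPlane : Set ℂ := {z | z - 1 ∈ slitPlane}

lemma mem_cutPlane {z : ℂ} (hz : ¬ (z.im = 0 ∧ z.re ≤ 1)) : z ∈ cutPlane := by
  simp only [cutPlane, Set.mem_ofPred_eq, mem_slitPlane_iff, sub_re, one_re, sub_im, one_im, sub_zero]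
  by_contra! h
  exact hz ⟨h.2, by linarith [h.1]⟩

lemma sub_mem_slitPlane {z : ℂ} (hz : z ∈ cutPlane) {s : ℝ} (hs : s ≤ 1) : z - s ∈ slitPlane := by
  simp only [cutPlane, Set.mem_ofPred_eq, mem_slitPlane_iff, sub_re, one_re, sub_im, one_im,
    sub_zero, ofReal_re, ofReal_im] at hz ⊢
  exact hz.imp (fun h => by linarith) id

lemma isOpen_cutPlane : IsOpen cutPlane :=
  isOpen_slitPlane.preimage (continuous_id.sub continuous_const)

lemma isPreconnected_cutPlane : IsPreconnected cutPlane := by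
  have h : cutPlane = Set.image (fun w => w + 1) slitPlane := by
    ext z
    refine ⟨fun h => ⟨z - 1, h, by simp⟩, ?_⟩
    rintro ⟨w, hw, rfl⟩
    simpa [cutPlane] using hw
  rw [h]
  exact (starConvex_one_slitPlane.isPathConnected
    one_mem_slitPlane).isConnected.isPreconnected.image _ (by fun_prop)

/-- The potential of a bounded measurable density on `[0, 1]` is holomorphic off `(-∞, 1]`, by
differentiation under the integral sign. -/
lemma differentiableOn_potential (m : ℝ → ℝ) (hm : Measurable m) (K : ℝ) (hK : ∀ s, |m s| ≤ K) :
    DifferentiableOn ℂ (fun z => ∫ s in (0:ℝ)..1, (m s : ℂ) * Complex.log (z - s)) cutPlane := by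
  intro z₀ hz₀
  obtain ⟨ε, hε, hball⟩ := Metric.isOpen_iff.1 isOpen_cutPlane z₀ hz₀
  have hK0 : 0 ≤ K := (abs_nonneg _).trans (hK 0)
  have hmem : ∀ z ∈ Metric.ball z₀ (ε / 2), ∀ s ∈ Set.uIoc (0:ℝ) 1, z - s ∈ slitPlane := by
    intro z hz s hs
    rw [Set.uIoc_of_le zero_le_one] at hs
    exact sub_mem_slitPlane (hball (Metric.ball_subset_ball (by linarith) hz)) hs.2
  -- A ball of radius `ε` avoids the cut, so points of the half-radius ball stay `ε / 2` away from it.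
  have hlow : ∀ z ∈ Metric.ball z₀ (ε / 2), ∀ s ∈ Set.uIoc (0:ℝ) 1, ε / 2 ≤ ‖z - s‖ := by
    intro z hz s hs
    rw [Set.uIoc_of_le zero_le_one] at hs
    by_contra! h
    have hs' : (s : ℂ) ∈ cutPlane := by
      apply hball
      rw [Metric.mem_ball] at hz ⊢
      have := dist_triangle (s : ℂ) z z₀
      rw [dist_comm (s : ℂ) z, dist_eq_norm z (s : ℂ)] at this
      linarith
    have := sub_mem_slitPlane hs' hs.2
    simp [mem_slitPlane_iff] at this
  have hmeas : Measurable fun s : ℝ => (m s : ℂ) := Complex.measurable_ofReal.comp hm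
  have hlogm : ∀ z : ℂ, Measurable fun s : ℝ => (m s : ℂ) * Complex.log (z - s) := fun z =>
    hmeas.mul (Complex.measurable_log.comp (measurable_const.sub Complex.measurable_ofReal))
  have key := intervalIntegral.hasDerivAt_integral_of_dominated_loc_of_deriv_le
    (μ := volume) (a := 0) (b := 1) (x₀ := z₀)
    (F := fun z s => (m s : ℂ) * Complex.log (z - s))
    (F' := fun z s => (m s : ℂ) * (z - s)⁻¹) (bound := fun _ => K * (ε / 2)⁻¹)
    (Metric.ball_mem_nhds z₀ (half_pos hε))
    (Filter.Eventually.of_forall fun z => (hlogm z).aestronglyMeasurable) ?_ ?_ ?_ ?_ ?_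
  · exact key.2.differentiableAt.differentiableWithinAt
  · have hc : ContinuousOn (fun s : ℝ => Complex.log (z₀ - s)) (Set.Icc 0 1) := by
      apply ContinuousOn.clog (by fun_prop)
      intro s hs
      exact sub_mem_slitPlane hz₀ hs.2
    rw [intervalIntegrable_iff_integrableOn_Ioc_of_le zero_le_one]
    refine Integrable.bdd_mul (c := K) (hc.integrableOn_Icc.mono_set Set.Ioc_subset_Icc_self)
      hmeas.aestronglyMeasurable (Filter.Eventually.of_forall fun s => ?_)
    simpa using hK s
  · exact (hmeas.mul (measurable_const.sub Complex.measurable_ofReal).inv).aestronglyMeasurable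
  · refine Filter.Eventually.of_forall fun s hs z hz => ?_
    rw [norm_mul, norm_inv, Complex.norm_real]
    exact mul_le_mul (hK s) (inv_anti₀ (half_pos hε) (hlow z hz s hs)) (by positivity) hK0
  · simp
  · refine Filter.Eventually.of_forall fun s hs z hz => ?_
    have := (((hasDerivAt_id z).sub_const (s : ℂ)).clog (hmem z hz s hs)).const_mul (m s : ℂ)
    simpa using this

/-! ### Holomorphy of the explicit formula -/

lemma sqrt_sq (w : ℂ) : (w ^ ((1:ℂ)/2)) ^ 2 = w := by
  simp

lemma sqrt_re_pos {w : ℂ} (hw : w ∈ slitPlane) : 0 < (w ^ ((1:ℂ)/2)).re := by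
  rw [Complex.cpow_def_of_ne_zero (slitPlane_ne_zero hw), Complex.exp_re]
  have h1 : (Complex.log w * (1 / 2)).im = w.arg / 2 := by
    rw [show (1:ℂ) / 2 = ((1 / 2 : ℝ) : ℂ) by norm_num, im_mul_ofReal, log_im]; ring
  rw [h1]
  have h2 := Complex.neg_pi_lt_arg w
  have h3 := (Complex.arg_le_pi w).lt_of_ne (mem_slitPlane_iff_arg.1 hw).1
  exact mul_pos (Real.exp_pos _) (Real.cos_pos_of_mem_Ioo ⟨by linarith, by linarith⟩)

lemma sqrt_parts (w : ℂ) : (w ^ ((1:ℂ)/2)).re ^ 2 - (w ^ ((1:ℂ)/2)).im ^ 2 = w.re ∧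
    2 * (w ^ ((1:ℂ)/2)).re * (w ^ ((1:ℂ)/2)).im = w.im := by
  have h := sqrt_sq w
  rw [pow_two] at h
  constructor
  · have := congrArg Complex.re h
    rw [mul_re] at this; linarith
  · have := congrArg Complex.im h
    rw [mul_im] at this; linarith

/-- The arguments of the last three logarithms avoid `(-∞, 0]`. The first one has positive real part. For `Im z ≠ 0` the real parts of the
two square roots are positive and their imaginary parts have the sign of `Im z`, so the second and
third arguments have nonzero imaginary part. For real `z > 1` they are positive because
`(z - a) (z - b) = z (z - 1) + c²/4 > (c/2)²`. -/
lemma log_args_mem {a b c : ℝ} (hc : 0 < c) (ha : a < 1) (hb : b < 1) (hab : a + b = 1)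
    (hab' : a * b = c ^ 2 / 4) {z : ℂ} (hz : z ∈ cutPlane) :
    (z - (a:ℂ)) ^ ((1:ℂ)/2) + (z - (b:ℂ)) ^ ((1:ℂ)/2) ∈ slitPlane ∧
    z + (z - (a:ℂ)) ^ ((1:ℂ)/2) * (z - (b:ℂ)) ^ ((1:ℂ)/2) + (c:ℂ)/2 ∈ slitPlane ∧
    z - 1 + (z - (a:ℂ)) ^ ((1:ℂ)/2) * (z - (b:ℂ)) ^ ((1:ℂ)/2) - (c:ℂ)/2 ∈ slitPlane := by
  have hp := sqrt_re_pos (sub_mem_slitPlane hz ha.le)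
  have hq := sqrt_re_pos (sub_mem_slitPlane hz hb.le)
  obtain ⟨p1, p2⟩ := sqrt_parts (z - a)
  obtain ⟨q1, q2⟩ := sqrt_parts (z - b)
  have hc2 : (c : ℂ) / 2 = ((c / 2 : ℝ) : ℂ) := by push_cast; rfl
  simp only [cutPlane, Set.mem_ofPred_eq, mem_slitPlane_iff, sub_re, one_re, sub_im, one_im,
    sub_zero] at hz
  rw [hc2]
  set p := (z - (a:ℂ)) ^ ((1:ℂ)/2)
  set q := (z - (b:ℂ)) ^ ((1:ℂ)/2)
  simp only [sub_re, sub_im, ofReal_re, ofReal_im, sub_zero] at p1 p2 q1 q2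
  simp only [mem_slitPlane_iff, add_re, add_im, sub_re, sub_im, mul_re, mul_im, one_re, one_im,
    ofReal_re, ofReal_im, sub_zero, add_zero]
  refine ⟨Or.inl (by positivity), ?_⟩
  rcases lt_trichotomy z.im 0 with h | h | h
  · have hpi : p.im < 0 := by by_contra! h'; nlinarith
    have hqi : q.im < 0 := by by_contra! h'; nlinarith
    have : z.im + (p.re * q.im + p.im * q.re) < 0 := by
      nlinarith [mul_pos hp (neg_pos.2 hqi), mul_pos (neg_pos.2 hpi) hq]
    exact ⟨Or.inr this.ne, Or.inr this.ne⟩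
  · have hz1 : 1 < z.re := by
      rcases hz with h' | h'
      · linarith
      · exact absurd h h'
    have hpi : p.im = 0 := by
      have : p.re * p.im = 0 := by linarith
      exact (mul_eq_zero.1 this).resolve_left hp.ne'
    have hqi : q.im = 0 := by
      have : q.re * q.im = 0 := by linarith
      exact (mul_eq_zero.1 this).resolve_left hq.ne'
    rw [hpi, hqi]
    have hpq : 0 < p.re * q.re := mul_pos hp hq
    have hsq : (p.re * q.re) ^ 2 = z.re ^ 2 - z.re + c ^ 2 / 4 := by
      rw [hpi] at p1
      rw [hqi] at q1
      have e1 : p.re ^ 2 = z.re - a := by linarith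
      have e2 : q.re ^ 2 = z.re - b := by linarith
      rw [mul_pow, e1, e2]
      linear_combination hab' - z.re * hab
    have hgt : c / 2 < p.re * q.re := by
      apply lt_of_pow_lt_pow_left₀ 2 hpq.le
      nlinarith
    exact ⟨Or.inl (by linarith), Or.inl (by linarith)⟩
  · have hpi : 0 < p.im := by by_contra! h'; nlinarith
    have hqi : 0 < q.im := by by_contra! h'; nlinarith
    have : 0 < z.im + (p.re * q.im + p.im * q.re) := by positivity
    exact ⟨Or.inr this.ne', Or.inr this.ne'⟩

/-- The right-hand side of the theorem as a function of `z`, with principal branches. -/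
noncomputable def explicitG (a b c : ℝ) (z : ℂ) : ℂ :=
  -1 - 2 * Complex.log 2
      + (1/(c:ℂ)) * (z - 1) * Complex.log (z - 1)
      - (1/(c:ℂ)) * z * Complex.log z
      + (2 - 2/(c:ℂ)) * Complex.log ((z - (a:ℂ)) ^ ((1:ℂ)/2) + (z - (b:ℂ)) ^ ((1:ℂ)/2))
      + (2/(c:ℂ)) * z *
          Complex.log (z + (z - (a:ℂ)) ^ ((1:ℂ)/2) * (z - (b:ℂ)) ^ ((1:ℂ)/2) + (c:ℂ)/2)
      + (2/(c:ℂ)) * (1 - z) *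
          Complex.log (z - 1 + (z - (a:ℂ)) ^ ((1:ℂ)/2) * (z - (b:ℂ)) ^ ((1:ℂ)/2) - (c:ℂ)/2)

lemma differentiableOn_explicitG {a b c : ℝ} (hc : 0 < c) (ha : a < 1) (hb : b < 1)
    (hab : a + b = 1) (hab' : a * b = c ^ 2 / 4) :
    DifferentiableOn ℂ (explicitG a b c) cutPlane := by
  intro z hz
  apply DifferentiableAt.differentiableWithinAt
  obtain ⟨hA, hB, hC⟩ := log_args_mem hc ha hb hab hab' hz
  have h0 : z ∈ slitPlane := by simpa using sub_mem_slitPlane hz (s := 0) zero_le_one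
  have h1 : z - 1 ∈ slitPlane := hz
  have hp : DifferentiableAt ℂ (fun z : ℂ => (z - (a:ℂ)) ^ ((1:ℂ)/2)) z :=
    DifferentiableAt.cpow (by fun_prop) (by fun_prop) (sub_mem_slitPlane hz ha.le)
  have hq : DifferentiableAt ℂ (fun z : ℂ => (z - (b:ℂ)) ^ ((1:ℂ)/2)) z :=
    DifferentiableAt.cpow (by fun_prop) (by fun_prop) (sub_mem_slitPlane hz hb.le)
  have d0 : DifferentiableAt ℂ (fun z : ℂ => Complex.log z) z := differentiableAt_id.clog h0
  have d1 : DifferentiableAt ℂ (fun z : ℂ => Complex.log (z - 1)) z :=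
    DifferentiableAt.clog (by fun_prop) h1
  have dA := (hp.add hq).clog hA
  have dB := ((differentiableAt_id.add (hp.mul hq)).add_const ((c:ℂ)/2)).clog hB
  have dC := (((differentiableAt_id.sub_const 1).add (hp.mul hq)).sub_const ((c:ℂ)/2)).clog hC
  unfold explicitG
  exact ((((((differentiableAt_const _).add ((by fun_prop : DifferentiableAt ℂ
    (fun z : ℂ => (1/(c:ℂ)) * (z - 1)) z).mul d1)).sub ((by fun_prop : DifferentiableAt ℂ
    (fun z : ℂ => (1/(c:ℂ)) * z) z).mul d0)).add (dA.const_mul _)).add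
    ((by fun_prop : DifferentiableAt ℂ (fun z : ℂ => (2/(c:ℂ)) * z) z).mul dB)).add
    ((by fun_prop : DifferentiableAt ℂ (fun z : ℂ => (2/(c:ℂ)) * (1 - z)) z).mul dC))

/-- On `(1, ∞)` every branch is real, and `(√(x - a) + √(x - b))² = 2 x - 1 + 2 R` with
`R = √(x² - x + c²/4)`. -/
lemma explicitG_ofReal {a b c x : ℝ} (hc : 0 < c) (ha : a < 1) (hb : b < 1)
    (hab : a + b = 1) (hab' : a * b = c ^ 2 / 4) (hx : 1 < x) :
    explicitG a b c x = ((antider x c / c : ℝ) : ℂ) := by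
  have hsq : ∀ y : ℝ, y < 1 → ((x : ℂ) - (y : ℂ)) ^ ((1:ℂ)/2) = ((√(x - y) : ℝ) : ℂ) := by
    intro y hy
    rw [Real.sqrt_eq_rpow, Complex.ofReal_cpow (by linarith)]
    push_cast; rfl
  have hR : √(x - a) * √(x - b) = √(x ^ 2 - x + c ^ 2 / 4) := by
    rw [← Real.sqrt_mul (by linarith)]
    congr 1
    linear_combination hab' - x * hab
  have ha0 : 0 < √(x - a) := Real.sqrt_pos.2 (by linarith)
  have hb0 : 0 < √(x - b) := Real.sqrt_pos.2 (by linarith)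
  have hA : Real.log (√(x - a) + √(x - b))
      = Real.log (2 * x - 1 + 2 * √(x ^ 2 - x + c ^ 2 / 4)) / 2 := by
    rw [← hR, show 2 * x - 1 + 2 * (√(x - a) * √(x - b)) = (√(x - a) + √(x - b)) ^ 2 by
      linear_combination -(Real.sq_sqrt (by linarith : 0 ≤ x - a))
        - (Real.sq_sqrt (by linarith : 0 ≤ x - b)) + hab, Real.log_pow]
    push_cast; ring
  have hq : 0 < x ^ 2 - x + c ^ 2 / 4 := by nlinarith
  have hR2 := Real.sq_sqrt hq.le
  have hR0 := Real.sqrt_pos.2 hq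
  have hRt : c / 2 < √(x ^ 2 - x + c ^ 2 / 4) := by
    apply lt_of_pow_lt_pow_left₀ 2 hR0.le
    nlinarith
  have cl : ∀ y : ℝ, 0 < y → Complex.log y = ((Real.log y : ℝ) : ℂ) := fun y hy =>
    (Complex.ofReal_log hy.le).symm
  have l2 := cl 2 two_pos
  have l0 := cl x (by linarith)
  have l1 := cl (x - 1) (by linarith)
  have lA := cl (√(x - a) + √(x - b)) (by positivity)
  have lB := cl (x + √(x ^ 2 - x + c ^ 2 / 4) + c / 2) (by positivity)
  have lC := cl (x - 1 + √(x ^ 2 - x + c ^ 2 / 4) - c / 2) (by linarith)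
  rw [hA] at lA
  push_cast at l2 l1 lA lB lC
  rw [explicitG, hsq a ha, hsq b hb, ← ofReal_mul, hR, l2, l1, l0, lA, lB, lC, antider]
  have : (c : ℂ) ≠ 0 := ofReal_ne_zero.2 hc.ne'
  push_cast
  field_simp

/-! ### Identification of the density and conclusion -/

/-- A single formula for the density on `(0, 1)`: outside the band one has `√(s - s²) ≤ c / 2`,
where the clamped `arcsin` equals `π / 2` and the formula gives `1 / c`. -/
lemma density_eq {a b c : ℝ} (hc0 : 0 < c) (hab : a + b = 1) (hab' : a * b = c ^ 2 / 4) (μ : ℝ → ℝ)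
    (hμab : ∀ x, a < x → x < b →
      μ x = (2 / (π * c)) * Real.arcsin (c / (2 * Real.sqrt (x - x ^ 2))))
    (hμout : ∀ x, (0 ≤ x ∧ x ≤ a) ∨ (b ≤ x ∧ x ≤ 1) → μ x = 1 / c)
    {s : ℝ} (hs : s ∈ Set.Ioo (0:ℝ) 1) (hle : a ≤ b) :
    μ s = (2 / (π * c)) * Real.arcsin (c / (2 * √(s - s ^ 2))) := by
  have out : 0 ≤ (s - a) * (s - b) →
      1 / c = (2 / (π * c)) * Real.arcsin (c / (2 * √(s - s ^ 2))) := by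
    intro h
    have h0 : 0 < s - s ^ 2 := by nlinarith [hs.1, hs.2]
    have h1 : √(s - s ^ 2) ≤ c / 2 := by
      apply Real.sqrt_le_iff.2 ⟨by positivity, by nlinarith⟩
    have h2 : 0 < √(s - s ^ 2) := Real.sqrt_pos.2 h0
    rw [Real.arcsin_of_one_le ((one_le_div (by positivity)).2 (by linarith))]
    have := Real.pi_pos
    field_simp
  rcases le_or_gt s a with h | h
  · rw [hμout s (Or.inl ⟨hs.1.le, h⟩)]
    exact out (mul_nonneg_of_nonpos_of_nonpos (by linarith) (by linarith))
  · rcases le_or_gt b s with h' | h'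
    · rw [hμout s (Or.inr ⟨h', hs.2.le⟩)]
      exact out (mul_nonneg (by linarith) (by linarith))
    · exact hμab s h h'

/-- explicit evaluation of the logarithmic potential
`g(z) = ∫_0^1 log(z−s) μ(s) ds` for `z ∈ ℂ∖(−∞,1]`, all branches principal. -/
theorem hahn_g_function_explicit
    (c : ℝ) (hc0 : 0 < c) (hc1 : c < 1)
    (a b : ℝ)
    (ha : a = (1 - Real.sqrt (1 - c ^ 2)) / 2)
    (hb : b = (1 + Real.sqrt (1 - c ^ 2)) / 2)
    (μ : ℝ → ℝ)
    (hμab : ∀ x, a < x → x < b →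
      μ x = (2 / (π * c)) * Real.arcsin (c / (2 * Real.sqrt (x - x ^ 2))))
    (hμout : ∀ x, (0 ≤ x ∧ x ≤ a) ∨ (b ≤ x ∧ x ≤ 1) → μ x = 1 / c)
    (g : ℂ → ℂ)
    (hg : ∀ z, g z = ∫ s in (0:ℝ)..1, (μ s : ℂ) * Complex.log (z - s))
    (z : ℂ) (hz : ¬ (z.im = 0 ∧ z.re ≤ 1)) :
    g z = -1 - 2 * Complex.log 2
      + (1/(c:ℂ)) * (z - 1) * Complex.log (z - 1)
      - (1/(c:ℂ)) * z * Complex.log z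
      + (2 - 2/(c:ℂ)) * Complex.log ((z - (a:ℂ)) ^ ((1:ℂ)/2) + (z - (b:ℂ)) ^ ((1:ℂ)/2))
      + (2/(c:ℂ)) * z *
          Complex.log (z + (z - (a:ℂ)) ^ ((1:ℂ)/2) * (z - (b:ℂ)) ^ ((1:ℂ)/2) + (c:ℂ)/2)
      + (2/(c:ℂ)) * (1 - z) *
          Complex.log (z - 1 + (z - (a:ℂ)) ^ ((1:ℂ)/2) * (z - (b:ℂ)) ^ ((1:ℂ)/2) - (c:ℂ)/2) := by
  have hr2 : √(1 - c ^ 2) ^ 2 = 1 - c ^ 2 := Real.sq_sqrt (by nlinarith)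
  have hr0 : 0 ≤ √(1 - c ^ 2) := Real.sqrt_nonneg _
  have hr1 : √(1 - c ^ 2) < 1 := by nlinarith
  have hab : a + b = 1 := by rw [ha, hb]; ring
  have hab' : a * b = c ^ 2 / 4 := by rw [ha, hb]; linear_combination (-1 / 4) * hr2
  have ha1 : a < 1 := by rw [ha]; linarith
  have hb1 : b < 1 := by rw [hb]; linarith
  have hle : a ≤ b := by rw [ha, hb]; linarith
  change g z = explicitG a b c z
  let m : ℝ → ℝ := fun s => (2 / (π * c)) * Real.arcsin (c / (2 * √(s - s ^ 2)))
  have hm : Measurable m := (Real.measurable_arcsin.comp (by fun_prop)).const_mul _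
  have hmK : ∀ s, |m s| ≤ |2 / (π * c)| * (π / 2) := fun s => by
    rw [abs_mul]
    exact mul_le_mul_of_nonneg_left
      (abs_le.2 ⟨Real.neg_pi_div_two_le_arcsin _, Real.arcsin_le_pi_div_two _⟩) (abs_nonneg _)
  have hgm : ∀ w, g w = ∫ s in (0:ℝ)..1, (m s : ℂ) * Complex.log (w - s) := fun w => by
    rw [hg, intervalIntegral.integral_of_le zero_le_one, intervalIntegral.integral_of_le zero_le_one,
      ← restrict_Ioo_eq_restrict_Ioc]
    refine setIntegral_congr_fun measurableSet_Ioo fun s hs => ?_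
    simp only [m, density_eq hc0 hab hab' μ hμab hμout hs hle]
  have hreal : ∀ x : ℝ, 1 < x → g x = explicitG a b c x := fun x hx => by
    rw [explicitG_ofReal hc0 ha1 hb1 hab hab' hx, ← real_potential x c hx hc0 hc1, hgm,
      ← intervalIntegral.integral_ofReal]
    refine intervalIntegral.integral_congr fun s hs => ?_
    rw [Set.uIcc_of_le zero_le_one] at hs
    simp only [m]
    rw [← ofReal_sub, ← Complex.ofReal_log (by linarith [hs.2]), ← ofReal_mul]
  have hgd : DifferentiableOn ℂ g cutPlane := by
    rw [funext hgm]
    exact differentiableOn_potential m hm _ hmK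
  -- The identity theorem is applied at `2`, an accumulation point of the real points `x > 1`.
  have h2 : ((2 : ℝ) : ℂ) ∈ cutPlane := by
    apply mem_cutPlane
    rintro ⟨-, h⟩
    rw [ofReal_re] at h
    linarith
  have htend : Filter.Tendsto (fun x : ℝ => (x : ℂ)) (nhdsWithin 2 {2}ᶜ)
      (nhdsWithin ((2 : ℝ) : ℂ) {((2 : ℝ) : ℂ)}ᶜ) := by
    refine tendsto_nhdsWithin_of_tendsto_nhds_of_eventually_within _
      ((Complex.continuous_ofReal.tendsto 2).mono_left nhdsWithin_le_nhds) ?_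
    filter_upwards [self_mem_nhdsWithin] with x hx h
    exact hx (ofReal_injective h)
  have hfreq : ∃ᶠ w in nhdsWithin ((2 : ℝ) : ℂ) {((2 : ℝ) : ℂ)}ᶜ, g w = explicitG a b c w := by
    refine htend.frequently (Filter.Eventually.frequently ?_)
    filter_upwards [nhdsWithin_le_nhds (Ioi_mem_nhds (one_lt_two : (1:ℝ) < 2))] with x hx
    exact hreal x hx
  exact (hgd.analyticOnNhd isOpen_cutPlane).eqOn_of_preconnected_of_frequently_eq
    ((differentiableOn_explicitG hc0 ha1 hb1 hab hab').analyticOnNhd isOpen_cutPlane)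
    isPreconnected_cutPlane h2 hfreq (mem_cutPlane hz)
end
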